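/- arXiv:1812.11313 — 2 statements merged into one kernel-verified Lean document; each statement's English description precedes it below -/
import Mathlib

section
/- For p ∈ {2,3}, the elementary abelian group C_p × C_p × C_p is separable with respect to the class 𝒦_A of finite abelian groups; that is, every S-ring over C_p × C_p × C_p is separable with respect to 𝒦_A. -/
/-!
Let `V = C_p × C_p × C_p`. An algebraic isomorphism from an S-ring over `V` to an S-ring over an
abelian group `W` amounts to colourings `a` of `V` and `b` of `W` by a common set of colours (the
basic sets) with equal structure constants, and `f : V → W` induces it if and only if `f` is bijective
and `b (f y - f x) = a (y - x)` for all `x`, `y`.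

*Reduction to `W = V`.* Counting shows `|W| = p ^ 3`. Schur's theorem on multipliers applied to both
sides (the `m`-th power of a class sum modulo a prime `m` is the sum of the `m`-th multiples, and these
powers have coefficients determined by the structure constants) shows that `b (m • y) = b y` for every
prime `m` congruent to `1` modulo `p` (`MatchedTo.mul_prime`), because multiplication by `m` is the
identity of `V`. Writing the elements of `W`, one of `C_{p³}`, `C_{p²} × C_p` and `V`, by their base-`p`
digits gives a bijection `W → V` that preserves differences up to such multipliers (`digital_of_card`),
hence transports `b` to a colouring of `V` with the same structure constants.

*The case `W = V`.* The colourings then even differ by an automorphism of `V` (`matched_solve`). This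
is a finite search over partitions of `V` known to be coarser than both colourings in the same way.
Such a partition is refined by structure constants, which are the same for `a` and `b`. When this is
exhausted, a smallest piece `X ∪ X⁻¹` of some cell, or the piece `X` of a cell `X ∪ X⁻¹`, is considered:
every candidate that passes necessary conditions on structure constants is moved by automorphisms
preserving the partition to one of a few representatives, and these are distinguished from one another
by structure constants, so that `a` and `b` lead to the same representative. The search trees `cert2`
and `cert3` record the choices, the function `chk` verifies a tree, `chk_sound` proves that this
verification is sufficient, and `run2`, `run3` evaluate it in the kernel. Subsets of `V` are coded by
natural numbers in such a way that one integer multiplication computes all structure constants of two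
sets.
-/

open scoped Pointwise

namespace SRingPaper

/-- The number of representations of `z` as `x * y` with `x ∈ X`, `y ∈ Y`
(the structure constant `c^Z_{X,Y}` evaluated at `z ∈ Z`). -/
noncomputable def structConst {G : Type*} [Group G] (X Y : Set G) (z : G) : ℕ :=
  Nat.card {p : G × G // p.1 ∈ X ∧ p.2 ∈ Y ∧ p.1 * p.2 = z}

/-- An S-ring (Schur ring) over a finite group `G`, given by its partition of `G`
into basic sets: the partition contains `{1}`, is closed under taking inverses,
and the structure constants are constant on each class (equivalently, the
ℤ-span of the indicator elements of the classes is a subring of ℤG). -/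
structure SRing (G : Type*) [Group G] [Finite G] where
  parts : Set (Set G)
  nonempty_mem : ∀ X ∈ parts, X.Nonempty
  exists_mem : ∀ g : G, ∃ X ∈ parts, g ∈ X
  eq_of_mem : ∀ X ∈ parts, ∀ Y ∈ parts, ∀ g : G, g ∈ X → g ∈ Y → X = Y
  one_mem : ({1} : Set G) ∈ parts
  inv_mem : ∀ X ∈ parts, X⁻¹ ∈ parts
  structConst_const : ∀ X ∈ parts, ∀ Y ∈ parts, ∀ Z ∈ parts, ∀ z ∈ Z, ∀ z' ∈ Z,
    structConst X Y z = structConst X Y z'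

/-- `R(X) = {(g, x*g) : x ∈ X, g ∈ G}`, the edge set of the Cayley graph `Cay(G,X)`. -/
def RSet {G : Type*} [Group G] (X : Set G) : Set (G × G) :=
  {p | ∃ x ∈ X, p.2 = x * p.1}

/-- The image of a binary relation under a map applied to both coordinates. -/
def mapRel {G G' : Type*} (f : G → G') (R : Set (G × G)) : Set (G' × G') :=
  (fun p : G × G => (f p.1, f p.2)) '' R

section Defs

variable {G G' : Type*} [Group G] [Finite G] [Group G'] [Finite G']

/-- A combinatorial isomorphism from the S-ring `A` to the S-ring `B`. -/
structure IsIso (A : SRing G) (B : SRing G') (f : G → G') : Prop where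
  bijective : Function.Bijective f
  image_eq : (fun X : Set G => mapRel f (RSet X)) '' A.parts = RSet '' B.parts

/-- An algebraic isomorphism from the S-ring `A` to the S-ring `B`:
a bijection between the basic sets preserving all structure constants. -/
structure IsAlgIso (A : SRing G) (B : SRing G') (φ : Set G → Set G') : Prop where
  bijOn : Set.BijOn φ A.parts B.parts
  structConst_eq : ∀ X ∈ A.parts, ∀ Y ∈ A.parts, ∀ Z ∈ A.parts,
    ∀ z ∈ Z, ∀ z' ∈ φ Z, structConst X Y z = structConst (φ X) (φ Y) z'

/-- The algebraic isomorphism `φ` is induced by the combinatorial isomorphism `f`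
(i.e. `φ = φ_f`). -/
def InducedBy (A : SRing G) (φ : Set G → Set G') (f : G → G') : Prop :=
  Function.Bijective f ∧ ∀ X ∈ A.parts, mapRel f (RSet X) = RSet (φ X)

/-- `A` is separable with respect to the class `𝒦_A` of finite abelian groups. -/
def SepAbelian (A : SRing G) : Prop :=
  ∀ (H : Type*) [CommGroup H] [Finite H] (B : SRing H) (φ : Set G → Set H),
    IsAlgIso A B φ → ∃ f : G → H, InducedBy A φ f

/-- `A` is separable with respect to the class `𝒦_C` of finite cyclic groups. -/
def SepCyclic (A : SRing G) : Prop :=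
  ∀ (H : Type*) [Group H] [Finite H], IsCyclic H → ∀ (B : SRing H) (φ : Set G → Set H),
    IsAlgIso A B φ → ∃ f : G → H, InducedBy A φ f

/-- `A` is schurian: `A = V(K, G)` for some group `K` with `G_right ≤ K ≤ Sym(G)`,
i.e. the basic sets of `A` are the orbits on `G` of the stabilizer of `1` in `K`. -/
def IsSchurian (A : SRing G) : Prop :=
  ∃ K : Subgroup (Equiv.Perm G),
    (∀ g : G, Equiv.mulRight g ∈ K) ∧
    A.parts = {X : Set G | ∃ g : G, X = {h : G | ∃ f ∈ K, f 1 = 1 ∧ f g = h}}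

lemma mapRel_comp {A B C : Type*} (f : B → C) (g : A → B) (R : Set (A × A)) :
    mapRel (f ∘ g) R = mapRel f (mapRel g R) := by
  simp only [mapRel, Set.image_image]
  rfl

lemma mapRel_id {A : Type*} (R : Set (A × A)) : mapRel (fun x => x) R = R := by
  simp [mapRel]

/-- The automorphism group `Aut(A)` of an S-ring, as a subgroup of `Sym(G)`. -/
def autSubgroup (A : SRing G) : Subgroup (Equiv.Perm G) where
  carrier := {f : Equiv.Perm G | ∀ X ∈ A.parts, mapRel f (RSet X) = RSet X}
  one_mem' := by
    intro X hX
    have h : ⇑(1 : Equiv.Perm G) = fun x => x := rfl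
    rw [h, mapRel_id]
  mul_mem' := by
    intro f g hf hg X hX
    have h : ⇑(f * g) = ⇑f ∘ ⇑g := rfl
    rw [h, mapRel_comp, hg X hX, hf X hX]
  inv_mem' := by
    intro f hf X hX
    conv_lhs => rw [← hf X hX]
    rw [← mapRel_comp]
    have h : ⇑f⁻¹ ∘ ⇑f = fun x => x := by
      funext x
      simp
    rw [h, mapRel_id]

/-- `A` is a normal S-ring: `G_right` is normal in `Aut(A)`. -/
def IsNormalSRing (A : SRing G) : Prop :=
  ∀ f ∈ autSubgroup A, ∀ g : G,
    ∃ g' : G, f * (Equiv.mulRight g : Equiv.Perm G) * f⁻¹ = Equiv.mulRight g'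

/-- The partition of `G` into the orbits of `K ≤ Aut(G)`: the basic sets of the
cyclotomic S-ring `cyc(K, G)`. -/
def cycParts (K : Subgroup (MulAut G)) : Set (Set G) :=
  {X : Set G | ∃ g : G, X = {h : G | ∃ f ∈ K, f g = h}}

/-- `H` is an `A`-subgroup: `H` is a union of basic sets of `A`. -/
def IsASubgroup (A : SRing G) (H : Subgroup G) : Prop :=
  ∀ X ∈ A.parts, X ⊆ (H : Set G) ∨ Disjoint X (H : Set G)

/-- `rad(X) = {g ∈ G : gX = Xg = X}`. -/
def radSet (X : Set G) : Set G :=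
  {g : G | (fun x => g * x) '' X = X ∧ (fun x => x * g) '' X = X}

/-- A subset of a cyclic group is highest if it contains a generator. -/
def IsHighest (X : Set G) : Prop :=
  ∃ x ∈ X, ∀ g : G, g ∈ Subgroup.zpowers x

/-- `A` is the `S`-wreath product with respect to the section `S = U/L`:
`U` and `L` are `A`-subgroups, `L ≤ U`, `L` is normal in `G`, and every basic
set outside `U` has `L` in its radical. -/
def IsSWreath (A : SRing G) (U L : Subgroup G) : Prop :=
  IsASubgroup A U ∧ IsASubgroup A L ∧ L ≤ U ∧ L.Normal ∧
    ∀ X ∈ A.parts, ¬ X ⊆ (U : Set G) → (L : Set G) ⊆ radSet X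

/-- `AU` is the restriction `A_U` of `A` to the `A`-subgroup `U`. -/
def IsRestriction (A : SRing G) (U : Subgroup G) (AU : SRing ↥U) : Prop :=
  AU.parts = {Y : Set ↥U | ∃ X ∈ A.parts, X ⊆ (U : Set G) ∧ Y = (Subtype.val ⁻¹' X : Set ↥U)}

/-- `AQ` is the quotient S-ring `A_{G/L}`. -/
def IsQuotientSRing (A : SRing G) (L : Subgroup G) [L.Normal] (AQ : SRing (G ⧸ L)) : Prop :=
  AQ.parts = {Y : Set (G ⧸ L) | ∃ X ∈ A.parts, Y = ((QuotientGroup.mk : G → G ⧸ L) '' X)}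

/-- The orbit of a pair under a permutation group, for the definition of 2-equivalence. -/
def orb2 {Ω : Type*} (K : Subgroup (Equiv.Perm Ω)) (p : Ω × Ω) : Set (Ω × Ω) :=
  {q : Ω × Ω | ∃ f ∈ K, (f p.1, f p.2) = q}

/-- Two permutation groups are 2-equivalent if they have the same orbits on `Ω × Ω`. -/
def TwoEquiv {Ω : Type*} (K K' : Subgroup (Equiv.Perm Ω)) : Prop :=
  {S : Set (Ω × Ω) | ∃ p, S = orb2 K p} = {S : Set (Ω × Ω) | ∃ p, S = orb2 K' p}

/-- A permutation group is 2-isolated if it is the only group 2-equivalent to it. -/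
def TwoIsolated {Ω : Type*} (K : Subgroup (Equiv.Perm Ω)) : Prop :=
  ∀ K' : Subgroup (Equiv.Perm Ω), TwoEquiv K K' → K' = K

end Defs

/-- `Aut(A)^S` for the section `S = G/N`: the permutations of `G/N` induced by
automorphisms of `A` permuting the `N`-cosets. -/
def inducedOnQuotient {G : Type*} [Group G] [Finite G] (A : SRing G) (N : Subgroup G)
    [N.Normal] : Set ((G ⧸ N) → (G ⧸ N)) :=
  {q : (G ⧸ N) → (G ⧸ N) | ∃ f : Equiv.Perm G, f ∈ autSubgroup A ∧
    (∀ u v : G, (u : G ⧸ N) = (v : G ⧸ N) → ((f u : G) : G ⧸ N) = ((f v : G) : G ⧸ N)) ∧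
    ∀ u : G, q (u : G ⧸ N) = ((f u : G) : G ⧸ N)}

end SRingPaper

namespace ESep

set_option linter.unusedSectionVars false

/-! ### A verifier for search trees -/

section

/-- `k n`. In kernel reduction the recursor evaluates `n` to a literal before it is passed to `k`,
so that it is not recomputed. -/
def force {α : Type} (n : ℕ) (k : ℕ → α) : α := Nat.rec (k 0) (fun m _ => k (Nat.succ m)) n

/-- The prime `p` and the masks selecting the base-1024 digits whose position `x + 5 y + 25 z` has
`x < p` (`m0`), `y < p` (`m1`), `z < p` (`m2`). -/
structure Ctx where
  p : ℕ
  m0 : ℕ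
  m1 : ℕ
  m2 : ℕ

/-- What is known about a cell, that is, a union of basic sets: it is one basic set (`basic`); it is
`X ∪ X⁻¹` for one basic set `X` (`sym`); it is closed under inversion and `X ∪ X⁻¹` has at least `m`
elements for each basic set `X` in it (`bound m`). -/
inductive Flag where
  | basic
  | sym
  | bound (m : ℕ)

/-- Search trees. At a `leaf` the basic sets are determined. `ref i j d k` splits the cell number `d`
according to whether an element has exactly `k` representations as a sum from the cells `i` and `j`.
`br d gens reps c` branches on the cell `d`: either the cell is indecomposable (continue with `c`), or
a smaller piece is split off, which up to the symmetries `gens` is one of the sets listed in `reps`.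
Such a list of sets, each with the tree handling it, is built from `rep` and `done`. -/
inductive Cert where
  | leaf
  | done
  | ref (i j d k : ℕ) (c : Cert)
  | br (d : ℕ) (gens : List ℕ) (reps : Cert) (c : Cert)
  | rep (r : ℕ) (c : Cert) (next : Cert)

/-- Keep the digits selected by `m`, and add to them the other digits moved down by `k` bits. -/
def foldStep (m k N : ℕ) : ℕ :=
  Nat.add (Nat.land N m) (Nat.shiftRight (Nat.sub N (Nat.land N m)) k)

/-- Reduce modulo `p` in each of the three coordinates of the digit positions. -/
def fold (c : Ctx) (N : ℕ) : ℕ :=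
  foldStep c.m2 (Nat.mul 250 c.p) (foldStep c.m1 (Nat.mul 50 c.p) (foldStep c.m0 (Nat.mul 10 c.p) N))

/-- A subset `S` of `C_p × C_p × C_p` is coded by one number: the low 64 bits hold the characteristic
bitmask (bit `x + 3 y + 9 z` for the vector `(x, y, z)`), and above them stands the number with
base-1024 digit `1` at the positions `x + 5 y + 25 z` and `0` elsewhere. This is the latter part. -/
def wide (S : ℕ) : ℕ := Nat.shiftRight S 64

/-- Conjunction by a recursor, so that the second argument is not evaluated if the first is `false`. -/
def andB (a b : Bool) : Bool := Bool.rec false b a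

/-- The number whose digit at the position of `z` is the number of representations of `z` as a sum of
an element of `X` and an element of `Y`. It is computed by one integer multiplication. -/
def conv (c : Ctx) (X Y : ℕ) : ℕ := fold c (Nat.mul (wide X) (wide Y))

/-- A query `(N, Z)` asks for the common value of the digits of `N` at the elements of the set `Z`.
This is `N` with all other digits cleared. -/
def restr (q : ℕ × ℕ) : ℕ := Nat.land q.1 (Nat.mul 1023 (wide q.2))

/-- The digits of the query are constant on its set. -/
def okQ (q : ℕ × ℕ) : Bool :=
  Nat.beq (Nat.mul (Nat.div (restr q) (wide q.2)) (wide q.2)) (restr q)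

/-- All queries have constant digits. -/
def allOk (l : List (ℕ × ℕ)) : Bool :=
  List.rec (motive := fun _ => Bool) true (fun q _ ih => andB (okQ q) ih) l

/-- The value of a query with constant digits. -/
def valQ (q : ℕ × ℕ) : ℕ := Nat.div (restr q) (wide q.2)

/-- The number of elements of a coded set: the sum of the base-1024 digits is the residue modulo 1023. -/
def card (S : ℕ) : ℕ := Nat.mod (wide S) 1023

/-- The coordinate vectors of `C_p × C_p × C_p`. -/
def vecs (p : ℕ) : List (ℕ × ℕ × ℕ) :=
  (List.range p).flatMap fun z => (List.range p).flatMap fun y => (List.range p).map fun x => (x, y, z)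

/-- The bitmask part of the code of a vector. -/
def tagN (v : ℕ × ℕ × ℕ) : ℕ := Nat.pow 2 (v.1 + 3 * v.2.1 + 9 * v.2.2)

/-- The base-1024 part of the code of a vector. -/
def wideN (v : ℕ × ℕ × ℕ) : ℕ := Nat.pow 1024 (v.1 + 5 * v.2.1 + 25 * v.2.2)

/-- The code of a one-element set. -/
def bitN (v : ℕ × ℕ × ℕ) : ℕ := tagN v + 2 ^ 64 * wideN v

/-- The linear map whose 3 × 3 matrix is given, column by column, by the base-`p` digits of `m`. -/
def linN (p m : ℕ) (v : ℕ × ℕ × ℕ) : ℕ × ℕ × ℕ :=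
  ((v.1 * m + v.2.1 * (m / p ^ 3) + v.2.2 * (m / p ^ 6)) % p,
   (v.1 * (m / p) + v.2.1 * (m / p ^ 4) + v.2.2 * (m / p ^ 7)) % p,
   (v.1 * (m / p ^ 2) + v.2.1 * (m / p ^ 5) + v.2.2 * (m / p ^ 8)) % p)

/-- `k l`, with all numbers in `l` evaluated first. -/
def forceTab {α : Type} (l : List (ℕ × ℕ)) (k : List (ℕ × ℕ) → α) : α :=
  List.rec (motive := fun _ => (List (ℕ × ℕ) → α) → α) (fun k => k [])
    (fun e _ ih k => force e.1 fun x => force e.2 fun y => ih fun t => k ((x, y) :: t)) l k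

/-- The value table of the linear map `m`: bitmasks of vectors with the codes of their images. -/
def tab (p m : ℕ) : List (ℕ × ℕ) := (vecs p).map fun v => (tagN v, bitN (linN p m v))

/-- Membership of a vector with bitmask `x` in the coded set `S`. -/
def hasBit (S x : ℕ) : Bool := Nat.beq (Nat.land S x) x

/-- The image of a coded set under a map given by its value table. -/
def imgN (t : List (ℕ × ℕ)) (S : ℕ) : ℕ :=
  List.rec (motive := fun _ => ℕ) 0 (fun e _ ih => cond (hasBit S e.1) (Nat.add e.2 ih) ih) t

/-- The value table of negation. -/
def negTab (p : ℕ) : List (ℕ × ℕ) :=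
  (vecs p).map fun v => (tagN v, bitN ((p - v.1) % p, (p - v.2.1) % p, (p - v.2.2) % p))

/-- The function `test` holds for all sums that arise from `acc` by adding one of the two components
of each entry of `l`. -/
def enum (test : ℕ → Bool) (l : List (ℕ × ℕ)) (acc : ℕ) : Bool :=
  List.rec (motive := fun _ => ℕ → Bool) test
    (fun e _ ih acc => andB (force (Nat.add acc e.1) ih) (force (Nat.add acc e.2) ih)) l acc

/-- A partition of the nonzero vectors into cells, with what is known about each of them. -/
abbrev State := List (ℕ × Flag)

/-- The cell is known to be a basic set. -/
def isB : Flag → Bool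
  | .basic => true
  | _ => false

/-- The cell is known to be `X ∪ X⁻¹` for a basic set `X`. -/
def isBS : Flag → Bool
  | .bound _ => false
  | _ => true

/-- Queries on a candidate `S` for a set `X ∪ X⁻¹`, `X` a basic set inside the cell `D`, where `R` is
the list of the other cells. -/
def qsSym (c : Ctx) (D : ℕ) (R : State) (S : ℕ) : List (ℕ × ℕ) :=
  (conv c S S, S) :: (conv c S D, S) ::
    (((R.filter fun e => !isB e.2).map fun e => (conv c S e.1, S)) ++
    (R.filter fun e => isBS e.2).flatMap fun e => (conv c S S, e.1) ::
      (R.filter fun e => !isB e.2).map fun e' => (conv c S e'.1, e.1))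

/-- Queries on a candidate basic set `X` with inverse `N` at the elements of another cell `C`. -/
def qsSplF (c : Ctx) (R : State) (X N C : ℕ) : Flag → List (ℕ × ℕ)
  | .basic => (conv c X N, C) :: (conv c X X, C) :: R.map fun e' => (conv c X e'.1, C)
  | .sym => [(conv c X N, C)]
  | .bound _ => []

/-- Queries on a candidate basic set `X` for which `D` is the disjoint union of `X` and `X⁻¹`, where
`R` is the list of the other cells. -/
def qsSpl (c : Ctx) (D : ℕ) (R : State) (X : ℕ) : List (ℕ × ℕ) :=
  force (Nat.sub D X) fun N =>
  (conv c X X, X) :: (conv c X N, X) :: (conv c X X, N) :: (conv c X D, X) ::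
    ((R.map fun e => (conv c X e.1, X)) ++
    R.flatMap fun e => qsSplF c R X N e.1 e.2)

/-- The coded set whose members are the entries of `vecs p` selected by the binary digits of `r`. -/
def expand (p r : ℕ) : ℕ :=
  ((vecs p).foldr (fun v a => fun r => Nat.add (Nat.mul (Nat.mod r 2) (bitN v)) (a (Nat.div r 2))) (fun _ => 0)) r

/-- The coded sets in a list of representatives. -/
def repsOf (p : ℕ) : Cert → List ℕ
  | .rep r _ nx => force (expand p r) fun r => r :: repsOf p nx
  | _ => []

/-- Membership in a list of numbers. -/
def memN (x : ℕ) (l : List ℕ) : Bool := l.any (Nat.beq x)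

/-- `k` applied to the evaluated value tables of the linear maps `gens`. -/
def withTabs {α : Type} (p : ℕ) (gens : List ℕ) (k : List (List (ℕ × ℕ)) → α) : α :=
  List.rec (motive := fun _ => (List (List (ℕ × ℕ)) → α) → α) (fun k => k [])
    (fun g _ ih k => forceTab (tab p g) fun t => ih fun ts => k (t :: ts)) gens k

/-- The table maps every cell of `P` to itself and no nonzero vector to zero. -/
def goodTab (P : State) (t : List (ℕ × ℕ)) : Bool :=
  P.all (fun e => Nat.beq (imgN t e.1) e.1) &&
  t.all fun e => or (Nat.beq e.1 1) (!Nat.beq (wide e.2) 1)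

/-- The set `S` is a representative, or one of the maps `ts` takes it to a set with a smaller code. -/
def survOk (ts : List (List (ℕ × ℕ))) (reps : List ℕ) (S : ℕ) : Bool :=
  memN S reps || ts.any fun t => Nat.blt (imgN t S) S

/-- The cardinality of `S` and the values of the queries on it. -/
def sigs (qs : ℕ → List (ℕ × ℕ)) (S : ℕ) : List ℕ := card S :: (qs S).map valQ

/-- The representatives are pairwise distinguished by their cardinality and query values. -/
def distinctSigs (qs : ℕ → List (ℕ × ℕ)) (reps : List ℕ) : Bool :=
  match reps with
  | [] => true
  | r :: t => t.all (fun r' => !(List.beq (sigs qs r) (sigs qs r'))) && distinctSigs qs t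

/-- Every candidate generated by `ch` that satisfies `pre` and passes the queries `qs` is a
representative or is taken to a set of smaller code by a symmetry of `P`, and the representatives are
pairwise distinguished by the queries. -/
def brOk (P : State) (qs : ℕ → List (ℕ × ℕ)) (pre : ℕ → Bool) (p : ℕ) (gens : List ℕ)
    (reps : List ℕ) (ch : List (ℕ × ℕ)) : Bool :=
  distinctSigs qs reps &&
  withTabs p gens fun ts => ts.all (goodTab P) &&
    forceTab ch fun ch => enum (fun S => Bool.rec true
      (Bool.rec true (survOk ts reps S) (allOk (qs S))) (pre S)) ch 0

/-- Bitmask and code of each vector, and the code of its negative. -/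
def pairs (p : ℕ) : List (ℕ × ℕ × ℕ) :=
  ((vecs p).map fun v => (tagN v, bitN v, bitN ((p - v.1) % p, (p - v.2.1) % p, (p - v.2.2) % p)))

/-- Choices generating the inverse-closed subsets of `D`: each pair `{v, -v}` is taken or left out. -/
def symCh (p D : ℕ) : List (ℕ × ℕ) :=
  ((pairs p).filter fun e => hasBit D e.1 && Nat.ble e.2.1 e.2.2).map fun e =>
    (cond (Nat.beq e.2.1 e.2.2) e.2.1 (e.2.1 + e.2.2), 0)

/-- Choices generating the subsets of `D` that contain exactly one element of each pair `{v, -v}`. -/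
def splCh (p D : ℕ) : List (ℕ × ℕ) :=
  ((pairs p).filter fun e => hasBit D e.1 && Nat.ble e.2.1 e.2.2).map fun e => e.2

/-- The set of elements of `D` at which the digit of `N` equals `k`. -/
def cut (p N k D : ℕ) : ℕ :=
  imgN (((vecs p).filter fun v =>
    Nat.beq (Nat.land N (Nat.mul 1023 (wideN v))) (Nat.mul k (wideN v))).map fun v => (tagN v, bitN v)) D

/-- The set of negatives of the elements of a coded set. -/
def negN (p S : ℕ) : ℕ := imgN (negTab p) S

/-- Verification of a search tree for the partition `P`. In the `bound` case of a branching, the piece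
split off is a smallest set of the form `X ∪ X⁻¹`, so it has between `m` and `card D / 2` elements,
and its cardinality is a new lower bound for the other pieces. A splitting that contradicts what is
known about the cell closes the branch. -/
def chk (c : Ctx) : Cert → State → Bool
  | .leaf, P => P.all fun e => isB e.2 || (isBS e.2 && Nat.beq c.p 2)
  | .done, _ => false
  | .rep .., _ => false
  | .ref i j d k ct, P =>
    match P[i]?, P[j]?, P[d]? with
    | some (X, _), some (Y, _), some (D, f) =>
      force (conv c X Y) fun N => force (cut c.p N k D) fun U => force (Nat.sub D U) fun W =>
        match f with
        | .basic => !Nat.beq U 0 && !Nat.beq W 0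
        | .sym => !Nat.beq U 0 && !Nat.beq W 0 && (!Nat.beq (negN c.p U) W ||
            chk c ct ((U, .basic) :: (W, .basic) :: P.eraseIdx d))
        | .bound m => Nat.beq (negN c.p U) U &&
            chk c ct ((U, .bound m) :: (W, .bound m) :: P.eraseIdx d)
    | _, _, _ => false
  | .br d gens reps ct, P =>
    match P[d]? with
    | some (D, f) =>
      let R := P.eraseIdx d
      match f with
      | .basic => false
      | .sym =>
        !Nat.beq c.p 2 && chk c ct ((D, .basic) :: R) &&
        brOk P (qsSpl c D R) (fun _ => true) c.p gens (repsOf c.p reps) (splCh c.p D) &&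
        chkReps c reps (fun r => (r, .basic) :: (Nat.sub D r, .basic) :: R)
      | .bound m =>
        !Nat.beq D 0 && (Nat.blt (card D) m || (chk c ct ((D, .sym) :: R) &&
        (Nat.blt (card D) (2 * m) ||
        (brOk P (qsSym c D R) (fun S => andB (Nat.ble m (card S)) (Nat.ble (Nat.mul 2 (card S)) (card D)))
          c.p gens (repsOf c.p reps) (symCh c.p D) &&
        chkReps c reps (fun r => (r, .sym) :: (Nat.sub D r, .bound (card r)) :: R)))))
    | _ => false
where
  chkReps (c : Ctx) : Cert → (ℕ → State) → Bool
  | .done, _ => true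
  | .rep r ct nx, st => force (expand c.p r) (fun r => chk c ct (st r)) && chkReps c nx st
  | _, _ => false

end

/-! ### Digits of natural numbers -/

section

theorem force_eq {α : Type} (n : ℕ) (k : ℕ → α) : force n k = k n := by
  cases n <;> rfl

theorem andB_eq (a b : Bool) : andB a b = (a && b) := by
  cases a <;> rfl

theorem add_land (r d e x y : ℕ) (hd : d < 2 ^ r) (he : e < 2 ^ r) :
    (2 ^ r * x + d) &&& (2 ^ r * y + e) = 2 ^ r * (x &&& y) + (d &&& e) := by
  apply Nat.eq_of_testBit_eq
  intro i
  have hde : d &&& e < 2 ^ r := lt_of_le_of_lt Nat.and_le_left hd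
  rw [Nat.testBit_and, Nat.testBit_two_pow_mul_add _ hd, Nat.testBit_two_pow_mul_add _ he,
    Nat.testBit_two_pow_mul_add _ hde]
  split <;> simp

/-- The number whose `i`-th digit in base `2 ^ r` is `h i`, for `i < n`. -/
def digits (r n : ℕ) (h : ℕ → ℕ) : ℕ := ∑ i ∈ Finset.range n, h i * (2 ^ r) ^ i

theorem digits_succ (r n : ℕ) (h : ℕ → ℕ) :
    digits r (n + 1) h = 2 ^ r * digits r n (fun i => h (i + 1)) + h 0 := by
  simp only [digits, Finset.sum_range_succ', Finset.mul_sum, pow_zero, mul_one]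
  congr 1
  apply Finset.sum_congr rfl
  intro i _
  ring

theorem digits_land (r n : ℕ) (h g : ℕ → ℕ) (hh : ∀ i, h i < 2 ^ r) (hg : ∀ i, g i < 2 ^ r) :
    digits r n h &&& digits r n g = digits r n (fun i => h i &&& g i) := by
  induction n generalizing h g with
  | zero => simp [digits]
  | succ n ih =>
    rw [digits_succ, digits_succ, digits_succ, add_land _ _ _ _ _ (hh 0) (hg 0),
      ih _ _ (fun i => hh _) (fun i => hg _)]

theorem sum_pow_eq_digits {ι : Type*} (r n : ℕ) (s : Finset ι) (pos : ι → ℕ)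
    (hpos : ∀ x ∈ s, pos x < n) :
    ∑ x ∈ s, (2 ^ r) ^ pos x = digits r n (fun i => (s.filter fun x => pos x = i).card) := by
  rw [digits, ← Finset.sum_fiberwise_of_maps_to (t := Finset.range n) (g := pos)
    (fun x hx => Finset.mem_range.2 (hpos x hx))]
  apply Finset.sum_congr rfl
  intro i _
  rw [Finset.sum_congr rfl (g := fun _ => (2 ^ r) ^ i), Finset.sum_const, smul_eq_mul]
  intro x hx
  rw [(Finset.mem_filter.1 hx).2]

/-- Masking a sum of fewer than `2 ^ r` powers of `2 ^ r` selects the exponents satisfying `q`. -/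
theorem mask_sum {ι : Type*} (r n : ℕ) (s : Finset ι) (pos : ι → ℕ) (q : ℕ → Prop)
    [DecidablePred q] (hpos : ∀ x ∈ s, pos x < n)
    (hc : ∀ i, (s.filter fun x => pos x = i).card < 2 ^ r) :
    (∑ x ∈ s, (2 ^ r) ^ pos x) &&& digits r n (fun i => if q i then 2 ^ r - 1 else 0) =
      ∑ x ∈ s.filter (fun x => q (pos x)), (2 ^ r) ^ pos x := by
  have h2 : 0 < 2 ^ r := by positivity
  rw [sum_pow_eq_digits r n s pos hpos, sum_pow_eq_digits r n _ pos
    (fun x hx => hpos x (Finset.mem_filter.1 hx).1), digits_land _ _ _ _ hc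
    (fun i => by split <;> omega)]
  congr 1
  funext i
  split
  · rename_i hq
    rw [Nat.and_two_pow_sub_one_eq_mod, Nat.mod_eq_of_lt (hc i), Finset.filter_filter]
    congr 1
    apply Finset.filter_congr
    intro x _
    constructor
    · rintro rfl; exact ⟨hq, rfl⟩
    · exact fun h => h.2
  · rename_i hq
    rw [Nat.and_zero, Finset.filter_filter, eq_comm, Finset.card_eq_zero,
      Finset.filter_eq_empty_iff]
    rintro x _ ⟨h1, rfl⟩
    exact hq h1

theorem foldStep_sum {ι : Type*} (n k : ℕ) (s : Finset ι) (pos : ι → ℕ) (q : ℕ → Prop)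
    [DecidablePred q] (m : ℕ) (hm : m = digits 10 n (fun i => if q i then 2 ^ 10 - 1 else 0))
    (hpos : ∀ x ∈ s, pos x < n) (hc : s.card < 1024) (hk : ∀ x ∈ s, ¬ q (pos x) → k ≤ pos x) :
    foldStep m (10 * k) (∑ x ∈ s, 1024 ^ pos x) =
      ∑ x ∈ s, 1024 ^ (if q (pos x) then pos x else pos x - k) := by
  have e : (1024 : ℕ) = 2 ^ 10 := by norm_num
  have hland : Nat.land (∑ x ∈ s, 1024 ^ pos x) m =
      ∑ x ∈ s.filter (fun x => q (pos x)), 1024 ^ pos x := by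
    rw [e, hm]
    refine mask_sum 10 n s pos q hpos fun i => lt_of_le_of_lt (Finset.card_filter_le _ _) ?_
    rwa [← e]
  have hsplit := Finset.sum_filter_add_sum_filter_not s (fun x => q (pos x))
    (fun x => 1024 ^ pos x)
  have hsub : Nat.sub (∑ x ∈ s, 1024 ^ pos x) (∑ x ∈ s.filter (fun x => q (pos x)), 1024 ^ pos x)
      = (∑ x ∈ s.filter (fun x => ¬ q (pos x)), 1024 ^ (pos x - k)) * 2 ^ (10 * k) := by
    rw [← hsplit, Nat.sub_eq, Nat.add_sub_cancel_left, Finset.sum_mul]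
    apply Finset.sum_congr rfl
    intro x hx
    obtain ⟨hx, hq⟩ := Finset.mem_filter.1 hx
    rw [pow_mul, ← e, ← pow_add, Nat.sub_add_cancel (hk x hx hq)]
  have hsh : ∀ a, Nat.shiftRight (a * 2 ^ (10 * k)) (10 * k) = a := by
    intro a
    change (a * 2 ^ (10 * k)) >>> (10 * k) = a
    rw [Nat.shiftRight_eq_div_pow, Nat.mul_div_cancel _ (by positivity)]
  rw [foldStep, hland, hsub, hsh, Nat.add_eq]
  rw [← Finset.sum_filter_add_sum_filter_not s (fun x => q (pos x))
    (fun x => 1024 ^ (if q (pos x) then pos x else pos x - k))]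
  congr 1
  · apply Finset.sum_congr rfl
    intro x hx
    rw [if_pos (Finset.mem_filter.1 hx).2]
  · apply Finset.sum_congr rfl
    intro x hx
    rw [if_neg (Finset.mem_filter.1 hx).2]

end

/-! ### Coding of subsets by natural numbers -/

section

open Finset

/-- The group `C_p × C_p × C_p`, written additively. -/
abbrev V (p : ℕ) := ZMod p × ZMod p × ZMod p

/-- The coordinates of a vector as natural numbers. -/
def coords {p : ℕ} (v : V p) : ℕ × ℕ × ℕ := (v.1.val, v.2.1.val, v.2.2.val)

/-- The code of the set `{v}`. -/
def bit {p : ℕ} (v : V p) : ℕ := bitN (coords v)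

/-- The base-1024 part of the code of `{v}`. -/
def wbit {p : ℕ} (v : V p) : ℕ := wideN (coords v)

/-- The bitmask part of the code of `{v}`. -/
def tag {p : ℕ} (v : V p) : ℕ := tagN (coords v)

/-- The code of the set `s`. -/
def ind {p : ℕ} (s : Finset (V p)) : ℕ := ∑ v ∈ s, bit v

/-- The base-1024 part of the code of `s`. -/
def wind {p : ℕ} (s : Finset (V p)) : ℕ := ∑ v ∈ s, wbit v

/-- The primes under consideration. -/
class Small (p : ℕ) : Prop where
  out : p = 2 ∨ p = 3

instance : Small 2 := ⟨Or.inl rfl⟩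
instance : Small 3 := ⟨Or.inr rfl⟩
instance {p : ℕ} [h : Small p] : NeZero p := ⟨by rcases h.out with h | h <;> omega⟩
instance {p : ℕ} [h : Small p] : Fact p.Prime :=
  ⟨by rcases h.out with rfl | rfl <;> norm_num⟩

variable {p : ℕ} [hp : Small p]

theorem le_three : p ≤ 3 := by rcases hp.out with h | h <;> omega

theorem val_lt3 (x : ZMod p) : x.val < 3 := lt_of_lt_of_le (ZMod.val_lt x) le_three

/-- The position of the base-1024 digit that belongs to `v`. As the coordinates of a sum of two vectors
are at most `4`, base-5 positions leave room for a product without carries between coordinates. -/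
def pos (v : V p) : ℕ := v.1.val + 5 * v.2.1.val + 25 * v.2.2.val

theorem wbit_eq (v : V p) : wbit v = 1024 ^ pos v := rfl

theorem bit_eq (v : V p) : bit v = tag v + 2 ^ 64 * wbit v := rfl

theorem pos_lt (v : V p) : pos v < 63 := by
  have h1 := val_lt3 v.1
  have h2 := val_lt3 v.2.1
  have h3 := val_lt3 v.2.2
  simp only [pos]; omega

theorem coords_injective : Function.Injective (coords (p := p)) := by
  rintro ⟨x, y, z⟩ ⟨x', y', z'⟩ h
  simp only [coords, Prod.mk.injEq] at h
  obtain ⟨h1, h2, h3⟩ := h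
  rw [ZMod.val_injective p h1, ZMod.val_injective p h2, ZMod.val_injective p h3]

theorem pos_injective : Function.Injective (pos (p := p)) := by
  intro u v h
  apply coords_injective
  have h1 := val_lt3 u.1
  have h2 := val_lt3 u.2.1
  have h3 := val_lt3 u.2.2
  have h1' := val_lt3 v.1
  have h2' := val_lt3 v.2.1
  have h3' := val_lt3 v.2.2
  simp only [pos] at h
  simp only [coords, Prod.mk.injEq]
  omega

/-- The position of the bit that belongs to `v` in bitmasks. -/
def idx (v : V p) : ℕ := v.1.val + 3 * v.2.1.val + 9 * v.2.2.val

theorem tag_eq (v : V p) : tag v = 2 ^ idx v := rfl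

theorem idx_lt (v : V p) : idx v < 27 := by
  have h1 := val_lt3 v.1
  have h2 := val_lt3 v.2.1
  have h3 := val_lt3 v.2.2
  simp only [idx]; omega

theorem idx_injective : Function.Injective (idx (p := p)) := by
  intro u v h
  apply coords_injective
  have h1 := val_lt3 u.1
  have h2 := val_lt3 u.2.1
  have h3 := val_lt3 u.2.2
  have h1' := val_lt3 v.1
  have h2' := val_lt3 v.2.1
  have h3' := val_lt3 v.2.2
  simp only [idx] at h
  simp only [coords, Prod.mk.injEq]
  omega

theorem card_le (s : Finset (V p)) : s.card ≤ 27 := by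
  refine (card_le_univ s).trans ?_
  rw [Fintype.card_prod, Fintype.card_prod, ZMod.card]
  have := le_three (p := p)
  calc p * (p * p) ≤ 3 * (3 * 3) := by gcongr
    _ = 27 := rfl

theorem sum_tag_lt (s : Finset (V p)) : ∑ v ∈ s, tag v < 2 ^ 64 := by
  calc ∑ v ∈ s, tag v ≤ ∑ v ∈ s, 2 ^ 27 := by
        apply sum_le_sum
        intro v _
        rw [tag_eq]
        exact Nat.pow_le_pow_right (by norm_num) (idx_lt v).le
    _ = s.card * 2 ^ 27 := by rw [sum_const, smul_eq_mul]
    _ ≤ 27 * 2 ^ 27 := by gcongr; exact card_le s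
    _ < 2 ^ 64 := by norm_num

theorem ind_eq (s : Finset (V p)) : ind s = 2 ^ 64 * wind s + ∑ v ∈ s, tag v := by
  simp only [ind, wind, bit_eq, sum_add_distrib, mul_sum]
  rw [add_comm]

theorem wide_ind (s : Finset (V p)) : wide (ind s) = wind s := by
  change ind s >>> 64 = _
  rw [ind_eq, Nat.shiftRight_eq_div_pow, Nat.mul_add_div (by norm_num),
    Nat.div_eq_of_lt (sum_tag_lt s), add_zero]

theorem mask_ind (s : Finset (V p)) (q : ℕ → Prop) [DecidablePred q] :
    (∑ v ∈ s, tag v) &&& digits 1 27 (fun i => if q i then 2 ^ 1 - 1 else 0) =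
      ∑ v ∈ s.filter (fun v => q (idx v)), tag v := by
  have := mask_sum 1 27 s idx q (fun v _ => idx_lt v) (fun i => by
    have : (s.filter fun x => idx x = i).card ≤ 1 := by
      rw [card_le_one]
      intro a ha b hb
      exact idx_injective ((mem_filter.1 ha).2.trans (mem_filter.1 hb).2.symm)
    omega)
  simpa [tag_eq] using this

theorem digits_single (r n i : ℕ) (hi : i < n) (m : ℕ) :
    digits r n (fun j => if j = i then m else 0) = m * (2 ^ r) ^ i := by
  rw [digits, sum_eq_single i]
  · simp
  · intro b _ hb; simp [hb]
  · intro h; exact absurd (mem_range.2 hi) h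

theorem hasBit_ind (s : Finset (V p)) (v : V p) : hasBit (ind s) (tag v) = decide (v ∈ s) := by
  have h1 : Nat.land (ind s) (tag v) = ∑ u ∈ s.filter (fun u => idx u = idx v), tag u := by
    rw [← mask_ind s (fun i => i = idx v), digits_single 1 27 _ (idx_lt v), ind_eq]
    change (2 ^ 64 * wind s + ∑ v ∈ s, tag v) &&& tag v = _
    have h2 := add_land 64 (∑ v ∈ s, tag v) (tag v) (wind s) 0 (sum_tag_lt s) (by
      rw [tag_eq]; exact Nat.pow_lt_pow_right (by norm_num) ((idx_lt v).trans (by norm_num)))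
    simp only [mul_zero, zero_add, Nat.and_zero] at h2
    rw [h2, tag_eq]
    norm_num
  have h3 : s.filter (fun u => idx u = idx v) = if v ∈ s then {v} else ∅ := by
    ext u
    split
    · rw [mem_filter, mem_singleton]
      exact ⟨fun h => idx_injective h.2, by rintro rfl; exact ⟨by assumption, rfl⟩⟩
    · rw [mem_filter]
      constructor
      · rintro ⟨h, h'⟩; rw [idx_injective h'] at h; contradiction
      · intro h; simp at h
  rw [hasBit, h1, h3]
  have ht : tag v ≠ 0 := by rw [tag_eq]; positivity
  by_cases hv : v ∈ s
  · rw [if_pos hv, sum_singleton, decide_eq_true hv, Nat.beq_refl]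
  · rw [if_neg hv, sum_empty, decide_eq_false hv]
    rw [Bool.eq_false_iff, Ne, Nat.beq_eq]
    exact ht.symm

theorem ind_injective : Function.Injective (ind (p := p)) := by
  intro s t h
  ext v
  have := hasBit_ind s v
  rw [h, hasBit_ind] at this
  simpa using (decide_eq_decide.1 this).symm

@[simp] theorem ind_empty : ind (∅ : Finset (V p)) = 0 := rfl

theorem ind_eq_zero {s : Finset (V p)} : ind s = 0 ↔ s = ∅ :=
  ⟨fun h => ind_injective (h.trans ind_empty.symm), fun h => by rw [h]; rfl⟩

theorem bit_injective : Function.Injective (bit (p := p)) := by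
  intro u v h
  have : ind ({u} : Finset (V p)) = ind {v} := by simpa [ind] using h
  simpa using ind_injective this

theorem ind_sdiff {s t : Finset (V p)} (h : t ⊆ s) : Nat.sub (ind s) (ind t) = ind (s \ t) := by
  rw [Nat.sub_eq]
  have := sum_sdiff h (f := bit (p := p))
  simp only [ind]; omega

theorem wind_pos {s : Finset (V p)} (h : s.Nonempty) : 0 < wind s := by
  apply sum_pos _ h
  intro v _
  rw [wbit_eq]; positivity

theorem wind_mod (s : Finset (V p)) : wind s % 1023 = s.card := by
  have : wind s ≡ s.card [MOD 1023] := by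
    rw [card_eq_sum_ones]
    simp only [wind]
    apply Nat.ModEq.sum
    intro v _
    rw [wbit_eq]
    exact (Nat.ModEq.pow (pos v) (show 1024 ≡ 1 [MOD 1023] from rfl)).trans (by rw [one_pow])
  rw [this, Nat.mod_eq_of_lt]
  have := card_le s
  omega

theorem card_ind (s : Finset (V p)) : card (ind s) = s.card := by
  rw [card, wide_ind]
  exact wind_mod s

/-- The number of ways to write `z` as a sum of an element of `s` and an element of `t`. -/
def convN (s t : Finset (V p)) (z : V p) : ℕ := ((s ×ˢ t).filter fun x => x.1 + x.2 = z).card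

/-- The folding masks of `c` are the right ones for `p`. -/
structure CtxOk (p : ℕ) (c : Ctx) : Prop where
  p_eq : c.p = p
  m0_eq : c.m0 = digits 10 125 (fun i => if i % 5 < p then 2 ^ 10 - 1 else 0)
  m1_eq : c.m1 = digits 10 125 (fun i => if i / 5 % 5 < p then 2 ^ 10 - 1 else 0)
  m2_eq : c.m2 = digits 10 125 (fun i => if i / 25 < p then 2 ^ 10 - 1 else 0)

theorem fold_aux0 (a b d : ℕ) (ha : a ≤ 2 * p - 2) :
    (if (a + 5 * b + 25 * d) % 5 < p then a + 5 * b + 25 * d else a + 5 * b + 25 * d - p) =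
      a % p + 5 * b + 25 * d := by
  rcases hp.out with rfl | rfl <;> split_ifs <;> omega

theorem fold_aux1 (a b d : ℕ) (ha : a < p) (hb : b ≤ 2 * p - 2) :
    (if (a + 5 * b + 25 * d) / 5 % 5 < p then a + 5 * b + 25 * d
      else a + 5 * b + 25 * d - 5 * p) = a + 5 * (b % p) + 25 * d := by
  rcases hp.out with rfl | rfl <;> split_ifs <;> omega

theorem fold_aux2 (a b d : ℕ) (ha : a < p) (hb : b < p) (hd : d ≤ 2 * p - 2) :
    (if (a + 5 * b + 25 * d) / 25 < p then a + 5 * b + 25 * d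
      else a + 5 * b + 25 * d - 25 * p) = a + 5 * b + 25 * (d % p) := by
  rcases hp.out with rfl | rfl <;> split_ifs <;> omega

/-- Multiplying and folding encodings computes the convolution of the encoded sets. -/
theorem fold_mul {c : Ctx} (hc : CtxOk p c) (s t : Finset (V p)) :
    fold c (wind s * wind t) = ∑ x ∈ s ×ˢ t, wbit (x.1 + x.2) := by
  have hcard : (s ×ˢ t).card < 1024 := by
    rw [card_product]
    calc s.card * t.card ≤ 27 * 27 := Nat.mul_le_mul (card_le s) (card_le t)
      _ < 1024 := by norm_num
  have h3 := le_three (p := p)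
  have hp0 : 0 < p := Nat.pos_of_neZero p
  let A : V p × V p → ℕ := fun x => x.1.1.val + x.2.1.val
  let B : V p × V p → ℕ := fun x => x.1.2.1.val + x.2.2.1.val
  let D : V p × V p → ℕ := fun x => x.1.2.2.val + x.2.2.2.val
  have hA : ∀ x, A x ≤ 2 * p - 2 := fun x => by
    have h1 := ZMod.val_lt x.1.1
    have h2 := ZMod.val_lt x.2.1
    simp only [A]; omega
  have hB : ∀ x, B x ≤ 2 * p - 2 := fun x => by
    have h1 := ZMod.val_lt x.1.2.1
    have h2 := ZMod.val_lt x.2.2.1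
    simp only [B]; omega
  have hD : ∀ x, D x ≤ 2 * p - 2 := fun x => by
    have h1 := ZMod.val_lt x.1.2.2
    have h2 := ZMod.val_lt x.2.2.2
    simp only [D]; omega
  have hA' : ∀ x, A x % p < p := fun x => Nat.mod_lt _ hp0
  have hB' : ∀ x, B x % p < p := fun x => Nat.mod_lt _ hp0
  have h0 : wind s * wind t = ∑ x ∈ s ×ˢ t, 1024 ^ (A x + 5 * B x + 25 * D x) := by
    rw [wind, wind, sum_mul_sum, sum_product]
    simp only [wbit_eq, ← pow_add]
    refine sum_congr rfl fun u _ => sum_congr rfl fun v _ => ?_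
    congr 1
    simp only [pos, A, B, D]
    ring
  have e0 : Nat.mul 10 c.p = 10 * p := by rw [hc.p_eq]; rfl
  have e1 : Nat.mul 50 c.p = 10 * (5 * p) := by rw [hc.p_eq, ← mul_assoc]; rfl
  have e2 : Nat.mul 250 c.p = 10 * (25 * p) := by rw [hc.p_eq, ← mul_assoc]; rfl
  have s0 : foldStep c.m0 (10 * p) (∑ x ∈ s ×ˢ t, 1024 ^ (A x + 5 * B x + 25 * D x)) =
      ∑ x ∈ s ×ˢ t, 1024 ^ (A x % p + 5 * B x + 25 * D x) := by
    rw [foldStep_sum 125 p _ _ _ _ hc.m0_eq _ hcard]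
    · exact sum_congr rfl fun x _ => by rw [fold_aux0 _ _ _ (hA x)]
    · intro x _ hx; have := hA x; omega
    · intro x _; have := hA x; have := hB x; have := hD x; omega
  have s1 : foldStep c.m1 (10 * (5 * p)) (∑ x ∈ s ×ˢ t, 1024 ^ (A x % p + 5 * B x + 25 * D x)) =
      ∑ x ∈ s ×ˢ t, 1024 ^ (A x % p + 5 * (B x % p) + 25 * D x) := by
    rw [foldStep_sum 125 (5 * p) _ _ _ _ hc.m1_eq _ hcard]
    · exact sum_congr rfl fun x _ => by rw [fold_aux1 _ _ _ (hA' x) (hB x)]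
    · intro x _ hx; have := hA' x; have := hB x; omega
    · intro x _; have := hA' x; have := hB x; have := hD x; omega
  have s2 : foldStep c.m2 (10 * (25 * p))
      (∑ x ∈ s ×ˢ t, 1024 ^ (A x % p + 5 * (B x % p) + 25 * D x)) =
      ∑ x ∈ s ×ˢ t, 1024 ^ (A x % p + 5 * (B x % p) + 25 * (D x % p)) := by
    rw [foldStep_sum 125 (25 * p) _ _ _ _ hc.m2_eq _ hcard]
    · exact sum_congr rfl fun x _ => by rw [fold_aux2 _ _ _ (hA' x) (hB' x) (hD x)]
    · intro x _ hx; have := hA' x; have := hB' x; omega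
    · intro x _; have := hA' x; have := hB' x; have := hD x; omega
  rw [h0, fold, e0, e1, e2, s0, s1, s2]
  refine sum_congr rfl fun x _ => ?_
  simp only [wbit_eq, pos, Prod.fst_add, Prod.snd_add, ZMod.val_add, A, B, D]

theorem conv_ind {c : Ctx} (hc : CtxOk p c) (s t : Finset (V p)) :
    conv c (ind s) (ind t) = ∑ x ∈ s ×ˢ t, wbit (x.1 + x.2) := by
  rw [conv, wide_ind, wide_ind]
  exact fold_mul hc s t

theorem digits_wind (Z : Finset (V p)) :
    1023 * wind Z = digits 10 125 (fun i => if i ∈ Z.image pos then 2 ^ 10 - 1 else 0) := by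
  have : wind Z = ∑ i ∈ Z.image pos, 1024 ^ i := by
    rw [sum_image (fun a _ b _ h => pos_injective h)]; rfl
  rw [this, digits, mul_sum]
  have hsub : Z.image pos ⊆ range 125 := by
    intro i hi
    obtain ⟨v, _, rfl⟩ := mem_image.1 hi
    have := pos_lt v
    exact mem_range.2 (by omega)
  rw [← sum_subset hsub]
  · apply sum_congr rfl
    intro i hi
    rw [if_pos hi]
    norm_num
  · intro i _ hi
    rw [if_neg hi, zero_mul]

theorem land_conv {c : Ctx} (hc : CtxOk p c) (s t Z : Finset (V p)) :
    Nat.land (conv c (ind s) (ind t)) (Nat.mul 1023 (wind Z)) =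
      ∑ z ∈ Z, convN s t z * wbit z := by
  have hcard : (s ×ˢ t).card < 2 ^ 10 := by
    rw [card_product]
    calc s.card * t.card ≤ 27 * 27 := Nat.mul_le_mul (card_le s) (card_le t)
      _ < 2 ^ 10 := by norm_num
  rw [conv_ind hc, Nat.mul_eq, digits_wind]
  have h := mask_sum 10 125 (s ×ˢ t) (fun x => pos (x.1 + x.2)) (fun i => i ∈ Z.image pos)
    (fun x _ => (pos_lt _).trans (by norm_num))
    (fun i => lt_of_le_of_lt (card_filter_le _ _) hcard)
  refine Eq.trans h ?_
  have hf : ∀ x : V p × V p, pos (x.1 + x.2) ∈ Z.image pos ↔ x.1 + x.2 ∈ Z := fun x => by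
    rw [mem_image]
    exact ⟨fun ⟨v, hv, h⟩ => pos_injective h ▸ hv, fun h => ⟨_, h, rfl⟩⟩
  simp only [hf]
  rw [← sum_fiberwise_of_maps_to (t := Z) (g := fun x : V p × V p => x.1 + x.2)
    (fun x hx => (mem_filter.1 hx).2)]
  refine sum_congr rfl fun z hz => ?_
  rw [filter_filter, sum_congr rfl (g := fun _ => wbit z), sum_const, smul_eq_mul, convN]
  · congr 2
    ext x
    simp only [mem_filter]
    constructor
    · rintro ⟨h1, _, h2⟩; exact ⟨h1, h2⟩
    · rintro ⟨h1, rfl⟩; exact ⟨h1, hz, rfl⟩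
  · intro x hx
    rw [wbit_eq, ← (mem_filter.1 hx).2.2]
    norm_num

theorem restr_const {c : Ctx} (hc : CtxOk p c) (s t Z : Finset (V p)) (k : ℕ)
    (h : ∀ z ∈ Z, convN s t z = k) :
    restr (conv c (ind s) (ind t), ind Z) = k * wind Z := by
  rw [restr, wide_ind, land_conv hc, wind, mul_sum]
  exact sum_congr rfl fun z hz => by rw [h z hz]

theorem okQ_const {c : Ctx} (hc : CtxOk p c) (s t Z : Finset (V p)) (k : ℕ)
    (h : ∀ z ∈ Z, convN s t z = k) : okQ (conv c (ind s) (ind t), ind Z) = true := by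
  rw [okQ, restr_const hc s t Z k h, wide_ind]
  rw [Nat.beq_eq]
  change k * wind Z / wind Z * wind Z = k * wind Z
  rcases Nat.eq_zero_or_pos (wind Z) with h | h
  · rw [h]; rfl
  · rw [Nat.mul_div_cancel _ h]

theorem valQ_const {c : Ctx} (hc : CtxOk p c) (s t Z : Finset (V p)) (k : ℕ)
    (h : ∀ z ∈ Z, convN s t z = k) (hZ : Z.Nonempty) :
    valQ (conv c (ind s) (ind t), ind Z) = k := by
  rw [valQ, restr_const hc s t Z k h, wide_ind]
  change k * wind Z / wind Z = k
  rw [Nat.mul_div_cancel _ (wind_pos hZ)]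

end

/-! ### Tables and enumeration of candidates -/

section

open Finset

theorem vecs_eq2 : (univ : Finset (V 2)).val.map coords = ((vecs 2 : List _) : Multiset _) := by
  decide +kernel

theorem vecs_eq3 : (univ : Finset (V 3)).val.map coords = ((vecs 3 : List _) : Multiset _) := by
  decide +kernel

variable {p : ℕ} [hp : Small p]

theorem vecs_eq : (univ : Finset (V p)).val.map coords = ((vecs p : List _) : Multiset _) := by
  rcases hp.out with rfl | rfl
  · convert vecs_eq2
  · convert vecs_eq3

theorem sum_vecs (g : ℕ × ℕ × ℕ → ℕ) : ((vecs p).map g).sum = ∑ v : V p, g (coords v) := by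
  have h := congrArg (fun m => (m.map g).sum) (vecs_eq (p := p))
  simp only [Multiset.map_map, Multiset.map_coe, Multiset.sum_coe] at h
  rw [← h]
  rfl

theorem mem_vecs (v : V p) : coords v ∈ vecs p := by
  have h : coords v ∈ (univ : Finset (V p)).val.map coords :=
    Multiset.mem_map_of_mem _ (mem_univ v)
  rw [vecs_eq] at h
  exact h

theorem sum_filter_vecs (q : ℕ × ℕ × ℕ → Bool) (g : ℕ × ℕ × ℕ → ℕ) :
    (((vecs p).filter q).map g).sum = ∑ v : V p with q (coords v) = true, g (coords v) := by
  rw [sum_filter, ← sum_vecs (fun v => if q v = true then g v else 0)]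
  induction vecs p with
  | nil => rfl
  | cons v l ih =>
    by_cases h : q v = true
    · rw [List.filter_cons_of_pos h, List.map_cons, List.map_cons, List.sum_cons, List.sum_cons,
        ih, if_pos h]
    · rw [List.filter_cons_of_neg h, List.map_cons, List.sum_cons, ih, if_neg h, zero_add]

theorem imgN_eq (t : List (ℕ × ℕ)) (S : ℕ) :
    imgN t S = (t.map fun e => if hasBit S e.1 = true then e.2 else 0).sum := by
  induction t with
  | nil => rfl
  | cons e t ih =>
    have : imgN (e :: t) S = cond (hasBit S e.1) (Nat.add e.2 (imgN t S)) (imgN t S) := rfl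
    rw [this, ih, List.map_cons, List.sum_cons]
    cases hasBit S e.1
    · simp
    · rfl

theorem imgN_filter (q : ℕ × ℕ × ℕ → Bool) (h : ℕ × ℕ × ℕ → ℕ) (s : Finset (V p)) :
    imgN (((vecs p).filter q).map fun v => (tagN v, h v)) (ind s) =
      ∑ v ∈ s with q (coords v) = true, h (coords v) := by
  rw [imgN_eq, List.map_map, sum_filter_vecs, sum_filter, sum_filter,
    ← sum_subset (subset_univ s)]
  · refine sum_congr rfl fun v hv => ?_
    have : hasBit (ind s) (tagN (coords v)) = true := by
      rw [← tag, hasBit_ind, decide_eq_true hv]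
    simp [this]
  · intro v _ hv
    have : hasBit (ind s) (tagN (coords v)) = false := by
      rw [← tag, hasBit_ind, decide_eq_false hv]
    simp [this]

theorem imgN_vecs (h : ℕ × ℕ × ℕ → ℕ) (s : Finset (V p)) :
    imgN ((vecs p).map fun v => (tagN v, h v)) (ind s) = ∑ v ∈ s, h (coords v) := by
  have := imgN_filter (fun _ => true) h s
  simpa using this

theorem coords_neg (v : V p) :
    coords (-v) = ((p - (coords v).1) % p, (p - (coords v).2.1) % p, (p - (coords v).2.2) % p) := by
  simp [coords, ZMod.neg_val']

theorem negN_ind (s : Finset (V p)) : negN p (ind s) = ind (s.image Neg.neg) := by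
  rw [negN, negTab, imgN_vecs (fun v => bitN ((p - v.1) % p, (p - v.2.1) % p, (p - v.2.2) % p)),
    ind, sum_image (fun a _ b _ h => neg_injective h)]
  exact sum_congr rfl fun v _ => by rw [bit, coords_neg]

theorem cut_ind {c : Ctx} (hc : CtxOk p c) (s t D : Finset (V p)) (k : ℕ) :
    cut p (conv c (ind s) (ind t)) k (ind D) = ind (D.filter fun z => convN s t z = k) := by
  rw [cut, imgN_filter]
  refine sum_congr (filter_congr fun v _ => ?_) fun v _ => rfl
  have h := land_conv hc s t {v}
  rw [wind, sum_singleton, sum_singleton] at h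
  rw [Nat.beq_eq]
  change Nat.land _ (Nat.mul 1023 (wbit v)) = k * wbit v ↔ _
  rw [h]
  have : 0 < wbit v := by rw [wbit_eq]; positivity
  exact ⟨fun h => Nat.eq_of_mul_eq_mul_right this h, fun h => by rw [h]⟩

/-- The endomorphism of `V p` whose matrix entries are the base `p` digits of `m`. -/
def lin (p m : ℕ) : V p →+ V p where
  toFun v := (v.1 * (m : ℕ) + v.2.1 * (m / p ^ 3 : ℕ) + v.2.2 * (m / p ^ 6 : ℕ),
    v.1 * (m / p : ℕ) + v.2.1 * (m / p ^ 4 : ℕ) + v.2.2 * (m / p ^ 7 : ℕ),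
    v.1 * (m / p ^ 2 : ℕ) + v.2.1 * (m / p ^ 5 : ℕ) + v.2.2 * (m / p ^ 8 : ℕ))
  map_zero' := by simp
  map_add' u v := by
    ext <;> simp only [Prod.fst_add, Prod.snd_add] <;> ring

theorem coords_lin (m : ℕ) (v : V p) : coords (lin p m v) = linN p m (coords v) := by
  have h (x y z a b d : ℕ) : ((x : ZMod p) * (a : ℕ) + (y : ZMod p) * (b : ℕ) +
      (z : ZMod p) * (d : ℕ)).val = (x * a + y * b + z * d) % p := by
    rw [← ZMod.val_natCast]; push_cast; rfl
  have h' (v : V p) : v = (((v.1.val : ℕ) : ZMod p), ((v.2.1.val : ℕ) : ZMod p),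
      ((v.2.2.val : ℕ) : ZMod p)) := by simp
  simp only [coords, linN, ← h]
  simp [lin]

theorem imgN_tab (m : ℕ) (s : Finset (V p)) (hm : Function.Injective (lin p m)) :
    imgN (tab p m) (ind s) = ind (s.image (lin p m)) := by
  rw [tab, imgN_vecs (fun v => bitN (linN p m v)), ind, sum_image (fun a _ b _ h => hm h)]
  exact sum_congr rfl fun v _ => by rw [bit, coords_lin]

theorem wide_bit (v : V p) : wide (bit v) = wbit v := by
  have := wide_ind ({v} : Finset (V p))
  simpa [ind, wind] using this

theorem idx_zero : idx (0 : V p) = 0 := by simp [idx]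

theorem pos_zero : pos (0 : V p) = 0 := by simp [pos]

theorem lin_injective (P : State) (m : ℕ) (h : goodTab P (tab p m) = true) :
    Function.Injective (lin p m) := by
  rw [injective_iff_map_eq_zero]
  intro v hv
  rw [goodTab, Bool.and_eq_true, List.all_eq_true, List.all_eq_true] at h
  have h1 := h.2 (tag v, bitN (linN p m (coords v))) (List.mem_map.2 ⟨_, mem_vecs v, rfl⟩)
  by_contra hne
  rw [← coords_lin, hv, ← bit, wide_bit, wbit_eq, pos_zero, tag_eq] at h1
  simp only [pow_zero, Nat.beq_refl, Bool.not_true, Bool.or_false, Nat.beq_eq] at h1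
  rw [Nat.pow_eq_one] at h1
  rcases h1 with h1 | h1
  · omega
  · exact hne (idx_injective (h1.trans idx_zero.symm))

theorem image_lin (P : State) (m : ℕ) (h : goodTab P (tab p m) = true) (s : Finset (V p)) (f : Flag)
    (hs : (ind s, f) ∈ P) : s.image (lin p m) = s := by
  have hi := lin_injective P m h
  rw [goodTab, Bool.and_eq_true, List.all_eq_true] at h
  have h1 := h.1 _ hs
  rw [Nat.beq_eq, imgN_tab m s hi] at h1
  exact ind_injective h1

theorem forceTab_eq {α : Type} (l : List (ℕ × ℕ)) (k : List (ℕ × ℕ) → α) : forceTab l k = k l := by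
  induction l generalizing k with
  | nil => rfl
  | cons e l ih =>
    have : forceTab (e :: l) k =
      force e.1 fun x => force e.2 fun y => forceTab l fun t => k ((x, y) :: t) := rfl
    rw [this, force_eq, force_eq, ih]

theorem withTabs_eq {α : Type} (p : ℕ) (gens : List ℕ) (k : List (List (ℕ × ℕ)) → α) :
    withTabs p gens k = k (gens.map (tab p)) := by
  induction gens generalizing k with
  | nil => rfl
  | cons g gens ih =>
    have : withTabs p (g :: gens) k =
      forceTab (tab p g) fun t => withTabs p gens fun ts => k (t :: ts) := rfl
    rw [this, forceTab_eq, ih, List.map_cons]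

theorem enum_sound {α : Type} (test : ℕ → Bool) (h : α → ℕ × ℕ) (l : List α) (acc : ℕ)
    (he : enum test (l.map h) acc = true) (g : α → ℕ)
    (hg : ∀ x ∈ l, g x = (h x).1 ∨ g x = (h x).2) : test (acc + (l.map g).sum) = true := by
  induction l generalizing acc with
  | nil => exact he
  | cons x l ih =>
    have e : enum test ((x :: l).map h) acc =
      andB (force (Nat.add acc (h x).1) (enum test (l.map h)))
        (force (Nat.add acc (h x).2) (enum test (l.map h))) := rfl
    rw [e, andB_eq, force_eq, force_eq, Bool.and_eq_true] at he
    rw [List.map_cons, List.sum_cons, ← add_assoc]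
    refine ih _ ?_ fun y hy => hg y (List.mem_cons_of_mem _ hy)
    rcases hg x List.mem_cons_self with hx | hx
    · rw [hx]; exact he.1
    · rw [hx]; exact he.2

theorem pair_sum (F : V p → ℕ) : ∑ v, F v =
    ∑ v : V p with bit v ≤ bit (-v), (F v + if v = -v then 0 else F (-v)) := by
  have h1 : ∑ v : V p with ¬ bit v ≤ bit (-v), F v = ∑ v : V p with bit v < bit (-v), F (-v) := by
    apply sum_nbij' Neg.neg Neg.neg <;> simp
  have h2 : ∑ v : V p with bit v ≤ bit (-v), (if v = -v then 0 else F (-v)) =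
      ∑ v : V p with bit v < bit (-v), F (-v) := by
    rw [sum_filter, sum_filter]
    refine sum_congr rfl fun v _ => ?_
    by_cases h : v = -v
    · simp [← h]
    · have h' : bit v ≠ bit (-v) := fun e => h (bit_injective e)
      rw [if_neg h]
      refine if_congr ?_ rfl rfl
      omega
  rw [sum_add_distrib, h2, ← h1, sum_filter_add_sum_filter_not]

theorem exists_coords {x : ℕ × ℕ × ℕ} (h : x ∈ vecs p) : ∃ v : V p, coords v = x := by
  have h' : x ∈ ((vecs p : List _) : Multiset _) := h
  rw [← vecs_eq] at h'
  obtain ⟨v, _, hv⟩ := Multiset.mem_map.1 h'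
  exact ⟨v, hv⟩

/-- Exhaustive search over one of two contributions for each antipodal pair meeting `D`. -/
theorem enum_pairs (test : ℕ → Bool) (D X : Finset (V p)) (hXD : X ⊆ D)
    (hD : ∀ x ∈ D, -x ∈ D) (H : ℕ × ℕ × ℕ → ℕ × ℕ)
    (hH : ∀ v ∈ D, ((if v ∈ X then bit v else 0) + if v = -v then 0 else if -v ∈ X then bit (-v) else 0) =
        (H (tag v, bit v, bit (-v))).1 ∨
      ((if v ∈ X then bit v else 0) + if v = -v then 0 else if -v ∈ X then bit (-v) else 0) =
        (H (tag v, bit v, bit (-v))).2)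
    (he : enum test (((pairs p).filter fun e => hasBit (ind D) e.1 && Nat.ble e.2.1 e.2.2).map H) 0
      = true) : test (ind X) = true := by
  let g : V p → ℕ := fun v =>
    (if v ∈ X then bit v else 0) + if v = -v then 0 else if -v ∈ X then bit (-v) else 0
  rw [pairs, List.filter_map, List.map_map] at he
  have h := enum_sound _ _ _ _ he (Function.extend coords g 0) (by
    intro x hx
    obtain ⟨v, rfl⟩ := exists_coords (List.mem_filter.1 hx).1
    have hx2 := (List.mem_filter.1 hx).2
    rw [coords_injective.extend_apply]
    have : v ∈ D := by
      simp only [Function.comp, Bool.and_eq_true] at hx2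
      have := hx2.1
      rw [← tag, hasBit_ind] at this
      exact of_decide_eq_true this
    have h3 := hH v this
    simp only [bit, coords_neg] at h3
    simp only [g, Function.comp, bit, coords_neg]
    exact h3)
  rw [zero_add, sum_filter_vecs] at h
  have e : ind X = ∑ v : V p, if v ∈ X then bit v else 0 := by
    rw [← sum_filter, filter_mem_eq_inter, univ_inter, ind]
  rw [e, pair_sum]
  have e2 : ∑ v : V p with ((fun e : ℕ × ℕ × ℕ => hasBit (ind D) e.1 && Nat.ble e.2.1 e.2.2) ∘
      fun v => (tagN v, bitN v, bitN ((p - v.1) % p, (p - v.2.1) % p, (p - v.2.2) % p)))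
      (coords v) = true, Function.extend coords g 0 (coords v) =
      ∑ v : V p with bit v ≤ bit (-v), g v := by
    apply sum_subset_zero_on_sdiff
    · intro v hv
      have h1 := (mem_filter.1 hv).2
      simp only [Function.comp, Bool.and_eq_true] at h1
      rw [← coords_neg, Nat.ble_eq] at h1
      exact mem_filter.2 ⟨mem_univ _, h1.2⟩
    · intro v hv
      obtain ⟨h1, h2⟩ := mem_sdiff.1 hv
      have h1 := (mem_filter.1 h1).2
      have hvD : v ∉ D := fun hvD => by
        apply h2
        rw [mem_filter]
        refine ⟨mem_univ _, ?_⟩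
        simp only [Function.comp, Bool.and_eq_true]
        rw [← coords_neg, Nat.ble_eq, ← tag, hasBit_ind, decide_eq_true hvD]
        exact ⟨rfl, h1⟩
      have h3 : v ∉ X := fun h => hvD (hXD h)
      have h4 : -v ∉ X := fun h => hvD (by simpa using hD _ (hXD h))
      simp [g, h3, h4]
    · intro v _
      rw [coords_injective.extend_apply]
  rw [e2] at h
  exact h

/-- A test passed by all generated sums is passed by every inverse-closed subset of `D`. -/
theorem symCh_sound (test : ℕ → Bool) (D X : Finset (V p)) (hXD : X ⊆ D)
    (hD : ∀ x ∈ D, -x ∈ D) (hX : ∀ x ∈ X, -x ∈ X)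
    (he : enum test (symCh p (ind D)) 0 = true) : test (ind X) = true := by
  refine enum_pairs test D X hXD hD _ (fun v _ => ?_) he
  by_cases hv : v ∈ X
  · left
    have hv' := hX v hv
    by_cases h : v = -v
    · have h2 : Nat.beq (bit v) (bit (-v)) = true := by rw [Nat.beq_eq, ← h]
      simp [hv, ← h]
    · have h2 : Nat.beq (bit v) (bit (-v)) = false := by
        rw [Bool.eq_false_iff, Ne, Nat.beq_eq]; exact fun e => h (bit_injective e)
      simp [hv, hv', h, h2]
  · right
    have hv' : -v ∉ X := fun h => hv (by simpa using hX _ h)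
    simp [hv, hv']

/-- A test passed by all generated sums is passed by every subset of `D` that contains exactly one of
`x`, `-x` for each `x ∈ D`. -/
theorem splCh_sound (test : ℕ → Bool) (D X : Finset (V p)) (hXD : X ⊆ D)
    (hD : ∀ x ∈ D, -x ∈ D) (hX : ∀ x ∈ D, x ∈ X ↔ -x ∉ X)
    (he : enum test (splCh p (ind D)) 0 = true) : test (ind X) = true := by
  refine enum_pairs test D X hXD hD _ (fun v hvD => ?_) he
  have hne : v ≠ -v := fun h => by
    have := hX v hvD
    rw [← h] at this
    exact iff_not_self this
  by_cases hv : v ∈ X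
  · left
    simp [hv, (hX v hvD).1 hv]
  · right
    have hv' : -v ∈ X := by by_contra h; exact hv ((hX v hvD).2 h)
    simp [hv, hv', hne]

end

/-! ### Matched colourings and partitions -/

section

open Finset

/-- Two colourings `a`, `b` of `V p` by the same set of colours describe algebraically isomorphic
S-rings: the colour classes are the basic sets, `ν` is inversion of basic sets, and corresponding
structure constants agree. -/
structure Matched {p : ℕ} [Small p] {K : Type*} [DecidableEq K] (ν : K → K) (a b : V p → K) :
    Prop where
  inv : ∀ k, ν (ν k) = k
  zero_a : ∀ x, a x = a 0 ↔ x = 0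
  zero_b : ∀ x, b x = b 0 ↔ x = 0
  zero : a 0 = b 0
  neg_a : ∀ x, a (-x) = ν (a x)
  neg_b : ∀ x, b (-x) = ν (b x)
  surj : Function.Surjective a
  card : ∀ k, #{x | a x = k} = #{x | b x = k}
  conv : ∀ i j z w, a z = b w →
    #{x | a x = i ∧ a (z - x) = j} = #{x | b x = i ∧ b (w - x) = j}

variable {p : ℕ} [hp : Small p] {K : Type*} [DecidableEq K] {ν : K → K} {a b : V p → K}

/-- The union of the colour classes with colour in `T`. -/
def lv (a : V p → K) (T : Finset K) : Finset (V p) := univ.filter fun x => a x ∈ T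

@[simp] theorem mem_lv {T : Finset K} {x : V p} : x ∈ lv a T ↔ a x ∈ T := by simp [lv]

namespace Matched

theorem surj_b (h : Matched ν a b) : Function.Surjective b := by
  intro k
  obtain ⟨x, hx⟩ := h.surj k
  have h1 : 0 < #{x | a x = k} := card_pos.2 ⟨x, by simpa using hx⟩
  rw [h.card] at h1
  obtain ⟨y, hy⟩ := card_pos.1 h1
  exact ⟨y, by simpa using hy⟩

theorem symm (h : Matched ν a b) : Matched ν b a where
  inv := h.inv
  zero_a := h.zero_b
  zero_b := h.zero_a
  zero := h.zero.symm
  neg_a := h.neg_b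
  neg_b := h.neg_a
  surj := h.surj_b
  card k := (h.card k).symm
  conv i j z w hzw := (h.conv i j w z hzw.symm).symm

theorem comp (h : Matched ν a b) (g : V p ≃+ V p) : Matched ν (a ∘ g) b where
  inv := h.inv
  zero_a x := by simp only [Function.comp, map_zero, h.zero_a, map_eq_zero_iff g g.injective]
  zero_b := h.zero_b
  zero := by simp only [Function.comp, map_zero, h.zero]
  neg_a x := by simp only [Function.comp, map_neg, h.neg_a]
  neg_b := h.neg_b
  surj := h.surj.comp g.surjective
  card k := by
    rw [← h.card]
    refine card_bij' (fun x _ => g x) (fun x _ => g.symm x) ?_ ?_ ?_ ?_ <;> simp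
  conv i j z w hzw := by
    rw [← h.conv i j (g z) w hzw]
    refine card_bij' (fun x _ => g x) (fun x _ => g.symm x) ?_ ?_ ?_ ?_ <;> simp

theorem card_lv (h : Matched ν a b) (T : Finset K) : #(lv a T) = #(lv b T) := by
  have e (c : V p → K) : #(lv c T) = ∑ k ∈ T, #{x | c x = k} := by
    rw [card_eq_sum_card_fiberwise (f := c) (t := T) (fun x hx => by simpa using hx)]
    refine sum_congr rfl fun k hk => ?_
    congr 1
    ext x
    simp only [mem_filter, mem_lv, mem_univ, true_and]
    exact ⟨fun h => h.2, fun h => ⟨h ▸ hk, h⟩⟩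
  rw [e, e]
  exact sum_congr rfl fun k _ => h.card k

end Matched

theorem convN_lv (a : V p → K) (T₁ T₂ : Finset K) (z : V p) :
    convN (lv a T₁) (lv a T₂) z = ∑ k ∈ T₁ ×ˢ T₂, #{x | a x = k.1 ∧ a (z - x) = k.2} := by
  have e : convN (lv a T₁) (lv a T₂) z = #{x | a x ∈ T₁ ∧ a (z - x) ∈ T₂} := by
    refine card_bij' (fun x _ => x.1) (fun x _ => (x, z - x)) ?_ ?_ ?_ ?_
    · rintro ⟨x, y⟩ h
      simp only [mem_filter, mem_product, mem_lv] at h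
      obtain ⟨h, rfl⟩ := h
      simpa using h
    · intro x h
      simpa using h
    · rintro ⟨x, y⟩ h
      simp only [mem_filter, mem_product, mem_lv] at h
      obtain ⟨h, rfl⟩ := h
      simp
    · intros; rfl
  rw [e, card_eq_sum_card_fiberwise (f := fun x => (a x, a (z - x))) (t := T₁ ×ˢ T₂)
    (fun x hx => by simpa using hx)]
  refine sum_congr rfl fun k hk => ?_
  congr 1
  ext x
  simp only [mem_filter, mem_univ, true_and, Prod.ext_iff]
  rw [mem_product] at hk
  exact ⟨fun h => h.2, fun h => ⟨⟨h.1 ▸ hk.1, h.2 ▸ hk.2⟩, h⟩⟩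

theorem Matched.convN_eq (h : Matched ν a b) (T₁ T₂ : Finset K) {z w : V p} (hzw : a z = b w) :
    convN (lv a T₁) (lv a T₂) z = convN (lv b T₁) (lv b T₂) w := by
  rw [convN_lv, convN_lv]
  exact sum_congr rfl fun k _ => h.conv _ _ _ _ hzw

theorem convN_neg (s t : Finset (V p)) (z : V p) :
    convN s t (-z) = convN (s.image Neg.neg) (t.image Neg.neg) z := by
  refine card_bij' (fun x _ => -x) (fun x _ => -x) ?_ ?_ ?_ ?_
  · rintro ⟨x, y⟩ h
    simp only [mem_filter, mem_product] at h
    simp only [mem_filter, mem_product, Prod.fst_neg, Prod.snd_neg]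
    refine ⟨⟨mem_image_of_mem _ h.1.1, mem_image_of_mem _ h.1.2⟩, ?_⟩
    rw [← neg_add, h.2, neg_neg]
  · rintro ⟨x, y⟩ h
    simp only [mem_filter, mem_product, mem_image] at h
    obtain ⟨⟨⟨u, hu, rfl⟩, ⟨v, hv, rfl⟩⟩, rfl⟩ := h
    simp [hu, hv, add_comm]
  · intros; simp
  · intros; simp

theorem convN_comm (s t : Finset (V p)) (z : V p) : convN s t z = convN t s z := by
  refine card_bij' (fun x _ => x.swap) (fun x _ => x.swap) ?_ ?_ ?_ ?_
  · rintro ⟨x, y⟩ h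
    simp only [mem_filter, mem_product] at h
    simp [h.1.1, h.1.2, ← h.2, add_comm]
  · rintro ⟨x, y⟩ h
    simp only [mem_filter, mem_product] at h
    simp [h.1.1, h.1.2, ← h.2, add_comm]
  · intros; rfl
  · intros; rfl

theorem Matched.image_neg (h : Matched ν a b) (T : Finset K) :
    (lv a T).image Neg.neg = lv a (T.image ν) := by
  ext x
  simp only [mem_image, mem_lv]
  constructor
  · rintro ⟨y, hy, rfl⟩; exact ⟨_, hy, (h.neg_a y).symm⟩
  · rintro ⟨k, hk, e⟩
    refine ⟨-x, ?_, neg_neg x⟩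
    rw [h.neg_a, ← e, h.inv]; exact hk

/-- The target `{k, ν k}` sees the same number of representations on both sides as soon as this
number is invariant under negation. -/
theorem Matched.convN_sym (h : Matched ν a b) (T₁ T₂ : Finset K)
    (hT : (T₁.image ν = T₁ ∧ T₂.image ν = T₂) ∨ (T₁.image ν = T₂ ∧ T₂.image ν = T₁)) {k : K}
    {z w : V p} (hz : a z ∈ ({k, ν k} : Finset K)) (hw : b w ∈ ({k, ν k} : Finset K)) :
    convN (lv a T₁) (lv a T₂) z = convN (lv b T₁) (lv b T₂) w := by
  have key : a z = b w ∨ a (-z) = b w := by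
    simp only [mem_insert, mem_singleton] at hz hw
    rw [h.neg_a]
    rcases hz with hz | hz <;> rcases hw with hw | hw <;> simp [hz, hw, h.inv]
  rcases key with key | key
  · exact h.convN_eq _ _ key
  · rw [← h.convN_eq _ _ key, convN_neg, h.image_neg, h.image_neg]
    rcases hT with ⟨h1, h2⟩ | ⟨h1, h2⟩
    · rw [h1, h2]
    · rw [h1, h2, convN_comm]

/-- The meaning of the flag of a cell which is the union of the colour classes in `T`: a single
basic set; a basic set together with its inverse; or an inverse-closed union in which every
`X ∪ X⁻¹` has at least `m` elements. -/
def FlagOk (ν : K → K) (a : V p → K) (T : Finset K) : Flag → Prop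
  | .basic => ∃ k, T = {k}
  | .sym => ∃ k, T = {k, ν k}
  | .bound m => (∀ k ∈ T, ν k ∈ T) ∧ ∀ k ∈ T, m ≤ #(lv a {k, ν k})

/-- The cell `e` is, for both colourings, the union of the same colour classes. -/
def CellOk (ν : K → K) (a b : V p → K) (e : ℕ × Flag) : Prop :=
  ∃ T : Finset K, e.1 = ind (lv a T) ∧ e.1 = ind (lv b T) ∧ FlagOk ν a T e.2

/-- The state `P` is a partition of `V p \ {0}` which is coarser than both colourings, in the
compatible way prescribed by `CellOk`. -/
structure Sem (ν : K → K) (P : State) (a b : V p → K) : Prop where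
  cell : ∀ e ∈ P, CellOk ν a b e
  cover : ∀ x : V p, x ≠ 0 → ∃ e ∈ P, hasBit e.1 (tag x) = true

/-- Any two matched colourings compatible with the state `P` differ by an automorphism. -/
def Solves (p : ℕ) [Small p] {K : Type*} [DecidableEq K] (ν : K → K) (P : State) : Prop :=
  ∀ a b : V p → K, Matched ν a b → Sem ν P a b → ∃ f : V p ≃+ V p, ∀ x, b (f x) = a x

theorem FlagOk.of_card {c : V p → K} (h : ∀ T, #(lv a T) = #(lv c T)) {T : Finset K} {f : Flag}
    (hf : FlagOk ν a T f) : FlagOk ν c T f := by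
  cases f with
  | basic => exact hf
  | sym => exact hf
  | bound m => exact ⟨hf.1, fun k hk => (h _).symm ▸ hf.2 k hk⟩

theorem Sem.symm (hm : Matched ν a b) {P : State} (h : Sem ν P a b) : Sem ν P b a where
  cell e he := by
    obtain ⟨T, h1, h2, h3⟩ := h.cell e he
    exact ⟨T, h2, h1, h3.of_card hm.card_lv⟩
  cover := h.cover

theorem lv_comp (g : V p ≃+ V p) (T : Finset K) :
    lv (a ∘ g.symm) T = (lv a T).image g := by
  ext x
  simp only [mem_image, mem_lv, Function.comp]
  exact ⟨fun h => ⟨_, h, by simp⟩, by rintro ⟨y, hy, rfl⟩; simpa using hy⟩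

theorem card_lv_comp (g : V p ≃+ V p) (T : Finset K) : #(lv (a ∘ g.symm) T) = #(lv a T) := by
  rw [lv_comp, card_image_of_injective _ g.injective]

theorem Sem.comp {P : State} (h : Sem ν P a b) (g : V p ≃+ V p)
    (hg : ∀ e ∈ P, ∀ s : Finset (V p), e.1 = ind s → s.image g = s) :
    Sem ν P (a ∘ g.symm) b where
  cell e he := by
    obtain ⟨T, h1, h2, h3⟩ := h.cell e he
    refine ⟨T, ?_, h2, h3.of_card fun T => (card_lv_comp g T).symm⟩
    rw [lv_comp, hg e he _ h1, h1]
  cover := h.cover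

theorem mem_or_mem_eraseIdx {α : Type*} {P : List α} {d : ℕ} {e : α} (h : P[d]? = some e) {e' : α}
    (he : e' ∈ P) : e' = e ∨ e' ∈ P.eraseIdx d := by
  rw [List.mem_iff_getElem?] at he
  obtain ⟨i, hi⟩ := he
  by_cases hid : i = d
  · subst hid; left; rw [hi] at h; exact Option.some.inj h
  · right; exact List.mem_eraseIdx_iff_getElem?.2 ⟨i, hid, hi⟩

/-- Replacing one cell by a list of cells covering it. -/
theorem Sem.replace {P : State} (h : Sem ν P a b) {d : ℕ} {D : Finset (V p)} {f : Flag}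
    (hd : P[d]? = some (ind D, f)) (N : State) (hN : ∀ e ∈ N, CellOk ν a b e)
    (hc : ∀ x ∈ D, ∃ e ∈ N, hasBit e.1 (tag x) = true) : Sem ν (N ++ P.eraseIdx d) a b where
  cell e he := by
    rcases List.mem_append.1 he with he | he
    · exact hN e he
    · exact h.cell e (List.mem_of_mem_eraseIdx he)
  cover x hx := by
    obtain ⟨e, he, hex⟩ := h.cover x hx
    rcases mem_or_mem_eraseIdx hd he with rfl | he
    · rw [hasBit_ind, decide_eq_true_iff] at hex
      obtain ⟨e, he, hex⟩ := hc x hex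
      exact ⟨e, List.mem_append_left _ he, hex⟩
    · exact ⟨e, List.mem_append_right _ he, hex⟩

/-- At a leaf every cell is a colour class, of the same colour for both colourings (for `p = 2` the
cells `X ∪ X⁻¹` are classes as well, since inversion is trivial), so the colourings are equal. -/
theorem solves_leaf {P : State} {c : Ctx} (hc : CtxOk p c) (h : chk c .leaf P = true) :
    Solves p ν P := by
  intro a b hm hs
  refine ⟨AddEquiv.refl _, fun x => ?_⟩
  change b x = a x
  by_cases hx : x = 0
  · rw [hx, hm.zero]
  obtain ⟨e, he, hex⟩ := hs.cover x hx
  obtain ⟨T, h1, h2, h3⟩ := hs.cell e he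
  have ha : a x ∈ T := by rw [h1, hasBit_ind, decide_eq_true_iff] at hex; simpa using hex
  have hb : b x ∈ T := by rw [h2, hasBit_ind, decide_eq_true_iff] at hex; simpa using hex
  rw [chk, List.all_eq_true] at h
  have he' := h e he
  obtain ⟨C, f⟩ := e
  cases f with
  | basic =>
    obtain ⟨k, rfl⟩ := h3
    rw [mem_singleton] at ha hb
    rw [ha, hb]
  | sym =>
    obtain ⟨k, rfl⟩ := h3
    simp only [isB, isBS, Bool.false_or, Bool.true_and, Nat.beq_eq, hc.p_eq] at he'
    subst he'
    have hν : ν k = k := by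
      obtain ⟨y, rfl⟩ := hm.surj k
      rw [← hm.neg_a]
      have hneg : ∀ y : V 2, -y = y := fun y => by ext <;> exact ZMod.neg_eq_self_mod_two _
      rw [hneg]
    simp only [hν, mem_insert, mem_singleton, or_self] at ha hb
    rw [ha, hb]
  | bound m => simp [isB, isBS] at he'

end

/-! ### The splitting step -/

section

open Finset

variable {p : ℕ} [hp : Small p] {K : Type*} [DecidableEq K] {ν : K → K} {a b : V p → K}

/-- Splitting a common union of classes by the number of representations as a sum from two common
unions of classes again gives common unions of classes, with the same colours on both sides. -/
theorem Matched.split_cell (hm : Matched ν a b) {T₁ T₂ T : Finset K} (h₁ : lv a T₁ = lv b T₁)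
    (h₂ : lv a T₂ = lv b T₂) (h : lv a T = lv b T) (q : ℕ → Prop) [DecidablePred q] :
    ∃ T' ⊆ T, lv a T' = (lv a T).filter (fun z => q (convN (lv a T₁) (lv a T₂) z)) ∧
      lv b T' = (lv a T).filter (fun z => q (convN (lv a T₁) (lv a T₂) z)) := by
  have hself {x y : V p} (hxy : a x = a y) : convN (lv a T₁) (lv a T₂) x =
      convN (lv a T₁) (lv a T₂) y := by
    obtain ⟨w, hw⟩ := hm.surj_b (a x)
    rw [hm.convN_eq _ _ hw.symm, hm.convN_eq _ _ (hw.trans hxy).symm]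
  have hcross {x w : V p} (hxw : a x = b w) : convN (lv a T₁) (lv a T₂) x =
      convN (lv a T₁) (lv a T₂) w := by
    rw [hm.convN_eq _ _ hxw, h₁, h₂]
  refine ⟨((lv a T).filter (fun z => q (convN (lv a T₁) (lv a T₂) z))).image a, ?_, ?_, ?_⟩
  · intro k hk
    obtain ⟨x, hx, rfl⟩ := mem_image.1 hk
    simpa using (mem_filter.1 hx).1
  · ext x
    simp only [mem_lv, mem_image, mem_filter]
    constructor
    · rintro ⟨y, hy, e⟩
      rw [← e, hself e.symm]; exact hy
    · intro hx; exact ⟨x, hx, rfl⟩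
  · ext w
    rw [h]
    simp only [mem_lv, mem_image, mem_filter]
    constructor
    · rintro ⟨y, hy, e⟩
      rw [← e, ← hcross e, ← mem_lv (a := a), h, mem_lv]; exact hy
    · intro hw
      obtain ⟨x, hx⟩ := hm.surj (b w)
      refine ⟨x, ⟨?_, ?_⟩, hx⟩
      · rw [← mem_lv (a := b), ← h, mem_lv, hx]; exact hw.1
      · rw [hcross hx]; exact hw.2

theorem lv_nonempty (hm : Matched ν a b) {T : Finset K} : (lv a T).Nonempty ↔ T.Nonempty := by
  constructor
  · rintro ⟨x, hx⟩; exact ⟨_, mem_lv.1 hx⟩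
  · rintro ⟨k, hk⟩
    obtain ⟨x, rfl⟩ := hm.surj k
    exact ⟨x, mem_lv.2 hk⟩

theorem lv_injective (hm : Matched ν a b) : Function.Injective (lv a) := by
  intro T T' h
  ext k
  obtain ⟨x, rfl⟩ := hm.surj k
  rw [← mem_lv (a := a), h, mem_lv]

theorem ind_ne_zero {s : Finset (V p)} (h : Nat.beq (ind s) 0 = false) : s.Nonempty := by
  rw [Finset.nonempty_iff_ne_empty]
  rintro rfl
  simp at h

/-- The splitting step. The classes inside a cell known to be basic are not split, and a cell
`X ∪ X⁻¹` can only be split into `X` and `X⁻¹`. -/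
theorem solves_ref {P : State} {c : Ctx} (hc : CtxOk p c) (i j d k : ℕ) (ct : Cert)
    (ih : ∀ P, chk c ct P = true → Solves p ν P)
    (h : chk c (.ref i j d k ct) P = true) : Solves p ν P := by
  intro a b hm hs
  rw [chk] at h
  split at h
  · rename_i X f₁ Y f₂ D f hX hY hD
    obtain ⟨T₁, hX1, hX2, -⟩ := hs.cell _ (List.mem_of_getElem? hX)
    obtain ⟨T₂, hY1, hY2, -⟩ := hs.cell _ (List.mem_of_getElem? hY)
    obtain ⟨T, hD1, hD2, hf⟩ := hs.cell _ (List.mem_of_getElem? hD)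
    simp only at hX1 hX2 hY1 hY2 hD1 hD2 hf
    have eX := ind_injective (hX1.symm.trans hX2)
    have eY := ind_injective (hY1.symm.trans hY2)
    have eD := ind_injective (hD1.symm.trans hD2)
    obtain ⟨TU, hTU, hU1, hU2⟩ := hm.split_cell eX eY eD (· = k)
    obtain ⟨TW, hTW, hW1, hW2⟩ := hm.split_cell eX eY eD (¬ · = k)
    have hW : (lv a T) \ (lv a TU) = lv a TW := by
      rw [hU1, hW1]; ext x; simp only [mem_sdiff, mem_filter]; tauto
    rw [force_eq, force_eq, force_eq, hX1, hY1, hD1, hc.p_eq, cut_ind hc, ← hU1,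
      ind_sdiff (by rw [hU1]; exact filter_subset _ _), hW] at h
    have hdisj : Disjoint TU TW := by
      rw [disjoint_left]
      intro k' h1 h2
      obtain ⟨x, rfl⟩ := hm.surj k'
      rw [← mem_lv (a := a), hU1, mem_filter] at h1
      rw [← mem_lv (a := a), hW1, mem_filter] at h2
      exact h2.2 h1.2
    have hcov : ∀ x ∈ lv a T, x ∈ lv a TU ∨ x ∈ lv a TW := by
      intro x hx
      rw [← hW, mem_sdiff]
      tauto
    have hneg : negN p (ind (lv a TU)) = ind (lv a (TU.image ν)) := by
      rw [negN_ind, hm.image_neg]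
    have hrep (fU fW : Flag) (h1 : FlagOk ν a TU fU) (h2 : FlagOk ν a TW fW) :
        Sem ν ((ind (lv a TU), fU) :: (ind (lv a TW), fW) :: P.eraseIdx d) a b := by
      rw [hD1] at hD
      refine hs.replace hD [(ind (lv a TU), fU), (ind (lv a TW), fW)] ?_ ?_
      · intro e he
        simp only [List.mem_cons, List.not_mem_nil, or_false] at he
        rcases he with rfl | rfl
        · exact ⟨TU, rfl, by rw [hU1, hU2], h1⟩
        · exact ⟨TW, rfl, by rw [hW1, hW2], h2⟩
      · intro x hx
        rcases hcov x hx with hx | hx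
        · exact ⟨_, List.mem_cons_self, by rw [hasBit_ind, decide_eq_true hx]⟩
        · exact ⟨_, List.mem_cons_of_mem _ List.mem_cons_self,
            by rw [hasBit_ind, decide_eq_true hx]⟩
    cases f with
    | basic =>
      exfalso
      obtain ⟨k0, rfl⟩ := hf
      simp only [Bool.and_eq_true, Bool.not_eq_true'] at h
      obtain ⟨x, hx⟩ := (lv_nonempty hm).1 (ind_ne_zero h.1)
      obtain ⟨y, hy⟩ := (lv_nonempty hm).1 (ind_ne_zero h.2)
      rw [disjoint_left] at hdisj
      exact hdisj hx (by
        rw [mem_singleton.1 (hTU hx), ← mem_singleton.1 (hTW hy)]; exact hy)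
    | sym =>
      obtain ⟨k0, rfl⟩ := hf
      simp only [Bool.and_eq_true, Bool.not_eq_true', Bool.or_eq_true] at h
      have hUn := (lv_nonempty hm).1 (ind_ne_zero h.1.1)
      have hWn := (lv_nonempty hm).1 (ind_ne_zero h.1.2)
      rw [disjoint_left] at hdisj
      have key : (TU = {k0} ∧ TW = {ν k0}) ∨ (TU = {ν k0} ∧ TW = {k0}) := by
        have aux {A B : Finset K} {u v : K} (hA : A ⊆ {u, v}) (hB : B ⊆ {u, v})
            (hAB : ∀ ⦃x⦄, x ∈ A → x ∉ B) (hBn : B.Nonempty) (hu : u ∈ A) :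
            A = {u} ∧ B = {v} := by
          have hB' : B = {v} := by
            refine eq_singleton_iff_nonempty_unique_mem.2 ⟨hBn, fun x hx => ?_⟩
            have := hB hx
            rw [mem_insert, mem_singleton] at this
            rcases this with rfl | rfl
            · exact absurd hx (hAB hu)
            · rfl
          refine ⟨eq_singleton_iff_unique_mem.2 ⟨hu, fun x hx => ?_⟩, hB'⟩
          have := hA hx
          rw [mem_insert, mem_singleton] at this
          rcases this with rfl | rfl
          · rfl
          · exact absurd (hB' ▸ mem_singleton_self x) (hAB hx)
        by_cases hk : k0 ∈ TU
        · exact Or.inl (aux hTU hTW hdisj hWn hk)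
        · right
          refine aux (by rwa [pair_comm]) (by rwa [pair_comm]) hdisj hWn ?_
          obtain ⟨x, hx⟩ := hUn
          have := hTU hx
          rw [mem_insert, mem_singleton] at this
          rcases this with rfl | rfl
          · contradiction
          · exact hx
      have hUW : TU.image ν = TW := by
        rcases key with ⟨rfl, rfl⟩ | ⟨rfl, rfl⟩ <;> simp [hm.inv]
      rcases h.2 with h2 | h2
      · rw [hneg, hUW, Nat.beq_refl] at h2
        exact absurd h2 (by decide)
      · refine ih _ h2 a b hm (hrep _ _ ?_ ?_)
        · rcases key with ⟨h1, -⟩ | ⟨h1, -⟩ <;> exact ⟨_, h1⟩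
        · rcases key with ⟨-, h1⟩ | ⟨-, h1⟩ <;> exact ⟨_, h1⟩
    | bound m =>
      simp only [Bool.and_eq_true] at h
      rw [hneg, Nat.beq_eq] at h
      have hUc := lv_injective hm (ind_injective h.1)
      have hU' : ∀ k' ∈ TU, ν k' ∈ TU := fun k' hk' => hUc ▸ mem_image_of_mem ν hk'
      refine ih _ h.2 a b hm (hrep _ _ ⟨hU', fun k' hk' => hf.2 k' (hTU hk')⟩
        ⟨fun k' hk' => ?_, fun k' hk' => hf.2 k' (hTW hk')⟩)
      have h1 := hf.1 k' (hTW hk')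
      obtain ⟨x, hx⟩ := hm.surj (ν k')
      rw [← hx, ← mem_lv (a := a)] at h1 ⊢
      rcases hcov x h1 with h3 | h3
      · exfalso
        rw [mem_lv, hx] at h3
        have h4 := hU' _ h3
        rw [hm.inv] at h4
        exact disjoint_left.1 hdisj h4 hk'
      · exact h3
  · exact absurd h (by decide)

end

/-! ### Moving two colourings to a common representative -/

section

open Finset

variable {p : ℕ} [hp : Small p] {K : Type*} [DecidableEq K] {ν : K → K} {a b : V p → K}

/-- The data preserved while the unknown set `lv a Tk` inside the cell `D` is being normalised. -/
structure Inv (ν : K → K) (P : State) (D : Finset (V p)) (T Tk : Finset K) (q : ℕ)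
    (a b : V p → K) : Prop where
  m : Matched ν a b
  s : Sem ν P a b
  da : lv a T = D
  db : lv b T = D
  ca : #(lv a Tk) = q
  lb : ∀ k ∈ T, q ≤ #(lv a {k, ν k})

theorem Inv.symm {P : State} {D : Finset (V p)} {T Tk : Finset K} {q : ℕ}
    (h : Inv ν P D T Tk q a b) : Inv ν P D T Tk q b a where
  m := h.m.symm
  s := h.s.symm h.m
  da := h.db
  db := h.da
  ca := by rw [← h.m.card_lv, h.ca]
  lb k hk := by rw [← h.m.card_lv]; exact h.lb k hk

theorem Inv.comp {P : State} {D : Finset (V p)} {T Tk : Finset K} {q : ℕ} {f : Flag}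
    (hD : (ind D, f) ∈ P) (h : Inv ν P D T Tk q a b) (g : V p ≃+ V p)
    (hg : ∀ e ∈ P, ∀ s : Finset (V p), e.1 = ind s → s.image g = s) :
    Inv ν P D T Tk q (a ∘ g.symm) b where
  m := h.m.comp g.symm
  s := h.s.comp g hg
  da := by rw [lv_comp, h.da, hg _ hD D rfl]
  db := h.db
  ca := by rw [card_lv_comp, h.ca]
  lb k hk := by rw [card_lv_comp]; exact h.lb k hk

/-- A query passes its test, and another one has the same value. -/
def QRel (q q' : ℕ × ℕ) : Prop := okQ q = true ∧ valQ q = valQ q'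

theorem qrel {c : Ctx} (hc : CtxOk p c) {s t Z s' t' Z' : Finset (V p)} (hZ : Z.Nonempty)
    (hZ' : Z'.Nonempty) (h : ∀ z ∈ Z, ∀ w ∈ Z', convN s t z = convN s' t' w) :
    QRel (conv c (ind s) (ind t), ind Z) (conv c (ind s') (ind t'), ind Z') := by
  obtain ⟨z, hz⟩ := hZ
  obtain ⟨w, hw⟩ := hZ'
  refine ⟨okQ_const hc _ _ _ (convN s' t' w) fun z hz => h z hz w hw, ?_⟩
  rw [valQ_const hc _ _ _ (convN s' t' w) (fun z hz => h z hz w hw) ⟨z, hz⟩,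
    valQ_const hc _ _ _ (convN s' t' w) (fun w' hw' => ?_) ⟨w, hw⟩]
  rw [← h z hz w hw, ← h z hz w' hw']

theorem allOk_of_forall₂ {l l' : List (ℕ × ℕ)} (h : List.Forall₂ QRel l l') :
    allOk l = true ∧ l.map valQ = l'.map valQ := by
  induction h with
  | nil => exact ⟨rfl, rfl⟩
  | @cons q q' l l' h1 _ ih =>
    have e : allOk (q :: l) = andB (okQ q) (allOk l) := rfl
    rw [e, andB_eq, h1.1, ih.1, List.map_cons, List.map_cons, h1.2, ih.2]
    exact ⟨rfl, rfl⟩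

theorem eq_of_distinctSigs {qs : ℕ → List (ℕ × ℕ)} {reps : List ℕ}
    (h : distinctSigs qs reps = true) {r r' : ℕ} (hr : r ∈ reps) (hr' : r' ∈ reps)
    (hs : sigs qs r = sigs qs r') : r = r' := by
  induction reps with
  | nil => simp at hr
  | cons x t ih =>
    rw [distinctSigs, Bool.and_eq_true, List.all_eq_true] at h
    have key : ∀ y ∈ t, sigs qs x ≠ sigs qs y := by
      intro y hy e
      have := h.1 y hy
      rw [e] at this
      have e2 : List.beq (sigs qs y) (sigs qs y) = true := beq_self_eq_true (sigs qs y)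
      rw [e2] at this
      exact absurd this (by decide)
    rcases List.mem_cons.1 hr with h1 | h1 <;> rcases List.mem_cons.1 hr' with h2 | h2
    · rw [h1, h2]
    · subst h1; exact absurd hs (key _ h2)
    · subst h2; exact absurd hs.symm (key _ h1)
    · exact ih h.2 h1 h2

/-- If every possible set `lv a Tk` is either a listed representative or can be decreased by one of
the symmetries `gens` of `P`, then both colourings can be moved so that `Tk` cuts out the same
representative. -/
theorem brOk_sound {P : State} {qs : ℕ → List (ℕ × ℕ)} {pre : ℕ → Bool} {gens reps : List ℕ}
    {ch : List (ℕ × ℕ)} (hbr : brOk P qs pre p gens reps ch = true)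
    {D : Finset (V p)} {T Tk : Finset K} {q : ℕ} {f : Flag} (hD : (ind D, f) ∈ P)
    (H : ∀ a b : V p → K, Inv ν P D T Tk q a b → pre (ind (lv a Tk)) = true ∧
      List.Forall₂ QRel (qs (ind (lv a Tk))) (qs (ind (lv b Tk))) ∧
      ∀ test, enum test ch 0 = true → test (ind (lv a Tk)) = true)
    (h : Inv ν P D T Tk q a b) :
    ∃ g g' : V p ≃+ V p, Inv ν P D T Tk q (a ∘ g) (b ∘ g') ∧
      lv (a ∘ g) Tk = lv (b ∘ g') Tk ∧ ind (lv (a ∘ g) Tk) ∈ reps := by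
  rw [brOk, withTabs_eq, Bool.and_eq_true, Bool.and_eq_true, forceTab_eq, List.all_eq_true] at hbr
  obtain ⟨hd, hts, he⟩ := hbr
  -- one side at a time: descend along the numerical value of the encoded set
  have descend : ∀ n : ℕ, ∀ a b : V p → K, Inv ν P D T Tk q a b → ind (lv a Tk) = n →
      ∃ g : V p ≃+ V p, Inv ν P D T Tk q (a ∘ g) b ∧ ind (lv (a ∘ g) Tk) ∈ reps := by
    intro n
    induction n using Nat.strong_induction_on with
    | _ n ih =>
      intro a b hi hn
      obtain ⟨h1, h2, h3⟩ := H a b hi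
      have h4 := h3 _ he
      simp only [h1, (allOk_of_forall₂ h2).1] at h4
      rw [survOk, Bool.or_eq_true, memN, List.any_eq_true, List.any_eq_true] at h4
      rcases h4 with ⟨r, hr, hr'⟩ | ⟨t, ht, htl⟩
      · rw [Nat.beq_eq] at hr'
        refine ⟨AddEquiv.refl _, hi, ?_⟩
        change ind (lv a Tk) ∈ reps
        rw [hr']; exact hr
      · have hgood := hts t ht
        obtain ⟨m, -, rfl⟩ := List.mem_map.1 ht
        have hinj := lin_injective P m hgood
        let g : V p ≃+ V p := AddEquiv.ofBijective (lin p m)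
          (Finite.injective_iff_bijective.1 hinj)
        have hg : ∀ s : Finset (V p), s.image g = s.image (lin p m) := fun s => rfl
        have hgs : ∀ e ∈ P, ∀ s : Finset (V p), e.1 = ind s → s.image g = s := by
          intro e he s hes
          rw [hg]
          obtain ⟨C, f⟩ := e
          simp only at hes
          subst hes
          exact image_lin P m hgood s f he
        rw [imgN_tab m _ hinj, ← hg, ← lv_comp] at htl
        have htl : ind (lv (a ∘ g.symm) Tk) < ind (lv a Tk) := Nat.blt_eq ▸ htl
        obtain ⟨g', hg1, hg2⟩ := ih _ (hn ▸ htl) _ b (hi.comp hD g hgs) rfl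
        exact ⟨g'.trans g.symm, hg1, hg2⟩
  obtain ⟨g, hg1, hg2⟩ := descend _ a b h rfl
  obtain ⟨g', hg1', hg2'⟩ := descend _ b (a ∘ g) hg1.symm rfl
  refine ⟨g, g', hg1'.symm, ?_, hg2⟩
  apply ind_injective
  refine eq_of_distinctSigs hd hg2 hg2' ?_
  have h3 := (allOk_of_forall₂ (H _ _ hg1'.symm).2.1).2
  rw [sigs, sigs, card_ind, card_ind, hg1'.ca, hg1'.symm.ca, h3]

end

/-! ### Queries, and branching on a class and its inverse -/

section

open Finset

variable {p : ℕ} [hp : Small p] {K : Type*} [DecidableEq K] {ν : K → K} {a b : V p → K}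

theorem qrel_basic {c : Ctx} (hc : CtxOk p c) (hm : Matched ν a b) {T₁ T₂ : Finset K} {k : K}
    {X Y Z X' Y' Z' : ℕ} (hX : X = ind (lv a T₁)) (hX' : X' = ind (lv b T₁))
    (hY : Y = ind (lv a T₂)) (hY' : Y' = ind (lv b T₂)) (hZ : Z = ind (lv a {k}))
    (hZ' : Z' = ind (lv b {k})) : QRel (conv c X Y, Z) (conv c X' Y', Z') := by
  rw [hX, hX', hY, hY', hZ, hZ']
  refine qrel hc ((lv_nonempty hm).2 (singleton_nonempty k))
    ((lv_nonempty hm.symm).2 (singleton_nonempty k)) fun z hz w hw => hm.convN_eq _ _ ?_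
  rw [mem_lv, mem_singleton] at hz hw
  rw [hz, hw]

theorem qrel_sym {c : Ctx} (hc : CtxOk p c) (hm : Matched ν a b) {T₁ T₂ : Finset K} {k : K}
    (hT : (T₁.image ν = T₁ ∧ T₂.image ν = T₂) ∨ (T₁.image ν = T₂ ∧ T₂.image ν = T₁))
    {X Y Z X' Y' Z' : ℕ} (hX : X = ind (lv a T₁)) (hX' : X' = ind (lv b T₁))
    (hY : Y = ind (lv a T₂)) (hY' : Y' = ind (lv b T₂)) (hZ : Z = ind (lv a {k, ν k}))
    (hZ' : Z' = ind (lv b {k, ν k})) : QRel (conv c X Y, Z) (conv c X' Y', Z') := by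
  rw [hX, hX', hY, hY', hZ, hZ']
  exact qrel hc ((lv_nonempty hm).2 (insert_nonempty _ _))
    ((lv_nonempty hm.symm).2 (insert_nonempty _ _)) fun z hz w hw =>
      hm.convN_sym _ _ hT (mem_lv.1 hz) (mem_lv.1 hw)

theorem Matched.image_eq_self (hm : Matched ν a b) {T : Finset K} (h : ∀ k ∈ T, ν k ∈ T) :
    T.image ν = T := by
  ext k
  rw [mem_image]
  exact ⟨by rintro ⟨k, hk, rfl⟩; exact h k hk, fun hk => ⟨ν k, h k hk, hm.inv k⟩⟩

theorem Matched.image_pair (hm : Matched ν a b) (k : K) :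
    ({k, ν k} : Finset K).image ν = {k, ν k} := by
  apply hm.image_eq_self
  intro k' hk'
  rw [mem_insert, mem_singleton] at hk' ⊢
  rcases hk' with rfl | rfl
  · exact Or.inr rfl
  · exact Or.inl (hm.inv _)

theorem CellOk.nonbasic (hm : Matched ν a b) {e : ℕ × Flag} (he : CellOk ν a b e)
    (hb : (!isB e.2) = true) :
    ∃ T : Finset K, e.1 = ind (lv a T) ∧ e.1 = ind (lv b T) ∧ T.image ν = T := by
  obtain ⟨T, h1, h2, h3⟩ := he
  refine ⟨T, h1, h2, ?_⟩
  obtain ⟨C, f⟩ := e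
  cases f with
  | basic => simp [isB] at hb
  | sym => obtain ⟨k, rfl⟩ := h3; exact hm.image_pair k
  | bound m => exact hm.image_eq_self h3.1

theorem forall₂_map {α : Type*} {l : List α} {g g' : α → ℕ × ℕ}
    (h : ∀ x ∈ l, QRel (g x) (g' x)) : List.Forall₂ QRel (l.map g) (l.map g') := by
  induction l with
  | nil => exact .nil
  | cons x l ih =>
    exact .cons (h x List.mem_cons_self) (ih fun y hy => h y (List.mem_cons_of_mem _ hy))

theorem forall₂_append {l₁ l₂ l₁' l₂' : List (ℕ × ℕ)} (h : List.Forall₂ QRel l₁ l₁')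
    (h' : List.Forall₂ QRel l₂ l₂') : List.Forall₂ QRel (l₁ ++ l₂) (l₁' ++ l₂') := by
  induction h with
  | nil => exact h'
  | cons h _ ih => exact .cons h ih

theorem forall₂_flatMap {α : Type*} {l : List α} {g g' : α → List (ℕ × ℕ)}
    (h : ∀ x ∈ l, List.Forall₂ QRel (g x) (g' x)) :
    List.Forall₂ QRel (l.flatMap g) (l.flatMap g') := by
  induction l with
  | nil => exact .nil
  | cons x l ih =>
    rw [List.flatMap_cons, List.flatMap_cons]
    exact forall₂_append (h x List.mem_cons_self) (ih fun y hy => h y (List.mem_cons_of_mem _ hy))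

/-- For a class pair `X ∪ X⁻¹` all queries are constant, with equal values for both colourings. -/
theorem qsSym_rel {c : Ctx} (hc : CtxOk p c) (hm : Matched ν a b) {R : State}
    (hR : ∀ e ∈ R, CellOk ν a b e) {D : ℕ} {T : Finset K} (hT : T.image ν = T)
    (hDa : D = ind (lv a T)) (hDb : D = ind (lv b T)) (k : K) :
    List.Forall₂ QRel (qsSym c D R (ind (lv a {k, ν k}))) (qsSym c D R (ind (lv b {k, ν k}))) := by
  have hk := hm.image_pair k
  refine .cons (qrel_sym hc hm (.inl ⟨hk, hk⟩) rfl rfl rfl rfl rfl rfl)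
    (.cons (qrel_sym hc hm (.inl ⟨hk, hT⟩) rfl rfl hDa hDb rfl rfl)
    (forall₂_append (forall₂_map ?_) (forall₂_flatMap ?_)))
  · intro e he
    rw [List.mem_filter] at he
    obtain ⟨Te, h1, h2, h3⟩ := (hR e he.1).nonbasic hm he.2
    exact qrel_sym hc hm (.inl ⟨hk, h3⟩) rfl rfl h1 h2 rfl rfl
  · intro e he
    rw [List.mem_filter] at he
    obtain ⟨Te, h1, h2, h3⟩ := hR e he.1
    obtain ⟨C, f⟩ := e
    have hq (T₂ : Finset K) (hT₂ : T₂.image ν = T₂) {Y Y' : ℕ} (hY : Y = ind (lv a T₂))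
        (hY' : Y' = ind (lv b T₂)) : QRel (conv c (ind (lv a {k, ν k})) Y, C)
          (conv c (ind (lv b {k, ν k})) Y', C) := by
      cases f with
      | basic => obtain ⟨k', rfl⟩ := h3; exact qrel_basic hc hm rfl rfl hY hY' h1 h2
      | sym =>
        obtain ⟨k', rfl⟩ := h3
        exact qrel_sym hc hm (.inl ⟨hk, hT₂⟩) rfl rfl hY hY' h1 h2
      | bound m => simp [isBS] at he
    refine .cons (hq _ hk rfl rfl) (forall₂_map fun e' he' => ?_)
    rw [List.mem_filter] at he'
    obtain ⟨Te', h1', h2', h3'⟩ := (hR e' he'.1).nonbasic hm he'.2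
    exact hq _ h3' h1' h2'

theorem lv_sdiff (a : V p → K) (T T' : Finset K) : lv a (T \ T') = lv a T \ lv a T' := by
  ext x; simp

theorem lv_mono (a : V p → K) {T T' : Finset K} (h : T ⊆ T') : lv a T ⊆ lv a T' := by
  intro x hx; rw [mem_lv] at *; exact h hx

/-- For a class `X ≠ X⁻¹` all queries are constant, with equal values for both colourings. -/
theorem qsSpl_rel {c : Ctx} (hc : CtxOk p c) (hm : Matched ν a b) {R : State}
    (hR : ∀ e ∈ R, CellOk ν a b e) {D : ℕ} {k : K} (hk : ν k ≠ k)
    (hDa : D = ind (lv a {k, ν k})) (hDb : D = ind (lv b {k, ν k})) :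
    List.Forall₂ QRel (qsSpl c D R (ind (lv a {k}))) (qsSpl c D R (ind (lv b {k}))) := by
  have hN : ({k, ν k} : Finset K) \ {k} = {ν k} := by
    ext x; simp only [mem_sdiff, mem_insert, mem_singleton]
    exact ⟨fun h => h.1.resolve_left h.2, fun h => ⟨.inr h, h ▸ hk⟩⟩
  have hsub : ({k} : Finset K) ⊆ {k, ν k} := by simp
  have hNa : Nat.sub D (ind (lv a {k})) = ind (lv a {ν k}) := by
    rw [hDa, ind_sdiff (lv_mono a hsub), ← lv_sdiff, hN]
  have hNb : Nat.sub D (ind (lv b {k})) = ind (lv b {ν k}) := by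
    rw [hDb, ind_sdiff (lv_mono b hsub), ← lv_sdiff, hN]
  rw [qsSpl, qsSpl, force_eq, force_eq, hNa, hNb]
  refine .cons (qrel_basic hc hm rfl rfl rfl rfl rfl rfl)
    (.cons (qrel_basic hc hm rfl rfl rfl rfl rfl rfl)
    (.cons (qrel_basic hc hm rfl rfl rfl rfl rfl rfl)
    (.cons (qrel_basic hc hm rfl rfl hDa hDb rfl rfl)
    (forall₂_append (forall₂_map ?_) (forall₂_flatMap ?_)))))
  · intro e he
    obtain ⟨Te, h1, h2, -⟩ := hR e he
    exact qrel_basic hc hm rfl rfl h1 h2 rfl rfl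
  · rintro ⟨C, f⟩ he
    obtain ⟨Te, h1, h2, h3⟩ := hR _ he
    cases f with
    | basic =>
      obtain ⟨k', rfl⟩ := h3
      refine .cons (qrel_basic hc hm rfl rfl rfl rfl h1 h2)
        (.cons (qrel_basic hc hm rfl rfl rfl rfl h1 h2) (forall₂_map fun e' he' => ?_))
      obtain ⟨Te', h1', h2', -⟩ := hR e' he'
      exact qrel_basic hc hm rfl rfl h1' h2' h1 h2
    | sym =>
      obtain ⟨k', rfl⟩ := h3
      exact .cons (qrel_sym hc hm (.inr ⟨by simp, by simp [hm.inv]⟩) rfl rfl rfl rfl h1 h2) .nil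
    | bound m => exact .nil

theorem neg_mem_lv (hm : Matched ν a b) {T : Finset K} (hT : T.image ν = T) :
    ∀ x ∈ lv a T, -x ∈ lv a T := by
  intro x hx
  rw [mem_lv] at hx ⊢
  rw [hm.neg_a, ← hT]
  exact mem_image_of_mem ν hx

theorem repsOf_mem (p : ℕ) {r : ℕ} (x : ℕ) (ct nx : Cert) :
    r ∈ repsOf p (.rep x ct nx) ↔ r = expand p x ∨ r ∈ repsOf p nx := by
  rw [repsOf, force_eq, List.mem_cons]

/-- Solving after moving both colourings by automorphisms. -/
theorem exists_of_comp (g g' : V p ≃+ V p)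
    (h : ∃ f : V p ≃+ V p, ∀ x, (b ∘ g') (f x) = (a ∘ g) x) :
    ∃ f : V p ≃+ V p, ∀ x, b (f x) = a x := by
  obtain ⟨f, hf⟩ := h
  refine ⟨(g.symm.trans f).trans g', fun x => ?_⟩
  have := hf (g.symm x)
  simpa using this

/-- The branching step for a cell `X ∪ X⁻¹`: either `X = X⁻¹`, or both colourings can be moved so that
`X` is one of the representatives. -/
theorem solves_br_sym {P : State} {c : Ctx} (hc : CtxOk p c) {d D : ℕ} {gens : List ℕ}
    {reps ct : Cert} (hd : P[d]? = some (D, .sym))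
    (h1 : chk c ct ((D, .basic) :: P.eraseIdx d) = true)
    (h2 : brOk P (qsSpl c D (P.eraseIdx d)) (fun _ => true) p gens (repsOf p reps) (splCh p D)
      = true)
    (ih : ∀ P, chk c ct P = true → Solves p ν P)
    (ihr : ∀ r ∈ repsOf p reps,
      Solves p ν ((r, .basic) :: (Nat.sub D r, .basic) :: P.eraseIdx d)) : Solves p ν P := by
  intro a b hm hs
  obtain ⟨T, hDa, hDb, k, rfl⟩ := hs.cell _ (List.mem_of_getElem? hd)
  simp only at hDa hDb
  subst hDa
  have hab := ind_injective hDb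
  by_cases hk : ν k = k
  · refine ih _ h1 a b hm (hs.replace hd [(ind (lv a {k, ν k}), .basic)] ?_ ?_)
    · intro e he
      rw [List.mem_singleton] at he
      subst he
      exact ⟨_, rfl, hDb, k, by rw [hk, pair_eq_singleton]⟩
    · intro x hx
      exact ⟨_, List.mem_cons_self, by rw [hasBit_ind, decide_eq_true hx]⟩
  · have hsub : ({k} : Finset K) ⊆ {k, ν k} := by simp
    have hinv : Inv ν P (lv a {k, ν k}) {k, ν k} {k} #(lv a {k}) a b :=
      ⟨hm, hs, rfl, hab.symm, rfl, fun k' hk' => by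
        have e : ({k', ν k'} : Finset K) = {k, ν k} := by
          rw [mem_insert, mem_singleton] at hk'
          rcases hk' with rfl | rfl
          · rfl
          · rw [hm.inv, pair_comm]
        rw [e]
        exact card_le_card (lv_mono a hsub)⟩
    obtain ⟨g, g', hi, hgg, hr⟩ := brOk_sound h2 (List.mem_of_getElem? hd)
      (fun a' b' hi => by
        have hm' := hi.m
        refine ⟨rfl, qsSpl_rel hc hm' (fun e he => hi.s.cell e (List.mem_of_mem_eraseIdx he)) hk
          (by rw [hi.da]) (by rw [hi.db]), fun test ht => ?_⟩
        refine splCh_sound test (lv a {k, ν k}) _ ?_ ?_ ?_ ht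
        · rw [← hi.da]; exact lv_mono a' hsub
        · exact neg_mem_lv hm (hm.image_pair k)
        · intro x hx
          rw [← hi.da, mem_lv, mem_insert, mem_singleton] at hx
          rw [mem_lv, mem_lv, mem_singleton, mem_singleton, hm'.neg_a]
          rcases hx with hx | hx
          · simp [hx, hk]
          · simp [hx, hk, hm'.inv]) hinv
    apply exists_of_comp g g'
    refine ihr _ hr _ _ hi.m ?_
    rw [← hi.da, ind_sdiff (lv_mono _ hsub), ← lv_sdiff]
    have hN : ({k, ν k} : Finset K) \ {k} = {ν k} := by
      ext x; simp only [mem_sdiff, mem_insert, mem_singleton]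
      exact ⟨fun h => h.1.resolve_left h.2, fun h => ⟨.inr h, h ▸ hk⟩⟩
    have hD' : P[d]? = some (ind (lv (a ∘ g) {k, ν k}), .sym) := by rw [hi.da, hd]
    refine hi.s.replace hD' [(ind (lv (a ∘ g) {k}), .basic),
      (ind (lv (a ∘ g) ({k, ν k} \ {k})), .basic)] ?_ ?_
    · intro e he
      simp only [List.mem_cons, List.not_mem_nil, or_false] at he
      rcases he with rfl | rfl
      · exact ⟨_, rfl, by rw [hgg], _, rfl⟩
      · exact ⟨_, rfl, by rw [lv_sdiff, lv_sdiff, hgg, hi.da, hi.db], _, hN⟩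
    · intro x hx
      by_cases hx' : x ∈ lv (a ∘ g) {k}
      · exact ⟨_, List.mem_cons_self, by rw [hasBit_ind, decide_eq_true hx']⟩
      · refine ⟨_, List.mem_cons_of_mem _ List.mem_cons_self, ?_⟩
        rw [hasBit_ind, lv_sdiff, decide_eq_true (mem_sdiff.2 ⟨hx, hx'⟩)]

end

/-! ### Branching on a general cell, and soundness of the verifier -/

section

open Finset

variable {p : ℕ} [hp : Small p] {K : Type*} [DecidableEq K] {ν : K → K} {a b : V p → K}

/-- The branching step for an inverse-closed cell: either it consists of one class pair `X ∪ X⁻¹`, or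
both colourings can be moved so that a smallest such pair is one of the representatives. -/
theorem solves_br_bound {P : State} {c : Ctx} (hc : CtxOk p c) {d D m : ℕ} {gens : List ℕ}
    {reps ct : Cert} (hd : P[d]? = some (D, .bound m)) (h0 : Nat.beq D 0 = false)
    (h1 : card D < m ∨ (chk c ct ((D, .sym) :: P.eraseIdx d) = true ∧ (card D < 2 * m ∨
      brOk P (qsSym c D (P.eraseIdx d))
        (fun S => andB (Nat.ble m (card S)) (Nat.ble (Nat.mul 2 (card S)) (card D)))
        p gens (repsOf p reps) (symCh p D) = true)))
    (ih : ∀ P, chk c ct P = true → Solves p ν P)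
    (ihr : card D < 2 * m ∨ card D < m ∨ ∀ r ∈ repsOf p reps,
      Solves p ν ((r, .sym) :: (Nat.sub D r, .bound (card r)) :: P.eraseIdx d)) :
    Solves p ν P := by
  intro a b hm hs
  obtain ⟨T, hDa, hDb, hTν, hTm⟩ := hs.cell _ (List.mem_of_getElem? hd)
  simp only at hDa hDb
  subst hDa
  have hab := ind_injective hDb
  have hTne := (lv_nonempty hm).1 (ind_ne_zero h0)
  obtain ⟨k, hkT, hmin⟩ := exists_min_image T (fun k => #(lv a {k, ν k})) hTne
  have hsub : ({k, ν k} : Finset K) ⊆ T := by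
    intro x hx
    rw [mem_insert, mem_singleton] at hx
    rcases hx with rfl | rfl
    · exact hkT
    · exact hTν _ hkT
  have hle := card_le_card (lv_mono a hsub)
  have hmk := hTm k hkT
  rw [card_ind] at h1 ihr
  rcases h1 with h1 | ⟨h1, h2⟩
  · omega
  by_cases hT : T = {k, ν k}
  · refine ih _ h1 a b hm (hs.replace hd [(ind (lv a T), .sym)] ?_ ?_)
    · intro e he
      rw [List.mem_singleton] at he
      subst he
      exact ⟨T, rfl, hDb, k, hT⟩
    · intro x hx
      exact ⟨_, List.mem_cons_self, by rw [hasBit_ind, decide_eq_true hx]⟩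
  · have h2S : 2 * #(lv a {k, ν k}) ≤ #(lv a T) := by
      obtain ⟨k', hk'T, hk'⟩ : ∃ k' ∈ T, k' ∉ ({k, ν k} : Finset K) := by
        by_contra hcon
        push Not at hcon
        exact hT (Subset.antisymm hcon hsub)
      have hsub' : ({k', ν k'} : Finset K) ⊆ T := by
        intro x hx
        rw [mem_insert, mem_singleton] at hx
        rcases hx with rfl | rfl
        · exact hk'T
        · exact hTν _ hk'T
      have hdisj : Disjoint (lv a {k, ν k}) (lv a {k', ν k'}) := by
        rw [disjoint_left]
        intro x hx hx'
        simp only [mem_lv, mem_insert, mem_singleton] at hx hx' hk'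
        push Not at hk'
        rcases hx with hx | hx <;> rcases hx' with hx' | hx' <;> rw [hx] at hx'
        · exact hk'.1 hx'.symm
        · exact hk'.2 (by rw [hx', hm.inv])
        · exact hk'.2 hx'.symm
        · exact hk'.1 (by rw [← hm.inv k, hx', hm.inv])
      have h3 := card_le_card (union_subset (lv_mono a hsub) (lv_mono a hsub'))
      rw [card_union_of_disjoint hdisj] at h3
      have := hmin k' hk'T
      omega
    rcases h2 with h2 | h2
    · omega
    replace ihr := (ihr.resolve_left (by omega)).resolve_left (by omega)
    have hinv : Inv ν P (lv a T) T {k, ν k} #(lv a {k, ν k}) a b :=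
      ⟨hm, hs, rfl, hab.symm, rfl, hmin⟩
    have hTi := hm.image_eq_self hTν
    obtain ⟨g, g', hi, hgg, hr⟩ := brOk_sound h2 (List.mem_of_getElem? hd)
      (fun a' b' hi => by
        have hm' := hi.m
        refine ⟨?_, qsSym_rel hc hm' (fun e he => hi.s.cell e (List.mem_of_mem_eraseIdx he)) hTi
          (by rw [hi.da]) (by rw [hi.db]) k, fun test ht => ?_⟩
        · rw [andB_eq, card_ind, hi.ca, Bool.and_eq_true, Nat.ble_eq, Nat.ble_eq]
          exact ⟨hmk, h2S⟩
        · refine symCh_sound test (lv a T) _ ?_ (neg_mem_lv hm hTi)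
            (neg_mem_lv hm' (hm'.image_pair k)) ht
          rw [← hi.da]; exact lv_mono a' hsub) hinv
    apply exists_of_comp g g'
    refine ihr _ hr _ _ hi.m ?_
    rw [← hi.da, ind_sdiff (lv_mono _ hsub), ← lv_sdiff, card_ind, hi.ca]
    have hD' : P[d]? = some (ind (lv (a ∘ g) T), .bound m) := by rw [hi.da, hd]
    refine hi.s.replace hD' [(ind (lv (a ∘ g) {k, ν k}), .sym),
      (ind (lv (a ∘ g) (T \ {k, ν k})), .bound #(lv a {k, ν k}))] ?_ ?_
    · intro e he
      simp only [List.mem_cons, List.not_mem_nil, or_false] at he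
      rcases he with rfl | rfl
      · exact ⟨_, rfl, by rw [hgg], _, rfl⟩
      · refine ⟨_, rfl, by rw [lv_sdiff, lv_sdiff, hgg, hi.da, hi.db], ?_,
          fun k' hk' => hi.lb k' (mem_sdiff.1 hk').1⟩
        intro k' hk'
        rw [mem_sdiff, mem_insert, mem_singleton] at hk' ⊢
        refine ⟨hTν _ hk'.1, fun h => hk'.2 ?_⟩
        rcases h with h | h
        · exact .inr (by rw [← h, hm.inv])
        · exact .inl (by rw [← hm.inv k', h, hm.inv])
    · intro x hx
      by_cases hx' : x ∈ lv (a ∘ g) {k, ν k}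
      · exact ⟨_, List.mem_cons_self, by rw [hasBit_ind, decide_eq_true hx']⟩
      · refine ⟨_, List.mem_cons_of_mem _ List.mem_cons_self, ?_⟩
        rw [hasBit_ind, lv_sdiff, decide_eq_true (mem_sdiff.2 ⟨hx, hx'⟩)]

/-- Soundness of the certificate checker. -/
theorem chk_sound {c : Ctx} (hc : CtxOk p c) (ct : Cert) :
    (∀ P, chk c ct P = true → Solves p ν P) ∧
    ∀ st, chk.chkReps c ct st = true → ∀ r ∈ repsOf p ct, Solves p ν (st r) := by
  induction ct with
  | leaf => exact ⟨fun P h => solves_leaf hc h, fun st h => absurd h (by simp [chk.chkReps])⟩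
  | done =>
    exact ⟨fun P h => absurd h (by simp [chk]), fun st h r hr => absurd hr (by simp [repsOf])⟩
  | ref i j d k ct ih =>
    exact ⟨fun P h => solves_ref hc i j d k ct ih.1 h, fun st h => absurd h (by simp [chk.chkReps])⟩
  | rep r ct nx ih ihn =>
    refine ⟨fun P h => absurd h (by simp [chk]), fun st h r' hr' => ?_⟩
    rw [chk.chkReps, Bool.and_eq_true, force_eq, hc.p_eq] at h
    rw [repsOf_mem] at hr'
    rcases hr' with rfl | hr'
    · exact ih.1 _ h.1
    · exact ihn.2 _ h.2 _ hr'
  | br d gens reps ct ihr ih =>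
    refine ⟨fun P h => ?_, fun st h => absurd h (by simp [chk.chkReps])⟩
    rw [chk, hc.p_eq] at h
    split at h
    · rename_i D f hd
      cases f with
      | basic => exact absurd h Bool.false_ne_true
      | sym =>
        simp only [Bool.and_eq_true] at h
        exact solves_br_sym hc hd h.1.1.2 h.1.2 ih.1 (ihr.2 _ h.2)
      | bound m =>
        simp only [Bool.and_eq_true, Bool.or_eq_true, Nat.blt_eq, Bool.not_eq_true'] at h
        obtain ⟨h0, h1⟩ := h
        refine solves_br_bound hc hd h0 (gens := gens) (reps := reps) (ct := ct) ?_ ih.1 ?_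
        · tauto
        · rcases h1 with h1 | ⟨-, h1 | ⟨-, h1⟩⟩
          · exact .inr (.inl h1)
          · exact .inl h1
          · exact .inr (.inr (ihr.2 _ h1))
    · exact absurd h (by decide)

/-- The initial state: one cell `V p \ {0}`. -/
def start (p m : ℕ) : State := [(((vecs p).map bitN).sum - bitN (0, 0, 0), .bound m)]

theorem coords_zero : coords (0 : V p) = (0, 0, 0) := by simp [coords]

theorem start_eq (m : ℕ) : start p m = [(ind (univ.erase (0 : V p)), .bound m)] := by
  have h : ((vecs p).map bitN).sum = ind (univ : Finset (V p)) := sum_vecs bitN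
  have h0 : bitN (0, 0, 0) = ind ({0} : Finset (V p)) := by
    rw [ind, sum_singleton, bit, coords_zero]
  have h1 := ind_sdiff (subset_univ ({0} : Finset (V p)))
  rw [Nat.sub_eq] at h1
  rw [start, h, h0, h1, sdiff_singleton_eq_erase]

theorem sem_start [Fintype K] (hm : Matched ν a b) (m : ℕ)
    (h : ∀ x : V p, x ≠ 0 → m ≤ #({x, -x} : Finset (V p))) : Sem ν (start p m) a b := by
  rw [start_eq]
  have ha : univ.erase (0 : V p) = lv a (univ.erase (a 0)) := by
    ext x; simp [hm.zero_a]
  have hb : univ.erase (0 : V p) = lv b (univ.erase (a 0)) := by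
    ext x; simp [hm.zero, hm.zero_b]
  have hν0 : ν (a 0) = a 0 := by rw [← hm.neg_a, neg_zero]
  refine ⟨fun e he => ?_, fun x hx => ⟨_, List.mem_cons_self, ?_⟩⟩
  · rw [List.mem_singleton] at he
    subst he
    refine ⟨univ.erase (a 0), by rw [← ha], by rw [← hb], fun k hk => ?_, fun k hk => ?_⟩
    · rw [mem_erase] at hk ⊢
      refine ⟨fun e => hk.1 ?_, mem_univ _⟩
      rw [← hm.inv k, e, hν0]
    · obtain ⟨x, rfl⟩ := hm.surj k
      rw [mem_erase] at hk
      refine (h x fun e => hk.1 (by rw [e])).trans (card_le_card ?_)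
      intro y hy
      rw [mem_insert, mem_singleton] at hy
      rw [mem_lv, mem_insert, mem_singleton]
      rcases hy with rfl | rfl
      · exact .inl rfl
      · exact .inr (hm.neg_a x)
  · rw [hasBit_ind, decide_eq_true_iff]
    simp [hx]

end

/-! ### The search trees -/

section

open Finset

/-- The masks for `p = 2`. -/
def ctx2 : Ctx := ⟨2,
  18054867095979704490283325770681602940087610229314296012410335745210753559679815137157432107372572113178468339139176575735413267621977379469981255064661231753643988391067312148144620717310694297848804918983982726435370671999973170665967157705693306637608588253369741412667488310148544439928323784482728012378062729517337938792318687563619085422387414322579190580248575,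
  13582985290493858492773514283581952699963075796107961246994596679172516879432870667959759279553828239482832236203705626424691108681130235513009765418613191133036086704783136982828677828149381572396405055338795662499610504426269261683199309709568422577169456228395005047597625582740114132979285484421319010816503808324277062783205375,
  3273390607896141870013189696827599152216642046043064789483291368096133796404674554883270092325904157150886684127560071009217256545885393053328527589375⟩

/-- The masks for `p = 3`. -/
def ctx3 : Ctx := ⟨3,
  18488201520787701280688652694861640124408678813949770155045756886350197216579018192951783314468642987867544924125676949335088293765165931189338336875242432692542911082197699412687553219034167849479418040751714393804186822148140331613824189946393561307454255453000130689246056973483143797749471778065225175141489774599148700384738035888255761637486099961359454646067789823,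
  15293081873211767368008098429801431702283953425145113690686176183245673958431424187330838511425794310200121508719168307597409084989289765109889787880871077203884752654157746713348487055365655658325056938339345820399134172219925121131411297694636056079069631827894208277201735468121107133059759806585940206491615531779206410908909265070468181786623,
  5922386521532855740161817506647119732883018558947359509044845726112560091729648156474603305162988578607512400425457279991804428268870599332596921062626576000993556884845161077691136496092218188572933193945756793025561702170623⟩

/-- The search tree for `p = 2`. -/
def cert2 : Cert := (.br 0 [99, 267, 281, 492] (.rep 2 (.br 1 [369, 225, 473, 169] (.rep 4 (.ref 0
  1 1 0 (.br 0 [] .done (.br 1 [337, 465] (.rep 16 (.ref 0 2 1 0 (.ref 1 4 0 0 (.br 2 [] .done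
  (.br 2 [] .done (.br 2 [] .done .leaf))))) (.rep 48 (.br 1 [] .done .leaf) (.rep 80 (.br 1 []
  .done .leaf) (.rep 96 (.br 1 [] .done .leaf) .done)))) .leaf))) (.rep 12 (.br 1 [465] (.rep 48
  (.br 1 [] .done .leaf) .done) .leaf) (.rep 20 (.ref 0 0 1 0 (.br 1 [] .done .leaf)) (.rep 84
  (.br 1 [] .done .leaf) (.rep 88 (.br 1 [] .done .leaf) .done))))) .leaf) (.rep 6 (.ref 0 0 1 0
  (.br 1 [] .done .leaf)) (.rep 14 (.br 1 [] .done .leaf) (.rep 22 (.br 1 [] .done (.ref 0 0 0 0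
  .leaf)) .done)))) .leaf)

/-- The search tree for `p = 3`. -/
def cert3 : Cert := (.br 0 [15754, 1031, 13285, 6591, 19016, 6670, 6697, 19529, 18814, 4215, 5556,
  4027, 19337, 7005, 16889] (.rep 6 (.br 1 [5509, 13934, 15797, 16553, 7399, 13069, 6670, 4160,
  11098] (.rep 72 (.ref 0 1 1 1 (.br 1 [7372, 10288, 13934, 13285] (.rep 262656 (.ref 0 2 1 0
  (.ref 0 4 0 0 (.br 2 [6644, 13205] (.rep 4325376 (.ref 0 1 2 0 (.ref 0 2 4 0 (.ref 0 2 5 0 (.ref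
  0 1 8 0 (.ref 0 5 2 0 (.br 8 [] .done (.br 8 [] .done (.br 8 [] .done (.br 8 [] .done (.br 8 []
  .done (.br 8 [] .done (.br 8 [] .done (.br 8 [] .done (.br 8 [] .done (.br 0 [13286] (.rep 8192
  (.ref 0 2 8 0 (.ref 0 2 4 0 (.ref 0 3 14 0 (.ref 0 8 9 0 (.ref 0 2 10 0 (.ref 0 3 18 0 (.ref 0 8
  18 0 (.ref 0 3 17 0 (.ref 0 7 18 0 (.ref 0 4 21 0 (.ref 0 9 23 0 (.ref 0 6 24 0
  .leaf)))))))))))) .done) (.br 1 [] .done (.br 2 [] .done (.br 3 [] .done (.br 4 [] .done (.br 5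
  [] .done (.br 6 [] .done (.br 7 [] .done (.br 8 [] .done (.br 9 [] .done (.br 10 [] .done (.br
  11 [] .done (.br 12 [] .done .leaf))))))))))))))))))))))))))) (.rep 12779520 (.ref 0 0 3 0 (.br
  3 [] .done (.br 2 [] .done (.br 2 [] .done (.br 4 [] .done (.br 6 [] .done (.br 0 [13286] (.rep
  48 (.ref 0 0 8 0 (.ref 0 4 7 0 (.ref 0 0 7 0 (.ref 0 4 11 0 (.ref 0 3 11 0 (.ref 0 7 12 0 (.ref
  0 7 14 0 (.br 16 [] .done .leaf)))))))) (.rep 144 (.ref 0 0 9 0 (.ref 0 4 4 0 (.ref 0 4 8 0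
  (.ref 0 2 10 0 (.br 10 [] .done (.br 11 [] .done (.br 12 [] .done (.br 13 [] .done .leaf))))))))
  .done)) (.br 1 [] .done (.br 4 [] .done (.br 5 [] .done (.br 4 [] .done (.br 5 [] .done (.br 6
  [] .done (.br 7 [] .done (.br 8 [] .done .leaf))))))))))))))) (.rep 37896192 (.ref 0 0 2 0 (.br
  3 [] .done (.br 2 [] .done (.br 2 [] .done (.br 4 [] .done (.br 6 [] .done (.br 0 [13286] (.rep
  48 (.ref 0 0 8 0 (.ref 0 4 4 0 (.ref 0 4 8 0 (.ref 0 2 10 0 (.br 10 [] .done (.br 11 [] .done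
  (.br 12 [] .done (.br 13 [] .done .leaf)))))))) (.rep 144 (.ref 0 0 9 0 (.ref 0 4 7 0 (.ref 0 0
  7 0 (.ref 0 4 11 0 (.ref 0 3 11 0 (.ref 0 7 12 0 (.ref 0 7 14 0 (.br 16 [] .done .leaf))))))))
  .done)) (.br 1 [] .done (.br 4 [] .done (.br 5 [] .done (.br 4 [] .done (.br 5 [] .done (.br 6
  [] .done (.br 7 [] .done (.br 8 [] .done .leaf))))))))))))))) (.rep 42024960 (.ref 0 0 5 0 (.br
  3 [] .done (.br 2 [] .done (.br 2 [] .done (.br 4 [] .done (.br 5 [] .done (.br 0 [13286] (.rep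
  36864 (.ref 0 0 7 0 (.ref 0 4 4 0 (.ref 0 4 8 0 (.ref 0 2 10 0 (.br 10 [] .done (.br 11 [] .done
  (.br 12 [] .done (.br 13 [] .done .leaf)))))))) (.rep 2101248 (.ref 0 0 8 0 (.ref 0 4 7 0 (.ref
  0 0 7 0 (.ref 0 4 12 0 (.ref 0 3 11 0 (.ref 0 7 12 0 (.ref 0 7 14 0 (.br 16 [] .done
  .leaf)))))))) .done)) (.br 1 [] .done (.br 4 [] .done (.br 5 [] .done (.br 4 [] .done (.br 5 []
  .done (.br 6 [] .done (.br 7 [] .done (.br 8 [] .done .leaf))))))))))))))) .done)))) (.br 1 []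
  .done (.br 2 [] .done (.br 4 [] .done (.br 3 [13286] (.rep 221184 (.ref 0 0 3 0 (.ref 0 0 6 0
  (.ref 0 7 7 0 (.br 8 [] .done (.br 9 [] .done (.br 10 [] .done .leaf)))))) (.rep 12607488 (.ref
  0 0 2 0 (.ref 0 0 7 0 (.ref 0 6 6 0 (.br 8 [] .done (.br 9 [] .done (.br 10 [] .done .leaf))))))
  (.rep 37822464 (.ref 0 0 2 0 (.ref 0 0 8 0 (.ref 0 7 7 0 (.br 8 [] .done (.br 9 [] .done (.br 10
  [] .done .leaf)))))) (.rep 42082304 (.br 2 [] .done (.br 3 [] .done (.br 4 [] .done (.br 5 []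
  .done (.br 6 [] .done (.br 7 [] .done .leaf)))))) .done)))) (.br 1 [] .done (.br 2 [] .done (.br
  3 [] .done (.br 4 [] .done (.br 5 [] .done (.br 6 [] .done .leaf))))))))))))) (.rep 788992 (.ref
  0 0 1 0 (.ref 1 3 0 0 (.br 2 [] .done .leaf))) (.rep 1838592 (.br 1 [8183] (.rep 14909440 (.br 1
  [] .done (.br 3 [14014] (.rep 160 (.br 1 [] .done (.br 2 [14744] (.rep 28672 (.ref 0 2 4 0 (.ref
  0 2 4 0 (.ref 0 3 7 0 (.ref 0 5 8 0 (.ref 0 4 10 0 (.ref 0 3 12 0 .leaf)))))) .done) (.br 3 []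
  .done (.br 4 [] .done (.br 3 [] .done (.br 4 [] .done (.br 5 [] .done (.br 6 [] .done
  .leaf)))))))) .done) (.br 1 [13285] (.rep 28672 (.ref 0 2 3 0 (.ref 0 2 4 0 (.ref 0 0 7 0 (.ref
  0 5 8 0 (.br 10 [] .done .leaf))))) .done) (.br 2 [] .done (.br 3 [] .done (.br 3 [6644] (.rep
  144 (.ref 0 0 6 0 (.br 7 [] .done .leaf)) .done) (.br 4 [] .done (.br 5 [] .done .leaf))))))))
  .done) (.br 2 [14663] (.rep 160 (.br 1 [] .done (.br 2 [14015] (.rep 258048 (.ref 0 0 4 0 (.br 4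
  [] .done (.br 5 [] .done (.br 6 [] .done (.br 7 [] .done .leaf))))) (.rep 14708736 (.ref 0 0 2 0
  (.ref 0 4 6 0 (.ref 0 2 6 0 (.ref 0 3 9 0 (.br 10 [] .done .leaf))))) .done)) (.br 3 [] .done
  (.br 2 [] .done (.br 3 [] .done (.br 4 [] .done (.br 5 [] .done .leaf))))))) .done) (.br 1
  [14014] (.rep 258048 (.ref 0 0 3 0 (.br 4 [8183] (.rep 144 (.ref 0 0 7 0 (.br 8 [] .done .leaf))
  .done) (.br 5 [] .done (.br 6 [] .done .leaf)))) (.rep 14708736 (.ref 0 0 2 0 (.ref 0 0 5 0 (.br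
  6 [] .done (.br 7 [] .done .leaf)))) .done)) (.br 2 [] .done (.br 2 [8102] (.rep 144 (.ref 0 0 5
  0 (.br 6 [] .done .leaf)) .done) (.br 3 [] .done (.br 4 [] .done .leaf))))))) (.rep 2392576
  (.ref 0 0 1 0 (.ref 1 3 0 0 (.br 2 [] .done .leaf))) (.rep 2656256 (.ref 0 0 1 0 (.ref 0 0 3 6
  (.ref 0 3 2 0 (.ref 0 6 0 0 (.br 5 [] .done .leaf))))) (.rep 7244288 (.br 1 [] .done (.ref 0 0 0
  3 .leaf)) (.rep 19173888 (.br 1 [13204] (.rep 38422528 (.br 1 [] .done (.br 3 [13205] (.rep 160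
  (.br 1 [] .done (.br 2 [15473] (.rep 74752 (.ref 0 2 4 0 (.ref 0 2 4 0 (.ref 0 3 7 0 (.ref 0 5 8
  0 (.ref 0 4 11 0 (.ref 0 3 12 0 .leaf)))))) .done) (.br 3 [] .done (.br 4 [] .done (.br 3 []
  .done (.br 4 [] .done (.br 5 [] .done (.br 6 [] .done .leaf)))))))) .done) (.br 1 [17660] (.rep
  74752 (.ref 0 2 3 0 (.ref 0 2 4 0 (.ref 0 0 8 0 (.ref 0 5 8 0 (.br 10 [] .done .leaf))))) .done)
  (.br 2 [] .done (.br 3 [] .done (.br 3 [13286] (.rep 48 (.ref 0 0 5 0 (.br 7 [] .done .leaf))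
  .done) (.br 4 [] .done (.br 5 [] .done .leaf)))))))) .done) (.br 2 [8911] (.rep 160 (.br 1 []
  .done (.br 2 [17660] (.rep 224256 (.ref 0 0 4 0 (.br 4 [] .done (.br 5 [] .done (.br 6 [] .done
  (.br 7 [] .done .leaf))))) (.rep 38347776 (.ref 0 0 2 0 (.ref 0 4 6 0 (.ref 0 2 6 0 (.ref 0 3 9
  0 (.br 10 [] .done .leaf))))) .done)) (.br 3 [] .done (.br 2 [] .done (.br 3 [] .done (.br 4 []
  .done (.br 5 [] .done .leaf))))))) .done) (.br 1 [15473] (.rep 224256 (.ref 0 0 3 0 (.br 4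
  [6724] (.rep 48 (.ref 0 0 6 0 (.br 8 [] .done .leaf)) .done) (.br 5 [] .done (.br 6 [] .done
  .leaf)))) (.rep 38347776 (.ref 0 0 2 0 (.ref 0 0 6 0 (.br 6 [] .done (.br 7 [] .done .leaf))))
  .done)) (.br 2 [] .done (.br 2 [11098] (.rep 48 (.ref 0 0 4 0 (.br 6 [] .done .leaf)) .done)
  (.br 3 [] .done (.br 4 [] .done .leaf))))))) (.rep 22156288 (.ref 0 0 2 0 (.br 1 [] .done (.br 1
  [] .done (.br 3 [13933] (.rep 42287616 (.br 1 [] .done (.br 0 [13286] (.rep 43008 (.ref 0 2 3 0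
  (.ref 0 2 4 0 (.ref 0 3 7 0 (.ref 0 2 9 0 (.ref 0 6 10 0 (.ref 0 3 12 0 .leaf)))))) .done) (.br
  1 [] .done (.br 4 [] .done (.br 3 [] .done (.br 4 [] .done (.br 5 [] .done (.br 6 [] .done
  .leaf)))))))) .done) (.br 0 [13286] (.rep 125440 (.ref 0 0 4 0 (.br 4 [] .done (.br 5 [] .done
  (.br 6 [] .done (.br 7 [] .done .leaf))))) (.rep 42248192 (.ref 0 0 2 0 (.ref 0 4 6 0 (.ref 0 2
  6 0 (.ref 0 3 9 0 (.br 10 [] .done .leaf))))) .done)) (.br 3 [] .done (.br 2 [] .done (.br 3 []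
  .done (.br 4 [] .done (.br 5 [] .done .leaf)))))))))) .done)))))))) (.br 1 [10369] (.rep 160
  (.br 1 [] .done (.br 2 [17660] (.rep 261632 (.br 2 [11099] (.rep 16 (.ref 0 4 5 0 (.ref 0 2 6 0
  (.ref 0 3 8 0 .leaf))) .done) (.br 3 [] .done (.br 4 [] .done (.br 5 [] .done .leaf)))) .done)
  (.br 1 [8912] (.rep 16 (.ref 0 3 4 0 (.ref 0 2 5 0 (.ref 0 3 7 0 .leaf))) .done) (.br 2 [] .done
  (.br 3 [] .done (.br 4 [] .done .leaf)))))) .done) (.br 1 [13933] (.rep 261632 (.br 2 [8183]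
  (.rep 48 (.ref 0 0 4 0 (.br 6 [] .done .leaf)) (.rep 144 (.ref 0 0 5 0 (.br 6 [] .done .leaf))
  .done)) (.br 3 [] .done (.br 4 [] .done .leaf))) .done) (.br 1 [9641] (.rep 48 (.ref 0 0 3 0
  (.br 5 [] .done .leaf)) (.rep 144 (.ref 0 0 4 0 (.br 5 [] .done .leaf)) .done)) (.br 2 [] .done
  (.br 3 [] .done .leaf))))))) (.rep 232 (.ref 0 0 1 0 (.br 1 [] .done .leaf)) (.rep 504 (.br 1
  [8831, 19090, 7427] (.rep 1838592 (.br 1 [13987] (.rep 14909440 (.br 1 [] .done (.br 0 [14743]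
  (.rep 28672 (.ref 0 2 3 0 (.ref 0 2 4 0 (.ref 0 3 6 0 (.br 8 [6671] (.rep 2 .leaf .done)
  .leaf)))) .done) (.br 1 [] .done (.br 2 [] .done (.br 3 [] .done (.br 4 [14015] (.rep 2 .leaf
  .done) .leaf)))))) .done) (.br 0 [14069] (.rep 258048 (.ref 0 0 2 0 (.br 4 [] .done (.br 5
  [6644] (.rep 2 .leaf .done) .leaf))) (.rep 14708736 (.ref 0 0 3 0 (.br 4 [] .done (.br 5 [13232]
  (.rep 2 .leaf .done) .leaf))) .done)) (.br 1 [] .done (.br 2 [] .done (.br 3 [6698] (.rep 2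
  .leaf .done) .leaf))))) (.rep 19437568 (.ref 0 0 1 0 (.br 1 [] .done (.br 1 [] .done (.br 0
  [13286] (.rep 148480 (.ref 0 0 3 0 (.ref 0 0 4 0 (.ref 0 3 7 0 (.br 8 [6724] (.rep 56 .leaf
  .done) .leaf)))) .done) (.br 1 [] .done (.br 2 [] .done (.br 3 [6724] (.rep 56 (.br 5 [] .done
  .leaf) .done) (.br 4 [] .done .leaf)))))))) .done)) (.br 0 [15419] (.rep 261632 (.br 2 [11098]
  (.rep 56 (.br 4 [8831] (.rep 2 .leaf .done) .leaf) .done) (.br 3 [12530] (.rep 2 .leaf .done)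
  .leaf)) .done) (.br 1 [13286] (.rep 56 (.br 3 [6671] (.rep 2 .leaf .done) .leaf) .done) (.br 2
  [13232] (.rep 2 .leaf .done) .leaf)))) (.rep 262728 (.ref 0 0 1 0 (.ref 0 1 0 3 (.br 2 [] .done
  (.br 1 [] .done (.br 2 [] .done (.br 0 [13286] (.rep 525456 (.ref 0 0 2 0 (.ref 0 0 6 0 (.br 6
  [] .done (.br 7 [] .done .leaf)))) (.rep 525600 (.br 2 [6724] (.rep 42082304 (.br 4 [] .done
  (.br 5 [] .done (.br 6 [] .done .leaf))) .done) (.br 3 [] .done (.br 4 [] .done (.br 5 [] .done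
  .leaf)))) .done)) (.br 1 [6724] (.rep 42082304 (.br 3 [] .done (.br 4 [] .done (.br 5 [] .done
  .leaf))) .done) (.br 2 [] .done (.br 3 [] .done (.br 4 [] .done .leaf)))))))))) (.rep 789224
  (.ref 0 0 1 2 (.br 1 [] .done .leaf)) (.rep 1839096 (.br 1 [] .done (.br 0 [] .done (.br 1 []
  .done (.br 2 [14771] (.rep 2 .leaf .done) .leaf)))) (.rep 2392648 (.ref 0 0 1 0 (.ref 0 1 0 1
  (.br 2 [] .done .leaf))) (.rep 2392736 (.ref 0 0 1 0 (.ref 0 0 1 0 (.br 2 [] .done (.br 2 []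
  .done (.br 2 [] .done (.br 0 [13286] (.rep 589832 (.ref 0 0 3 0 (.ref 0 0 5 0 (.ref 0 3 7 0 (.br
  8 [6994] (.rep 28672 .leaf .done) .leaf)))) .done) (.br 1 [5617] (.rep 28672 (.br 3 [] .done
  (.br 4 [] .done (.br 5 [] .done .leaf))) .done) (.br 2 [] .done (.br 3 [] .done (.br 4 [] .done
  .leaf)))))))))) (.rep 7244720 (.br 1 [] .done (.ref 0 0 0 3 .leaf)) (.rep 19173960 (.br 1 []
  .done (.br 0 [17660, 17983] (.rep 38347920 (.ref 0 0 3 0 (.br 4 [] .done .leaf)) (.rep 38873376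
  (.br 2 [] .done (.br 3 [] .done .leaf)) .done)) (.br 1 [] .done (.br 2 [] .done .leaf))))
  .done)))))))))) (.br 0 [] .done (.br 1 [9560] (.rep 2 .leaf .done) .leaf))) (.rep 78 (.ref 0 0 1
  0 (.br 1 [] .done (.br 1 [19014, 13933, 15391] (.rep 7244288 (.br 1 [] .done (.ref 0 0 0 3
  .leaf)) (.rep 20487168 (.br 1 [] .done (.ref 0 0 0 3 .leaf)) .done)) (.br 0 [14744] (.rep 261632
  (.br 2 [] .done (.br 3 [] .done .leaf)) .done) (.br 1 [] .done (.br 2 [] .done .leaf)))))) (.rep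
  238 (.ref 0 0 1 0 (.br 1 [] .done .leaf)) (.rep 510 (.br 1 [] .done (.br 0 [18416] (.rep 261632
  (.br 2 [] .done .leaf) .done) (.br 1 [] .done .leaf))) (.rep 262734 (.ref 0 0 1 0 (.br 0 []
  .done (.br 1 [] .done (.br 0 [] .done (.br 1 [1548] (.rep 42082304 (.br 3 [] .done .leaf) .done)
  (.br 2 [] .done .leaf)))))) (.rep 789224 (.ref 0 0 1 2 (.br 1 [] .done .leaf)) (.rep 1839096
  (.br 1 [] .done (.ref 0 0 0 7 .leaf)) (.rep 2919150 (.br 1 [] .done (.ref 0 0 0 5 .leaf))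
  .done)))))))) (.br 0 [11183, 16014, 15796, 13479, 17755, 11326, 11074, 11636, 8156, 8155, 11725]
  (.rep 3110002 .leaf .done) .leaf))

theorem ctxOk2 : CtxOk 2 ctx2 where
  p_eq := rfl
  m0_eq := by decide +kernel
  m1_eq := by decide +kernel
  m2_eq := by decide +kernel

theorem ctxOk3 : CtxOk 3 ctx3 where
  p_eq := rfl
  m0_eq := by decide +kernel
  m1_eq := by decide +kernel
  m2_eq := by decide +kernel

set_option maxRecDepth 100000 in
theorem run2 : chk ctx2 cert2 (start 2 1) = true := by decide +kernel

set_option maxRecDepth 100000 in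
theorem run3 : chk ctx3 cert3 (start 3 2) = true := by decide +kernel

theorem card_pair2 (x : V 2) (_ : x ≠ 0) : 1 ≤ #({x, -x} : Finset (V 2)) :=
  card_pos.2 ⟨x, by simp⟩

theorem card_pair3 : ∀ x : V 3, x ≠ 0 → 2 ≤ #({x, -x} : Finset (V 3)) := by decide +kernel

/-- Matched colourings of `C_p × C_p × C_p` differ by a linear map. -/
theorem matched_solve {p : ℕ} [hp : Small p] {K : Type*} [DecidableEq K] [Fintype K] {ν : K → K}
    {a b : V p → K} (hm : Matched ν a b) : ∃ f : V p ≃+ V p, ∀ x, b (f x) = a x := by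
  rcases hp.out with rfl | rfl
  · exact (chk_sound ctxOk2 cert2).1 _ run2 a b hm (sem_start hm 1 card_pair2)
  · exact (chk_sound ctxOk3 cert3).1 _ run3 a b hm (sem_start hm 2 card_pair3)

end

/-! ### Reduction of the target group to `C_p × C_p × C_p` -/

section

open Finset

/-- The analogue of `Matched` for a target colouring on an arbitrary finite abelian group `W`. -/
structure MatchedTo {p : ℕ} [Small p] {K W : Type*} [DecidableEq K] [AddCommGroup W] [Fintype W]
    (ν : K → K) (a : V p → K) (b : W → K) : Prop where
  inv : ∀ k, ν (ν k) = k
  zero_a : ∀ x, a x = a 0 ↔ x = 0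
  zero_b : ∀ x, b x = b 0 ↔ x = 0
  zero : a 0 = b 0
  neg_a : ∀ x, a (-x) = ν (a x)
  neg_b : ∀ x, b (-x) = ν (b x)
  surj_a : Function.Surjective a
  surj_b : Function.Surjective b
  conv : ∀ i j z w, a z = b w →
    #{x | a x = i ∧ a (z - x) = j} = #{x | b x = i ∧ b (w - x) = j}

section Powers

variable {K W : Type*} [DecidableEq K] [AddCommGroup W] [Fintype W]

/-- The sum, in the group ring over `ZMod m`, of the elements of colour `i`. -/
noncomputable def clsSum (m : ℕ) (b : W → K) (i : K) : AddMonoidAlgebra (ZMod m) W :=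
  ∑ x with b x = i, AddMonoidAlgebra.single x 1

theorem clsSum_apply [DecidableEq W] (m : ℕ) (b : W → K) (i : K) (w : W) :
    (clsSum m b i).coeff w = if b w = i then 1 else 0 := by
  rw [clsSum, AddMonoidAlgebra.coeff_sum, Finsupp.finsetSum_apply]
  simp only [AddMonoidAlgebra.coeff_single, Finsupp.single_apply]
  rw [Finset.sum_ite_eq']
  simp

instance expChar_monoidAlgebra (m : ℕ) [Fact m.Prime] : ExpChar (AddMonoidAlgebra (ZMod m) W) m :=
  have := charP_of_injective_algebraMap
    (algebraMap (ZMod m) (AddMonoidAlgebra (ZMod m) W)).injective m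
  .prime Fact.out

/-- Multiplication by a class sum, in terms of the convolution of functions. -/
theorem clsSum_mul_apply (m : ℕ) (b : W → K) (i : K) (u : AddMonoidAlgebra (ZMod m) W) (w : W) :
    (clsSum m b i * u).coeff w = ∑ x with b x = i, u.coeff (w - x) := by
  rw [clsSum, Finset.sum_mul, AddMonoidAlgebra.coeff_sum, Finsupp.finsetSum_apply]
  refine Finset.sum_congr rfl fun x _ => ?_
  rw [AddMonoidAlgebra.coeff_single_mul_apply, one_mul, neg_add_eq_sub]

/-- If the coefficients of `u` are given by a function `g` of the colour, those of the product
with a class sum are given by the structure constants. -/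
theorem clsSum_mul_eq [Fintype K] (m : ℕ) (b : W → K) (i : K) (u : AddMonoidAlgebra (ZMod m) W)
    (g : K → ZMod m) (hg : ∀ w, u.coeff w = g (b w)) (w : W) :
    (clsSum m b i * u).coeff w = ∑ j, (#{x | b x = i ∧ b (w - x) = j} : ℕ) * g j := by
  rw [clsSum_mul_apply, ← Finset.sum_fiberwise_of_maps_to (t := univ) (g := fun x => b (w - x))
    (fun _ _ => mem_univ _)]
  refine Finset.sum_congr rfl fun j _ => ?_
  rw [Finset.sum_congr rfl (g := fun _ => g j) (fun x hx => by
    rw [hg, (mem_filter.1 hx).2]), Finset.sum_const, Finset.filter_filter, nsmul_eq_mul]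

end Powers

namespace MatchedTo

variable {p : ℕ} [hp : Small p] {K W : Type*} [DecidableEq K] [Fintype K] [AddCommGroup W]
  [Fintype W] {ν : K → K} {a : V p → K} {b : W → K}

theorem card_eq (h : MatchedTo ν a b) : Fintype.card W = p ^ 3 := by
  have h1 : Fintype.card W = Fintype.card (V p) := by
    rw [← Finset.card_univ, ← Finset.card_univ,
      Finset.card_eq_sum_card_fiberwise (s := (univ : Finset W)) (t := univ)
        (f := fun x => (b x, b (0 - x))) (fun _ _ => by simp),
      Finset.card_eq_sum_card_fiberwise (s := (univ : Finset (V p))) (t := univ)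
        (f := fun x => (a x, a (0 - x))) (fun _ _ => by simp)]
    refine Finset.sum_congr rfl fun k _ => ?_
    have := h.conv k.1 k.2 0 0 h.zero
    simp only [Prod.ext_iff]
    exact this.symm
  rw [h1, Fintype.card_prod, Fintype.card_prod, ZMod.card]
  ring

theorem card_cls (h : MatchedTo ν a b) (k : K) : #{x | a x = k} = #{x | b x = k} := by
  have := h.conv k (ν k) 0 0 h.zero
  simp only [zero_sub, h.neg_a, h.neg_b] at this
  convert this using 2 <;>
  · ext x
    simp only [mem_filter, mem_univ, true_and]
    exact ⟨fun e => ⟨e, by rw [e]⟩, fun e => e.1⟩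

/-- Corresponding powers of corresponding class sums have the same coefficients at elements of the
same colour. -/
theorem pow_apply (h : MatchedTo ν a b) (m : ℕ) (i : K) (n : ℕ) : ∃ g : K → ZMod m,
    (∀ z, (clsSum m a i ^ (n + 1)).coeff z = g (a z)) ∧ ∀ w, (clsSum m b i ^ (n + 1)).coeff w = g (b w) := by
  classical
  induction n with
  | zero =>
    refine ⟨fun k => if k = i then 1 else 0, fun z => ?_, fun w => ?_⟩ <;>
    · rw [zero_add, pow_one, clsSum_apply]
  | succ n ih =>
    obtain ⟨g, ha, hb⟩ := ih
    have hw : ∀ z w, a z = b w →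
        (clsSum m a i ^ (n + 1 + 1)).coeff z = (clsSum m b i ^ (n + 1 + 1)).coeff w := by
      intro z w e
      rw [pow_succ' _ (n + 1), pow_succ' _ (n + 1), clsSum_mul_eq m a i _ g ha, clsSum_mul_eq m b i _ g hb]
      refine Finset.sum_congr rfl fun j _ => ?_
      rw [h.conv i j z w e]
    choose s hs using h.surj_a
    choose t ht using h.surj_b
    refine ⟨fun k => (clsSum m a i ^ (n + 1 + 1)).coeff (s k), fun z => ?_, fun w => ?_⟩
    · exact (hw z (t (a z)) (ht _).symm).trans (hw (s (a z)) (t (a z)) (by rw [hs, ht])).symm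
    · exact (hw _ _ (hs _)).symm

/-- Colours are invariant under multiplication by primes congruent to `1` modulo `p`. This is
Schur's theorem on multipliers, applied to both sides: the `m`-th power of a class sum modulo a
prime `m` is the sum of the `m`-th multiples of its elements. -/
theorem mul_prime (h : MatchedTo ν a b) {m : ℕ} (hm : m.Prime) (h1 : (m : ZMod p) = 1) (y : W) :
    b (m • y) = b y := by
  classical
  have : Fact m.Prime := ⟨hm⟩
  obtain ⟨n, rfl⟩ : ∃ n, m = n + 1 := ⟨m - 1, by have := hm.pos; omega⟩
  set m := n + 1 with hmdef
  obtain ⟨g, ha, hb⟩ := h.pow_apply m (b y) n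
  rw [← hmdef] at ha hb
  have hsmul : ∀ x : V p, m • x = x := by
    intro x
    ext <;> simp [h1]
  have hpa : clsSum m a (b y) ^ m = clsSum m a (b y) := by
    conv_lhs => rw [clsSum]
    rw [sum_pow_char, clsSum]
    refine Finset.sum_congr rfl fun x _ => ?_
    rw [AddMonoidAlgebra.single_pow, one_pow, hsmul]
  have hcop : (Fintype.card W).Coprime m := by
    rw [h.card_eq]
    apply Nat.Coprime.pow_left
    rw [Nat.coprime_comm, ← ZMod.isUnit_iff_coprime, h1]
    exact isUnit_one
  have hinj : Function.Injective fun x : W => m • x := by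
    rw [← Nat.card_eq_fintype_card] at hcop
    exact (nsmulCoprime hcop).injective
  have hpb : (clsSum m b (b y) ^ m).coeff (m • y) = 1 := by
    conv_lhs => rw [clsSum]
    rw [sum_pow_char, AddMonoidAlgebra.coeff_sum, Finsupp.finsetSum_apply, Finset.sum_eq_single y]
    · rw [AddMonoidAlgebra.single_pow, one_pow, AddMonoidAlgebra.coeff_single, Finsupp.single_apply, if_pos rfl]
    · intro x _ hx
      rw [AddMonoidAlgebra.single_pow, one_pow, AddMonoidAlgebra.coeff_single, Finsupp.single_apply,
        if_neg fun e => hx (hinj e)]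
    · intro hy
      exact absurd (by simp) hy
  obtain ⟨z, hz⟩ := h.surj_a (b (m • y))
  have := ha z
  rw [hz, ← hb, hpb, hpa, clsSum_apply, hz] at this
  by_contra hne
  rw [if_neg hne] at this
  exact zero_ne_one this

end MatchedTo

end

/-! ### Abelian groups of order `p ^ 3` -/

section

open Finset

/-- The number `1` and primes congruent to `1` modulo `p` that represent all units of
`ZMod (p ^ 3)` congruent to `1` modulo `p`. -/
def mults (p : ℕ) : List ℕ :=
  if p = 2 then [1, 3, 5, 7] else [1, 7, 13, 19, 31, 37, 43, 79, 103]

theorem mults_two : ∀ n ∈ mults 2, n = 1 ∨ n.Prime ∧ (n : ZMod 2) = 1 := by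
  simp only [mults]
  decide +kernel

theorem mults_three : ∀ n ∈ mults 3, n = 1 ∨ n.Prime ∧ (n : ZMod 3) = 1 := by
  simp only [mults]
  decide +kernel

theorem mults_spec {p : ℕ} [hp : Small p] {n : ℕ} (hn : n ∈ mults p) :
    n = 1 ∨ n.Prime ∧ (n : ZMod p) = 1 := by
  rcases hp.out with rfl | rfl
  exacts [mults_two n hn, mults_three n hn]

/-- A bijection of `W` onto `C_p × C_p × C_p` that preserves differences up to multipliers. -/
def Digital (p : ℕ) (W : Type*) [AddCommGroup W] : Prop :=
  ∃ F : W ≃ V p, ∀ x y, ∃ n ∈ mults p, F.symm (F y - F x) = n • (y - x)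

theorem Digital.congr {p : ℕ} {W W' : Type*} [AddCommGroup W] [AddCommGroup W'] (e : W ≃+ W')
    (h : Digital p W') : Digital p W := by
  obtain ⟨F, hF⟩ := h
  refine ⟨e.toEquiv.trans F, fun x y => ?_⟩
  obtain ⟨n, hn, h⟩ := hF (e x) (e y)
  refine ⟨n, hn, ?_⟩
  change e.symm (F.symm (F (e y) - F (e x))) = _
  rw [h, ← map_sub, ← map_nsmul, AddEquiv.symm_apply_apply]

theorem digital_self {p : ℕ} [hp : Small p] : Digital p (V p) :=
  ⟨Equiv.refl _, fun x y => ⟨1, by rcases hp.out with rfl | rfl <;> decide, by simp⟩⟩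

/-- The base-`p` digits of an element of `ZMod (p ^ 2) × ZMod p`. -/
def dig2 (p : ℕ) (x : ZMod (p ^ 2) × ZMod p) : V p := (x.1.val, (x.1.val / p : ℕ), x.2)

/-- The inverse of `dig2`. -/
def undig2 (p : ℕ) (v : V p) : ZMod (p ^ 2) × ZMod p := ((v.1.val + p * v.2.1.val : ℕ), v.2.2)

/-- The base-`p` digits of an element of `ZMod (p ^ 3)`. -/
def dig3 (p : ℕ) (x : ZMod (p ^ 3)) : V p := (x.val, (x.val / p : ℕ), (x.val / p ^ 2 : ℕ))

/-- The inverse of `dig3`. -/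
def undig3 (p : ℕ) (v : V p) : ZMod (p ^ 3) :=
  (v.1.val + p * v.2.1.val + p ^ 2 * v.2.2.val : ℕ)

theorem digital_two_one2 : Digital 2 (ZMod (2 ^ 2) × ZMod 2) :=
  ⟨⟨dig2 2, undig2 2, by decide +kernel, by decide +kernel⟩, by decide +kernel⟩

theorem digital_two_one3 : Digital 3 (ZMod (3 ^ 2) × ZMod 3) :=
  ⟨⟨dig2 3, undig2 3, by decide +kernel, by decide +kernel⟩, by decide +kernel⟩

theorem digital_three2 : Digital 2 (ZMod (2 ^ 3)) :=
  ⟨⟨dig3 2, undig3 2, by decide +kernel, by decide +kernel⟩, by decide +kernel⟩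

theorem digital_three3 : Digital 3 (ZMod (3 ^ 3)) :=
  ⟨⟨dig3 3, undig3 3, by decide +kernel, by decide +kernel⟩, by decide +kernel⟩

theorem digital_two_one {p : ℕ} [hp : Small p] : Digital p (ZMod (p ^ 2) × ZMod p) := by
  rcases hp.out with rfl | rfl
  exacts [digital_two_one2, digital_two_one3]

theorem digital_three {p : ℕ} [hp : Small p] : Digital p (ZMod (p ^ 3)) := by
  rcases hp.out with rfl | rfl
  exacts [digital_three2, digital_three3]

/-- An identification of cyclic groups of equal order. -/
def zmodCast {m n : ℕ} (h : m = n) : ZMod m ≃+ ZMod n := (ZMod.ringEquivCongr h).toAddEquiv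

/-- By the classification of finite abelian groups, every abelian group of order `p ^ 3` is
`C_{p³}`, `C_{p²} × C_p` or `C_p × C_p × C_p`. -/
theorem digital_of_card {p : ℕ} [hp : Small p] {W : Type*} [AddCommGroup W] [Finite W]
    (hW : Nat.card W = p ^ 3) : Digital p W := by
  obtain ⟨ι, _, n, hn, ⟨e⟩⟩ := AddCommGroup.equiv_directSum_zmod_of_finite' W
  have hpp : p.Prime := Fact.out
  classical
  have e1 : W ≃+ (∀ i, ZMod (n i)) := e.trans (DirectSum.addEquivProd _)
  have hprod : ∏ i, n i = p ^ 3 := by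
    rw [← hW, Nat.card_congr e1.toEquiv, Nat.card_pi]
    simp [Nat.card_zmod]
  have hdvd : ∀ i, ∃ k, n i = p ^ k := by
    intro i
    obtain ⟨k, -, hk⟩ := (Nat.dvd_prime_pow hpp).1 (hprod ▸ Finset.dvd_prod_of_mem n (mem_univ i))
    exact ⟨k, hk⟩
  choose k hk using hdvd
  have hk1 : ∀ i, 1 ≤ k i := by
    intro i
    by_contra h
    have h0 : k i = 0 := by omega
    have := hn i
    rw [hk, h0, pow_zero] at this
    omega
  have hsum : ∑ i, k i = 3 := by
    simp only [hk, Finset.prod_pow_eq_pow_sum] at hprod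
    exact Nat.pow_right_injective hpp.two_le hprod
  obtain rfl : n = fun i => p ^ k i := funext hk
  obtain ⟨N, ⟨eN⟩⟩ := Finite.exists_equiv_fin ι
  obtain ⟨g, hg⟩ : ∃ g : Fin N → ℕ, g = fun i => k (eN.symm i) := ⟨_, rfl⟩
  have hg1 : ∀ i, 1 ≤ g i := fun i => by rw [hg]; exact hk1 _
  have hgsum : ∑ i, g i = 3 := by rw [← hsum, hg]; exact Equiv.sum_comp eN.symm k
  have e2 : W ≃+ (∀ i : Fin N, ZMod (p ^ g i)) := by
    rw [hg]
    exact e1.trans (RingEquiv.piCongrLeft' (fun i => ZMod (p ^ k i)) eN).toAddEquiv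
  have hN : N ≤ 3 := by
    rw [← hgsum]
    calc N = ∑ _i : Fin N, 1 := by simp
      _ ≤ _ := Finset.sum_le_sum fun i _ => hg1 i
  clear hg e e1 hsum hprod hk hk1 hn
  interval_cases N
  · simp at hgsum
  · rw [Fin.sum_univ_one] at hgsum
    exact digital_three.congr ((e2.trans (RingEquiv.piUnique _).toAddEquiv).trans
      (zmodCast (congrArg (p ^ ·) hgsum)))
  · rw [Fin.sum_univ_two] at hgsum
    have e3 := e2.trans (RingEquiv.piFinTwo _).toAddEquiv
    have h0 := hg1 0
    have h1 := hg1 1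
    have hc : g 0 = 2 ∧ g 1 = 1 ∨ g 0 = 1 ∧ g 1 = 2 := by omega
    rcases hc with ⟨h0, h1⟩ | ⟨h0, h1⟩
    · exact digital_two_one.congr (e3.trans (AddEquiv.prodCongr
        (zmodCast (congrArg (p ^ ·) h0)) (zmodCast (by rw [h1, pow_one]))))
    · exact digital_two_one.congr ((e3.trans AddEquiv.prodComm).trans (AddEquiv.prodCongr
        (zmodCast (congrArg (p ^ ·) h1)) (zmodCast (by rw [h0, pow_one]))))
  · rw [Fin.sum_univ_three] at hgsum
    have h0 := hg1 0
    have h1 := hg1 1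
    have h2 := hg1 2
    have hc : ∀ i, p ^ g i = p := by
      intro i
      have : g i = 1 := by fin_cases i <;> simp <;> omega
      rw [this, pow_one]
    refine digital_self.congr (e2.trans (AddEquiv.mk'
      ⟨fun x => (zmodCast (hc 0) (x 0), zmodCast (hc 1) (x 1), zmodCast (hc 2) (x 2)),
        fun v => Fin.cons ((zmodCast (hc 0)).symm v.1) (Fin.cons ((zmodCast (hc 1)).symm v.2.1)
          (Fin.cons ((zmodCast (hc 2)).symm v.2.2) finZeroElim)), fun x => ?_, fun v => ?_⟩
      fun x y => ?_))
    · funext i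
      fin_cases i <;> exact AddEquiv.symm_apply_apply _ _
    · exact Prod.ext (AddEquiv.apply_symm_apply _ _) (Prod.ext (AddEquiv.apply_symm_apply _ _)
        (AddEquiv.apply_symm_apply _ _))
    · simp

section

variable {p : ℕ} [hp : Small p] {K W : Type*} [DecidableEq K] [Fintype K] [AddCommGroup W]
  [Fintype W] {ν : K → K} {a : V p → K} {b : W → K}

/-- Separability in terms of colourings. -/
theorem MatchedTo.exists_bij (h : MatchedTo ν a b) :
    ∃ f : V p → W, Function.Bijective f ∧ ∀ x y, b (f y - f x) = a (y - x) := by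
  obtain ⟨F, hF⟩ : Digital p W := digital_of_card (by rw [Nat.card_eq_fintype_card, h.card_eq])
  have hb : ∀ x y, b (F.symm (F y - F x)) = b (y - x) := by
    intro x y
    obtain ⟨n, hn, e⟩ := hF x y
    rw [e]
    rcases mults_spec hn with rfl | ⟨hn, h1⟩
    · rw [one_nsmul]
    · exact h.mul_prime hn h1 _
  have hF0 : F.symm 0 = 0 := by
    obtain ⟨n, hn, e⟩ := hF 0 0
    simpa using e
  have hm : Matched ν a (b ∘ F.symm) :=
    { inv := h.inv
      zero_a := h.zero_a
      zero_b := fun x => by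
        simp only [Function.comp, hF0, h.zero_b]
        rw [Equiv.symm_apply_eq, ← hF0, Equiv.apply_symm_apply]
      zero := by simp only [Function.comp, hF0, h.zero]
      neg_a := h.neg_a
      neg_b := fun x => by
        have := hb (F.symm x) 0
        rw [Equiv.apply_symm_apply, (F.symm_apply_eq.1 hF0).symm, zero_sub, zero_sub, h.neg_b]
          at this
        exact this
      surj := h.surj_a
      card := fun k => by
        rw [h.card_cls]
        exact card_bij' (fun x _ => F x) (fun x _ => F.symm x) (by simp) (by simp) (by simp)
          (by simp)
      conv := fun i j z w e => by
        rw [h.conv i j z (F.symm w) e]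
        refine card_bij' (fun x _ => F x) (fun x _ => F.symm x) ?_ ?_ (by simp) (by simp)
        · intro x hx
          have := hb x (F.symm w)
          rw [Equiv.apply_symm_apply] at this
          simpa [this] using hx
        · intro x hx
          have := hb (F.symm x) (F.symm w)
          rw [Equiv.apply_symm_apply, Equiv.apply_symm_apply] at this
          simpa [← this] using hx }
  obtain ⟨f, hf⟩ := matched_solve hm
  refine ⟨fun x => F.symm (f x), F.symm.bijective.comp f.bijective, fun x y => ?_⟩
  rw [← hb, Equiv.apply_symm_apply, Equiv.apply_symm_apply, ← map_sub]
  exact hf _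

end

end

/-! ### Translation of S-rings into colourings -/

section

open Finset SRingPaper

section

variable {G H : Type*} [Group G] [Finite G] [CommGroup H] [Finite H]

theorem structConst_eq_card {G : Type*} [Group G] (X Y : Set G) (z : G) :
    structConst X Y z = Nat.card {x : G // x ∈ X ∧ x⁻¹ * z ∈ Y} := by
  refine Nat.card_congr ⟨fun q => ⟨q.1.1, q.2.1, ?_⟩, fun x => ⟨(x.1, x.1⁻¹ * z), x.2.1, x.2.2, ?_⟩,
    fun q => ?_, fun x => rfl⟩
  · rcases q with ⟨⟨x, y⟩, hx, hy, rfl⟩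
    simpa using hy
  · exact mul_inv_cancel_left _ _
  · rcases q with ⟨⟨x, y⟩, hx, hy, rfl⟩
    simp

theorem structConst_ne_zero {G : Type*} [Group G] [Finite G] {X Y : Set G} {z : G} :
    structConst X Y z ≠ 0 ↔ ∃ x ∈ X, x⁻¹ * z ∈ Y := by
  rw [structConst_eq_card, Nat.card_ne_zero]
  exact ⟨fun ⟨⟨x⟩, _⟩ => ⟨x.1, x.2⟩, fun ⟨x, h⟩ => ⟨⟨⟨x, h⟩⟩, inferInstance⟩⟩

variable {A : SRing G} {B : SRing H} {φ : Set G → Set H}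

theorem map_one (h : IsAlgIso A B φ) : φ {1} = {1} := by
  obtain ⟨Z, hZ, e⟩ := h.bijOn.surjOn B.one_mem
  obtain ⟨z, hz⟩ := A.nonempty_mem Z hZ
  have h1 : structConst {1} Z z ≠ 0 := structConst_ne_zero.2 ⟨1, rfl, by simpa using hz⟩
  rw [h.structConst_eq _ A.one_mem _ hZ _ hZ z hz 1 (by rw [e]; rfl), structConst_ne_zero] at h1
  obtain ⟨x, hx, hx'⟩ := h1
  rw [e, mul_one, Set.mem_singleton_iff, inv_eq_one] at hx'
  subst hx'
  exact B.eq_of_mem _ (h.bijOn.mapsTo A.one_mem) _ B.one_mem 1 hx rfl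

theorem map_inv (h : IsAlgIso A B φ) {X : Set G} (hX : X ∈ A.parts) : φ X⁻¹ = (φ X)⁻¹ := by
  obtain ⟨x, hx⟩ := A.nonempty_mem X hX
  have h1 : structConst X X⁻¹ 1 ≠ 0 := structConst_ne_zero.2 ⟨x, hx, by simpa using hx⟩
  rw [h.structConst_eq _ hX _ (A.inv_mem X hX) _ A.one_mem 1 rfl 1 (by rw [map_one h]; rfl),
    structConst_ne_zero] at h1
  obtain ⟨y, hy, hy'⟩ := h1
  rw [mul_one] at hy'
  exact B.eq_of_mem _ (h.bijOn.mapsTo (A.inv_mem X hX)) _ (B.inv_mem _ (h.bijOn.mapsTo hX)) _ hy'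
    (by simpa using hy)

/-- The colour of an element: the basic set containing it. -/
theorem exists_colour (A : SRing G) : ∃ a : G → A.parts, ∀ g X, a g = X ↔ g ∈ X.1 := by
  choose a ha ha' using A.exists_mem
  exact ⟨fun g => ⟨a g, ha g⟩, fun g X => ⟨fun e => e ▸ ha' g,
    fun hg => Subtype.ext (A.eq_of_mem _ (ha g) _ X.2 g (ha' g) hg)⟩⟩

/-- The colour of an element of the target group: the preimage under the algebraic isomorphism of
the basic set containing it. -/
theorem exists_colour_map (h : IsAlgIso A B φ) :
    ∃ b : H → A.parts, ∀ g X, b g = X ↔ g ∈ φ X.1 := by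
  choose c hc hc' using B.exists_mem
  choose b hb hb' using fun g => h.bijOn.surjOn (hc g)
  refine ⟨fun g => ⟨b g, hb g⟩, fun g X => ⟨fun e => ?_, fun hg => Subtype.ext ?_⟩⟩
  · rw [← e, hb']; exact hc' g
  · exact h.bijOn.injOn (hb g) X.2 ((hb' g).trans
      (B.eq_of_mem _ (hc g) _ (h.bijOn.mapsTo X.2) g (hc' g) hg))

/-- An algebraic isomorphism is induced by a bijection, since the colourings of the two groups given by
the basic sets are matched. -/
theorem exists_inducing {p : ℕ} [Small p] (e : G ≃* Multiplicative (V p))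
    (h : IsAlgIso A B φ) : ∃ f : G → H, InducedBy A φ f := by
  classical
  have := Fintype.ofFinite A.parts
  have := Fintype.ofFinite (Additive H)
  obtain ⟨a, ha⟩ := exists_colour A
  obtain ⟨b, hb⟩ := exists_colour_map h
  let ν : A.parts → A.parts := fun X => ⟨X.1⁻¹, A.inv_mem _ X.2⟩
  let a' : V p → A.parts := fun v => a (e.symm (.ofAdd v))
  let b' : Additive H → A.parts := fun w => b w.toMul
  have ha1 : a 1 = ⟨{1}, A.one_mem⟩ := (ha _ _).2 rfl
  have hb1 : b 1 = ⟨{1}, A.one_mem⟩ := (hb _ _).2 (by rw [map_one h]; rfl)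
  have ha0 : a' 0 = ⟨{1}, A.one_mem⟩ := by simp only [a', ofAdd_zero, _root_.map_one, ha1]
  have hb0 : b' 0 = ⟨{1}, A.one_mem⟩ := by simp only [b', toMul_zero, hb1]
  have hm : MatchedTo ν a' b' :=
    { inv := fun X => Subtype.ext (inv_inv _)
      zero_a := fun x => by
        rw [ha0]
        simp only [a', ha, Set.mem_singleton_iff, EmbeddingLike.map_eq_one_iff, ofAdd_eq_one]
      zero_b := fun x => by
        rw [hb0]
        simp only [b', hb, map_one h, Set.mem_singleton_iff, toMul_eq_one]
      zero := by rw [ha0, hb0]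
      neg_a := fun x => by
        simp only [a', ν, ha, ofAdd_neg, _root_.map_inv, Set.inv_mem_inv]
        exact (ha _ _).1 rfl
      neg_b := fun x => by
        simp only [b', ν, hb, toMul_neg, map_inv h (b _).2, Set.inv_mem_inv]
        exact (hb _ _).1 rfl
      surj_a := fun X => by
        obtain ⟨x, hx⟩ := A.nonempty_mem _ X.2
        exact ⟨(e x).toAdd, by simpa [a', ha] using hx⟩
      surj_b := fun X => by
        obtain ⟨x, hx⟩ := B.nonempty_mem _ (h.bijOn.mapsTo X.2)
        exact ⟨.ofMul x, by simpa [b', hb] using hx⟩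
      conv := fun i j z w hzw => by
        have key := h.structConst_eq _ i.2 _ j.2 _ (a' z).2 (e.symm (.ofAdd z)) ((ha _ _).1 rfl)
          w.toMul (by rw [hzw]; exact (hb _ _).1 rfl)
        rw [structConst_eq_card, structConst_eq_card] at key
        rw [← Fintype.card_subtype, ← Fintype.card_subtype, ← Nat.card_eq_fintype_card,
          ← Nat.card_eq_fintype_card]
        convert key using 1
        · refine Nat.card_congr ((Multiplicative.ofAdd.trans e.symm.toEquiv).subtypeEquiv
            fun x => ?_)
          simp only [a', ha, ← neg_add_eq_sub, ofAdd_add, ofAdd_neg, map_mul, _root_.map_inv]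
          rfl
        · refine Nat.card_congr (Additive.toMul.subtypeEquiv fun x => ?_)
          simp only [b', hb, toMul_sub, div_eq_inv_mul] }
  obtain ⟨f, hf, hfa⟩ := hm.exists_bij
  have hcol : ∀ x y : G, b ((f (e y).toAdd).toMul * (f (e x).toAdd).toMul⁻¹) = a (y * x⁻¹) := by
    intro x y
    have := hfa (e x).toAdd (e y).toAdd
    simpa [a', b', div_eq_mul_inv, ← toAdd_div] using this
  have hbij : Function.Bijective fun g => (f (e g).toAdd).toMul := Additive.toMul.bijective.comp
    (hf.comp (Multiplicative.toAdd.bijective.comp e.bijective))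
  have hsurj := hbij.surjective
  refine ⟨fun g => (f (e g).toAdd).toMul, hbij, fun X hX => ?_⟩
  have hiff : ∀ x y : G, y * x⁻¹ ∈ X ↔ (f (e y).toAdd).toMul * (f (e x).toAdd).toMul⁻¹ ∈ φ X := by
    intro x y
    rw [← ha _ ⟨X, hX⟩, ← hb _ ⟨X, hX⟩, hcol]
  ext ⟨u, v⟩
  constructor
  · rintro ⟨⟨x, y⟩, ⟨t, ht, hy⟩, e⟩
    obtain rfl : y = t * x := hy
    simp only [Prod.mk.injEq] at e
    obtain ⟨rfl, rfl⟩ := e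
    exact ⟨_, (hiff x (t * x)).1 (by simpa using ht), by simp⟩
  · rintro ⟨t, ht, e⟩
    obtain ⟨x, rfl⟩ := hsurj u
    obtain ⟨y, rfl⟩ := hsurj v
    refine ⟨(x, y), ⟨y * x⁻¹, (hiff x y).2 ?_, by simp⟩, rfl⟩
    simp only at e
    rwa [e, mul_inv_cancel_right]

end

end

end ESep

open SRingPaper in
/-- for `p ∈ {2,3}`, every S-ring over the elementary abelian group
`C_p × C_p × C_p` is separable with respect to the class of finite abelian groups. -/
theorem elementary_abelian_rank_three_separable
    (p : ℕ) (hp : p = 2 ∨ p = 3)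
    (G : Type*) [Group G] [Finite G]
    (hG : Nonempty (G ≃* Multiplicative (ZMod p × ZMod p × ZMod p)))
    (A : SRing G) : SepAbelian A := by
  intro H _ _ B φ h
  obtain ⟨e⟩ := hG
  have : ESep.Small p := ⟨hp⟩
  exact ESep.exists_inducing e h
end

section
/- If a finite group G is separable with respect to the class 𝒦_A of finite abelian groups and H is a normal subgroup of G, then H is separable with respect to 𝒦_A. -/
/-!
Let `φ` be an algebraic isomorphism from an S-ring `B` over `H ≤ G` to an S-ring `B'` over an
abelian group `H'`. The idea is to extend both S-rings by a single additional basic set, the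
complement of the subgroup: `G` receives the basic sets of `B` together with `G \ H`, and
`G' = H' × ℤ/m`, where `m = |G : H|`, receives the basic sets of `B'` together with `G' \ H'`
(this is the wreath product with the S-ring of rank at most two). All structure constants involving
the complement depend only on `|G|`, `|H|` and the sizes of the basic sets (`extRel_structConst`).
An algebraic isomorphism preserves the sizes of the basic sets (`IsAlgIso.ncard_eq`), hence the
order of the group, so `φ` extends to an algebraic isomorphism of the extensions
(`extMap_isAlgIso`).

By separability of `G`, the extension of `φ` is induced by a bijection `f : G → G'`. The relations
`R(X)` are invariant under right translations, so `h ↦ f(h) f(1)⁻¹` maps `H` to `H'` and induces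
`φ` (`inducedBy_of_ext`).

The extension is carried out along an injective homomorphism `ι : H →* G` rather than for a literal
subgroup; this covers `H ≤ G` and `H' → H' × ℤ/m` uniformly, and it allows `G'` to be placed
in whichever universe the hypothesis on `G` quantifies over.
-/

open scoped Pointwise

namespace SRingPaper

universe u₁ u₂ u₃ u₄

/-! ### Structure constants relative to a subgroup -/

section StructConst

variable {H : Type u₁} {G : Type u₂} [Group H] [Group G]

lemma structConst_eq_ncard (X Y : Set G) (z : G) :
    structConst X Y z = {x : G | x ∈ X ∧ x⁻¹ * z ∈ Y}.ncard := by
  rw [← Nat.card_coe_set_eq]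
  refine Nat.card_congr
    { toFun := fun p => ⟨p.1.1, p.2.1, ?_⟩
      invFun := fun x => ⟨(x.1, x.1⁻¹ * z), x.2.1, x.2.2, by simp⟩
      left_inv := ?_
      right_inv := fun x => rfl }
  · obtain ⟨⟨a, b⟩, ha, hb, rfl⟩ := p
    simpa using hb
  · rintro ⟨⟨a, b⟩, ha, hb, rfl⟩
    simp

lemma structConst_one (X Y : Set G) : structConst X Y 1 = (X ∩ Y⁻¹).ncard := by
  rw [structConst_eq_ncard]
  simp [Set.inter_def]

lemma structConst_image {ι : H →* G} (hι : Function.Injective ι) (X Y : Set H) (z : H) :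
    structConst (ι '' X) (ι '' Y) (ι z) = structConst X Y z := by
  rw [structConst_eq_ncard, structConst_eq_ncard, ← Set.ncard_image_of_injective _ hι]
  congr 1
  ext g
  constructor
  · rintro ⟨⟨x, hx, rfl⟩, y, hy, hxy⟩
    refine ⟨x, ⟨hx, ?_⟩, rfl⟩
    rw [← map_inv, ← map_mul] at hxy
    rwa [← hι hxy]
  · rintro ⟨x, ⟨hx, hy⟩, rfl⟩
    exact ⟨⟨x, hx, rfl⟩, _, hy, by simp⟩

lemma structConst_image_image_compl (ι : H →* G) (X Y : Set H) {g : G}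
    (hg : g ∈ (Set.range ι)ᶜ) : structConst (ι '' X) (ι '' Y) g = 0 := by
  rw [structConst_eq_ncard]
  convert Set.ncard_empty G
  ext a
  simp only [Set.mem_ofPred_eq, Set.mem_empty_iff_false, iff_false]
  rintro ⟨⟨x, hx, rfl⟩, y, hy, hxy⟩
  exact hg ⟨x * y, by simp [hxy]⟩

lemma structConst_image_compl (ι : H →* G) (X : Set H) (z : H) :
    structConst (ι '' X) (Set.range ι)ᶜ (ι z) = 0 := by
  rw [structConst_eq_ncard]
  convert Set.ncard_empty G
  ext a
  simp only [Set.mem_ofPred_eq, Set.mem_empty_iff_false, iff_false]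
  rintro ⟨⟨x, hx, rfl⟩, h⟩
  exact h ⟨x⁻¹ * z, by simp⟩

lemma structConst_compl_image (ι : H →* G) (X : Set H) (z : H) :
    structConst (Set.range ι)ᶜ (ι '' X) (ι z) = 0 := by
  rw [structConst_eq_ncard]
  convert Set.ncard_empty G
  ext a
  simp only [Set.mem_ofPred_eq, Set.mem_empty_iff_false, iff_false]
  rintro ⟨ha, y, hy, hay⟩
  refine ha ⟨z * y⁻¹, ?_⟩
  simp [hay]

lemma structConst_image_compl_compl {ι : H →* G} (hι : Function.Injective ι) (X : Set H) {g : G}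
    (hg : g ∈ (Set.range ι)ᶜ) : structConst (ι '' X) (Set.range ι)ᶜ g = X.ncard := by
  rw [structConst_eq_ncard, ← Set.ncard_image_of_injective X hι]
  congr 1
  ext a
  constructor
  · exact fun h => h.1
  · rintro ⟨x, hx, rfl⟩
    refine ⟨⟨x, hx, rfl⟩, ?_⟩
    rintro ⟨y, hy⟩
    exact hg ⟨x * y, by simp [hy]⟩

lemma structConst_compl_image_compl {ι : H →* G} (hι : Function.Injective ι) (X : Set H) {g : G}
    (hg : g ∈ (Set.range ι)ᶜ) : structConst (Set.range ι)ᶜ (ι '' X) g = X.ncard := by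
  have hinj : Function.Injective (fun x : H => g * (ι x)⁻¹) := by
    intro x y hxy
    simpa [hι.eq_iff] using hxy
  rw [structConst_eq_ncard, ← Set.ncard_image_of_injective X hinj]
  congr 1
  ext a
  constructor
  · rintro ⟨-, x, hx, hxa⟩
    exact ⟨x, hx, by simp [hxa]⟩
  · rintro ⟨x, hx, rfl⟩
    refine ⟨?_, x, hx, by simp⟩
    rintro ⟨y, hy⟩
    exact hg ⟨y * x, by simp [hy]⟩

lemma ncard_range_of_injective {ι : H →* G} (hι : Function.Injective ι) :
    (Set.range ι).ncard = Nat.card H := by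
  rw [← Set.image_univ, Set.ncard_image_of_injective _ hι, Set.ncard_univ]

variable [Finite G]

lemma structConst_compl_compl {ι : H →* G} (hι : Function.Injective ι) (z : H) :
    structConst (Set.range ι)ᶜ (Set.range ι)ᶜ (ι z) = Nat.card G - Nat.card H := by
  rw [structConst_eq_ncard, ← ncard_range_of_injective hι, ← Set.ncard_compl]
  congr 1
  ext a
  constructor
  · exact fun h => h.1
  · intro ha
    refine ⟨ha, ?_⟩
    rintro ⟨y, hy⟩
    exact ha ⟨z * y⁻¹, by simp [hy]⟩

/-- For `g ∉ H` the product `x * y = g` with `x, y ∉ H` forces exactly `x ∉ H ∪ gH`,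
and the cosets `H` and `gH` are disjoint. -/
lemma structConst_compl_compl_compl {ι : H →* G} (hι : Function.Injective ι) {g : G}
    (hg : g ∈ (Set.range ι)ᶜ) :
    structConst (Set.range ι)ᶜ (Set.range ι)ᶜ g = Nat.card G - (Nat.card H + Nat.card H) := by
  have hinj : Function.Injective (fun x : H => g * ι x) := by
    intro x y hxy
    simpa [hι.eq_iff] using hxy
  have hcoset : (Set.range fun x : H => g * ι x).ncard = Nat.card H := by
    rw [← Set.image_univ, Set.ncard_image_of_injective _ hinj, Set.ncard_univ]
  have hdisj : Disjoint (Set.range ι) (Set.range fun x : H => g * ι x) := by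
    rw [Set.disjoint_left]
    rintro _ ⟨x, rfl⟩ ⟨y, hy⟩
    refine hg ⟨x * y⁻¹, ?_⟩
    simp [← hy]
  have hunion := Set.ncard_union_eq hdisj
  rw [ncard_range_of_injective hι, hcoset] at hunion
  rw [structConst_eq_ncard, ← hunion, ← Set.ncard_compl]
  congr 1
  ext a
  rw [Set.compl_union]
  refine and_congr_right fun _ => not_congr ⟨?_, ?_⟩
  · rintro ⟨y, hy⟩
    exact ⟨y⁻¹, by simp [hy]⟩
  · rintro ⟨y, rfl⟩
    exact ⟨y⁻¹, by simp⟩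

end StructConst

/-! ### Algebraic isomorphisms preserve cardinalities -/

section Card

variable {H : Type u₁} {H' : Type u₂} [Group H] [Finite H] [Group H'] [Finite H']

variable {B : SRing H} {B' : SRing H'} {φ : Set H → Set H'}

lemma IsAlgIso.map_one (hφ : IsAlgIso B B' φ) : φ {1} = {1} := by
  obtain ⟨W, hW, hW1⟩ := hφ.bijOn.surjOn B'.one_mem
  have hE := hφ.bijOn.mapsTo B.one_mem
  obtain ⟨e, he⟩ := B'.nonempty_mem _ hE
  have h := hφ.structConst_eq _ B.one_mem _ hW _ B.one_mem 1 rfl e he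
  -- The right-hand side is nonzero because `e = e * 1`; so the left-hand side forces `1 ∈ W`.
  rw [structConst_one, structConst_eq_ncard, hW1] at h
  have hpos : 0 < {x : H' | x ∈ φ {1} ∧ x⁻¹ * e ∈ ({1} : Set H')}.ncard :=
    (Set.ncard_pos).2 ⟨e, he, by simp⟩
  rw [← h, Set.ncard_pos] at hpos
  obtain ⟨x, hx, hxW⟩ := hpos
  rw [Set.mem_singleton_iff] at hx
  subst hx
  have : W = {1} := B.eq_of_mem _ hW _ B.one_mem 1 (by simpa using hxW) rfl
  rw [← this, hW1]

/-- The size of a basic set `X` is the structure constant of `X` and `X⁻¹` at `1`. -/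
lemma IsAlgIso.ncard_eq (hφ : IsAlgIso B B' φ) {X : Set H} (hX : X ∈ B.parts) :
    X.ncard = (φ X).ncard := by
  have hXi := B.inv_mem X hX
  have h := hφ.structConst_eq X hX _ hXi _ B.one_mem 1 rfl 1 (by rw [hφ.map_one]; rfl)
  rw [structConst_one, structConst_one, inv_inv, Set.inter_self] at h
  have hpos : 0 < X.ncard := (Set.ncard_pos).2 (B.nonempty_mem X hX)
  rw [h, Set.ncard_pos] at hpos
  obtain ⟨y, hy, hy'⟩ := hpos
  have := B'.eq_of_mem _ (hφ.bijOn.mapsTo hX) _ (B'.inv_mem _ (hφ.bijOn.mapsTo hXi)) y hy hy'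
  rw [h, ← this, Set.inter_self]

/-- A group is the disjoint union of the basic sets of an S-ring over it. -/
noncomputable def SRing.sigmaEquiv (B : SRing H) : (Σ X : B.parts, (X.1 : Set H)) ≃ H :=
  Equiv.ofBijective (fun p => p.2.1) (by
    constructor
    · rintro ⟨⟨X, hX⟩, x, hx⟩ ⟨⟨Y, hY⟩, y, hy⟩ hxy
      obtain rfl : x = y := hxy
      obtain rfl := B.eq_of_mem X hX Y hY x hx hy
      rfl
    · intro g
      obtain ⟨X, hX, hg⟩ := B.exists_mem g
      exact ⟨⟨⟨X, hX⟩, g, hg⟩, rfl⟩)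

lemma IsAlgIso.card_eq (hφ : IsAlgIso B B' φ) : Nat.card H = Nat.card H' := by
  have e : ∀ X : B.parts, Nonempty ((X.1 : Set H) ≃ (φ X.1 : Set H')) := fun X =>
    Finite.card_eq.1 (by
      rw [Nat.card_coe_set_eq, Nat.card_coe_set_eq, hφ.ncard_eq X.2])
  exact Nat.card_congr (B.sigmaEquiv.symm.trans
    ((Equiv.sigmaCongr hφ.bijOn.equiv fun X => (e X).some).trans B'.sigmaEquiv))

lemma isAlgIso_id (B : SRing H) : IsAlgIso B B id where
  bijOn := Set.bijOn_id _
  structConst_eq X hX Y hY Z hZ z hz z' hz' := B.structConst_const X hX Y hY Z hZ z hz z' hz'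

end Card

/-! ### Extension of an S-ring by the complement of the subgroup -/

section Ext

variable {H : Type u₁} {H' : Type u₂} {G : Type u₃} {G' : Type u₄}
  [Group H] [Finite H] [Group H'] [Finite H'] [Group G] [Finite G] [Group G'] [Finite G']

set_option linter.unusedSectionVars false

/-- The correspondence between the basic sets of the two extended S-rings: images of basic sets
correspond through `φ`, and the complements of the two subgroups correspond to each other. -/
def ExtRel (B : SRing H) (φ : Set H → Set H') (ι : H →* G) (κ : H' →* G')
    (P : Set G) (P' : Set G') : Prop :=
  (∃ X ∈ B.parts, P = ι '' X ∧ P' = κ '' φ X) ∨ (P = (Set.range ι)ᶜ ∧ P' = (Set.range κ)ᶜ)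

variable {B : SRing H} {B' : SRing H'} {φ : Set H → Set H'} {ι : H →* G} {κ : H' →* G'}

lemma extRel_structConst (hφ : IsAlgIso B B' φ) (hι : Function.Injective ι)
    (hκ : Function.Injective κ) (hG : Nat.card G = Nat.card G')
    {P Q R : Set G} {P' Q' R' : Set G'} (hP : ExtRel B φ ι κ P P') (hQ : ExtRel B φ ι κ Q Q')
    (hR : ExtRel B φ ι κ R R') {z : G} (hz : z ∈ R) {z' : G'} (hz' : z' ∈ R') :
    structConst P Q z = structConst P' Q' z' := by
  rcases hR with ⟨Z, hZ, rfl, rfl⟩ | ⟨rfl, rfl⟩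
  · obtain ⟨c, hc, rfl⟩ := hz
    obtain ⟨c', hc', rfl⟩ := hz'
    rcases hP with ⟨X, hX, rfl, rfl⟩ | ⟨rfl, rfl⟩ <;>
      rcases hQ with ⟨Y, hY, rfl, rfl⟩ | ⟨rfl, rfl⟩
    · rw [structConst_image hι, structConst_image hκ]
      exact hφ.structConst_eq X hX Y hY Z hZ c hc c' hc'
    · rw [structConst_image_compl, structConst_image_compl]
    · rw [structConst_compl_image, structConst_compl_image]
    · rw [structConst_compl_compl hι, structConst_compl_compl hκ, hG, hφ.card_eq]
  · rcases hP with ⟨X, hX, rfl, rfl⟩ | ⟨rfl, rfl⟩ <;>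
      rcases hQ with ⟨Y, hY, rfl, rfl⟩ | ⟨rfl, rfl⟩
    · rw [structConst_image_image_compl ι _ _ hz, structConst_image_image_compl κ _ _ hz']
    · rw [structConst_image_compl_compl hι _ hz, structConst_image_compl_compl hκ _ hz',
        hφ.ncard_eq hX]
    · rw [structConst_compl_image_compl hι _ hz, structConst_compl_image_compl hκ _ hz',
        hφ.ncard_eq hY]
    · rw [structConst_compl_compl_compl hι hz, structConst_compl_compl_compl hκ hz', hG,
        hφ.card_eq]

/-- The basic sets of the extended S-ring. The complement of the subgroup is included only when
it is nonempty, that is, when `ι` is not surjective. -/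
def extParts (B : SRing H) (ι : H →* G) : Set (Set G) :=
  {P | P.Nonempty ∧ ((∃ X ∈ B.parts, P = ι '' X) ∨ P = (Set.range ι)ᶜ)}

lemma image_mem_extParts {X : Set H} (hX : X ∈ B.parts) : ι '' X ∈ extParts B ι :=
  ⟨(B.nonempty_mem X hX).image _, Or.inl ⟨X, hX, rfl⟩⟩

lemma extRel_id {P : Set G} (hP : P ∈ extParts B ι) : ExtRel B id ι ι P P := by
  rcases hP with ⟨-, ⟨X, hX, rfl⟩ | rfl⟩
  · exact Or.inl ⟨X, hX, rfl, rfl⟩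
  · exact Or.inr ⟨rfl, rfl⟩

/-- The S-ring over `G` whose basic sets are those of `B`, transported along the embedding `ι`,
and the complement of the image of `ι` (if nonempty). -/
def extSRing (B : SRing H) (ι : H →* G) (hι : Function.Injective ι) : SRing G where
  parts := extParts B ι
  nonempty_mem _ hP := hP.1
  exists_mem g := by
    by_cases hg : g ∈ Set.range ι
    · obtain ⟨x, rfl⟩ := hg
      obtain ⟨X, hX, hx⟩ := B.exists_mem x
      exact ⟨_, image_mem_extParts hX, x, hx, rfl⟩
    · exact ⟨(Set.range ι)ᶜ, ⟨⟨g, hg⟩, Or.inr rfl⟩, hg⟩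
  eq_of_mem := by
    rintro P ⟨-, ⟨X, hX, rfl⟩ | rfl⟩ Q ⟨-, ⟨Y, hY, rfl⟩ | rfl⟩ g hgP hgQ
    · obtain ⟨x, hx, rfl⟩ := hgP
      obtain ⟨y, hy, hxy⟩ := hgQ
      obtain rfl := hι hxy
      rw [B.eq_of_mem X hX Y hY y hx hy]
    · exact absurd (Set.image_subset_range _ _ hgP) hgQ
    · exact absurd (Set.image_subset_range _ _ hgQ) hgP
    · rfl
  one_mem := by
    have := image_mem_extParts (ι := ι) B.one_mem
    simpa using this
  inv_mem := by
    rintro P ⟨hne, ⟨X, hX, rfl⟩ | rfl⟩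
    · have : (ι '' X)⁻¹ = ι '' X⁻¹ := (Set.image_inv ι X).symm
      rw [this]
      exact image_mem_extParts (B.inv_mem X hX)
    · refine ⟨hne.inv, Or.inr ?_⟩
      ext g
      exact not_congr (inv_mem_iff (S := Subgroup G) (H := ι.range) (x := g))
  structConst_const P hP Q hQ R hR _ hz _ hz' :=
    extRel_structConst (isAlgIso_id B) hι hι rfl (extRel_id hP) (extRel_id hQ) (extRel_id hR) hz hz'

open scoped Classical in
/-- The extension of `φ` sending the complement of the subgroup to the complement of the
subgroup. -/
noncomputable def extMap (φ : Set H → Set H') (ι : H →* G) (κ : H' →* G') (P : Set G) : Set G' :=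
  if P = (Set.range ι)ᶜ then (Set.range κ)ᶜ else κ '' φ (ι ⁻¹' P)

lemma extMap_image (hι : Function.Injective ι) {X : Set H} (hX : X ∈ B.parts) :
    extMap φ ι κ (ι '' X) = κ '' φ X := by
  have hne : ι '' X ≠ (Set.range ι)ᶜ := by
    intro h
    obtain ⟨x, hx⟩ := B.nonempty_mem X hX
    have : ι x ∈ (Set.range ι)ᶜ := h ▸ Set.mem_image_of_mem ι hx
    exact this ⟨x, rfl⟩
  rw [extMap, if_neg hne, Set.preimage_image_eq _ hι]

lemma extMap_compl : extMap φ ι κ (Set.range ι)ᶜ = (Set.range κ)ᶜ := if_pos rfl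

lemma extRel_extMap (hι : Function.Injective ι) {P : Set G} (hP : P ∈ extParts B ι) :
    ExtRel B φ ι κ P (extMap φ ι κ P) := by
  rcases hP with ⟨-, ⟨X, hX, rfl⟩ | rfl⟩
  · exact Or.inl ⟨X, hX, rfl, extMap_image hι hX⟩
  · exact Or.inr ⟨rfl, extMap_compl⟩

lemma extMap_isAlgIso (hφ : IsAlgIso B B' φ) (hι : Function.Injective ι)
    (hκ : Function.Injective κ) (hG : Nat.card G = Nat.card G') :
    IsAlgIso (extSRing B ι hι) (extSRing B' κ hκ) (extMap φ ι κ) where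
  bijOn := by
    have hcompl : (Set.range ι)ᶜ.Nonempty ↔ (Set.range κ)ᶜ.Nonempty := by
      rw [← Set.ncard_pos, ← Set.ncard_pos, Set.ncard_compl, Set.ncard_compl,
        ncard_range_of_injective hι, ncard_range_of_injective hκ, hG, hφ.card_eq]
    have himage : ∀ Y ∈ B'.parts, κ '' Y ≠ (Set.range κ)ᶜ := by
      intro Y hY h
      obtain ⟨y, hy⟩ := B'.nonempty_mem Y hY
      have : κ y ∈ (Set.range κ)ᶜ := h ▸ Set.mem_image_of_mem κ hy
      exact this ⟨y, rfl⟩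
    refine ⟨?_, ?_, ?_⟩
    · rintro P ⟨hne, ⟨X, hX, rfl⟩ | rfl⟩
      · rw [extMap_image hι hX]
        exact image_mem_extParts (hφ.bijOn.mapsTo hX)
      · rw [extMap_compl]
        exact ⟨hcompl.1 hne, Or.inr rfl⟩
    · rintro P ⟨-, ⟨X, hX, rfl⟩ | rfl⟩ Q ⟨-, ⟨Y, hY, rfl⟩ | rfl⟩ h
      · rw [extMap_image hι hX, extMap_image hι hY] at h
        rw [hφ.bijOn.injOn hX hY (hκ.image_injective h)]
      · rw [extMap_image hι hX, extMap_compl] at h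
        exact absurd h (himage _ (hφ.bijOn.mapsTo hX))
      · rw [extMap_image hι hY, extMap_compl] at h
        exact absurd h.symm (himage _ (hφ.bijOn.mapsTo hY))
      · rfl
    · rintro Q ⟨hne, ⟨Y, hY, rfl⟩ | rfl⟩
      · obtain ⟨X, hX, rfl⟩ := hφ.bijOn.surjOn hY
        exact ⟨_, image_mem_extParts hX, extMap_image hι hX⟩
      · exact ⟨_, ⟨hcompl.2 hne, Or.inr rfl⟩, extMap_compl⟩
  structConst_eq P hP Q hQ R hR _ hz _ hz' :=
    extRel_structConst hφ hι hκ hG (extRel_extMap hι hP) (extRel_extMap hι hQ)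
      (extRel_extMap hι hR) hz hz'

/-- If the extension of `φ` is induced by `f`, then `φ` is induced by the map
`h ↦ f h * (f 1)⁻¹` from `H` to `H'`. -/
lemma inducedBy_of_ext (hφ : IsAlgIso B B' φ) (hι : Function.Injective ι)
    (hκ : Function.Injective κ) {f : G → G'}
    (hf : InducedBy (extSRing B ι hι) (extMap φ ι κ) f) : ∃ k : H → H', InducedBy B φ k := by
  obtain ⟨hbij, hf⟩ := hf
  replace hf : ∀ X ∈ B.parts, mapRel f (RSet (ι '' X)) = RSet (κ '' φ X) := fun X hX => by
    rw [hf _ (image_mem_extParts hX), extMap_image hι hX]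
  have hstep : ∀ X ∈ B.parts, ∀ x ∈ X, ∀ g : G, ∃ x' ∈ φ X, f (ι x * g) = κ x' * f g := by
    intro X hX x hx g
    have hmem : (f g, f (ι x * g)) ∈ RSet (κ '' φ X) := by
      rw [← hf X hX]
      exact ⟨(g, ι x * g), ⟨ι x, ⟨x, hx, rfl⟩, rfl⟩, rfl⟩
    obtain ⟨_, ⟨x', hx', rfl⟩, h⟩ := hmem
    exact ⟨x', hx', h⟩
  have hk : ∀ h : H, ∃ h' : H', f (ι h) = κ h' * f 1 := by
    intro h
    obtain ⟨X, hX, hx⟩ := B.exists_mem h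
    obtain ⟨x', -, hx'⟩ := hstep X hX h hx 1
    exact ⟨x', by rwa [mul_one] at hx'⟩
  choose k hk using hk
  have hinj : Function.Injective k := fun a b hab =>
    hι (hbij.1 (by rw [hk a, hk b, hab]))
  have hkbij : Function.Bijective k :=
    (Nat.bijective_iff_injective_and_card k).2 ⟨hinj, hφ.card_eq⟩
  refine ⟨k, hkbij, fun X hX => Set.Subset.antisymm ?_ ?_⟩
  · rintro _ ⟨⟨h, b⟩, ⟨x, hx, (hb : b = x * h)⟩, rfl⟩
    subst hb
    obtain ⟨x', hx', e⟩ := hstep X hX x hx (ι h)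
    refine ⟨x', hx', hκ ?_⟩
    rw [← map_mul, hk, hk, ← mul_assoc] at e
    rw [map_mul]
    exact mul_right_cancel e
  · rintro ⟨a, b⟩ ⟨x', hx', (hb : b = x' * a)⟩
    subst hb
    obtain ⟨h, rfl⟩ := hkbij.2 a
    have hmem : (f (ι h), κ x' * f (ι h)) ∈ mapRel f (RSet (ι '' X)) := by
      rw [hf X hX]
      exact ⟨κ x', ⟨x', hx', rfl⟩, rfl⟩
    obtain ⟨⟨g, c⟩, ⟨_, ⟨x, hx, rfl⟩, (hc : c = ι x * g)⟩, e⟩ := hmem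
    subst hc
    obtain ⟨e₁, e₂⟩ := Prod.mk.inj e
    obtain rfl : g = ι h := hbij.1 e₁
    refine ⟨(h, x * h), ⟨x, hx, rfl⟩, Prod.ext rfl (hκ ?_)⟩
    change f (ι x * ι h) = _ at e₂
    rw [← map_mul, hk, hk, ← mul_assoc] at e₂
    change κ (k (x * h)) = κ (x' * k h)
    rw [map_mul]
    exact mul_right_cancel e₂

end Ext

/-- A finite abelian group embeds with any prescribed nonzero index `m` into a finite abelian group
living in an arbitrary universe, namely (a copy of) its product with `ℤ/m`. -/
lemma exists_abelian_overgroup (H : Type u₁) [CommGroup H] [Finite H] (m : ℕ) (hm : m ≠ 0) :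
    ∃ (G : Type u₂) (_ : CommGroup G) (_ : Finite G) (ι : H →* G),
      Function.Injective ι ∧ Nat.card G = Nat.card H * m := by
  have : NeZero m := ⟨hm⟩
  have : Finite (Multiplicative (ZMod m)) := inferInstanceAs (Finite (ZMod m))
  let e : Shrink.{u₂} (H × Multiplicative (ZMod m)) ≃* H × Multiplicative (ZMod m) :=
    Shrink.mulEquiv
  refine ⟨Shrink.{u₂} (H × Multiplicative (ZMod m)), inferInstance, Finite.of_equiv _ e.symm.toEquiv,
    e.symm.toMonoidHom.comp (MonoidHom.inl H _), ?_, ?_⟩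
  · exact e.symm.injective.comp fun a b h => (Prod.mk.inj h).1
  · rw [Nat.card_congr e.toEquiv, Nat.card_prod]
    congr 1
    exact Nat.card_zmod m

end SRingPaper

open SRingPaper in
/-- a normal subgroup of a finite group that is separable with
respect to the class of finite abelian groups is itself separable with respect
to that class. -/
theorem normal_subgroup_separable
    (G : Type*) [Group G] [Finite G]
    (hsep : ∀ A : SRing G, SepAbelian A)
    (H : Subgroup G) (hH : H.Normal) :
    ∀ B : SRing ↥H, SepAbelian B := by
  intro B H' _ _ B' φ hφ
  obtain ⟨G', _, _, κ, hκ, hcard⟩ := exists_abelian_overgroup H' H.index H.index_ne_zero_of_finite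
  have hG : Nat.card G = Nat.card G' := by
    rw [hcard, ← hφ.card_eq, H.card_mul_index]
  have hι : Function.Injective H.subtype := H.subtype_injective
  obtain ⟨f, hf⟩ := hsep (extSRing B H.subtype hι) G' (extSRing B' κ hκ) (extMap φ H.subtype κ)
    (extMap_isAlgIso hφ hι hκ hG)
  exact inducedBy_of_ext hφ hι hκ hf
end
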